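/- arXiv:0708.1620 — 3 statements merged into one kernel-verified Lean document; each statement's English description precedes it below -/
import Mathlib

section
/- Let K be a perfect field of characteristic p > 0. Then the restriction map res : Aut_K(A_1) → Aut_K(Z), σ ↦ σ|_Z, is an injective group homomorphism whose image is exactly Γ = {τ ∈ Aut_K(Z) : J(τ) = 1}. In particular, Aut_K(A_1) is isomorphic as a group to Γ. -/
/-!
STATEMENT 4: Let `K` be a perfect field of characteristic `p > 0`.  Then the restriction
map `res : Aut_K(A₁) → Aut_K(Z)`, `σ ↦ σ|_Z`, is an injective group homomorphism whose
image is exactly `Γ = {τ ∈ Aut_K(Z) : J(τ) = 1}`.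

Here the centre `Z` of `A₁` is identified with the polynomial algebra `K[X, Y]`
(`X = x^p`, `Y = ∂^p`) via an isomorphism `ψ`, and `res` is characterised by the
condition `ψ (res σ f) = σ (ψ f)` in `A₁`.
-/

noncomputable section

/-- The defining relation of the first Weyl algebra: `∂·x = x·∂ + 1`. -/
inductive WeylRel (K : Type*) [CommRing K] :
    FreeAlgebra K (Fin 2) → FreeAlgebra K (Fin 2) → Prop
  | rel : WeylRel K (FreeAlgebra.ι K 1 * FreeAlgebra.ι K 0)
      (FreeAlgebra.ι K 0 * FreeAlgebra.ι K 1 + 1)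

/-- The first Weyl algebra `A₁(K) = K⟨x, ∂ | ∂x − x∂ = 1⟩`. -/
abbrev Weyl (K : Type*) [CommRing K] := RingQuot (WeylRel K)

/-- The generator `x` of the first Weyl algebra. -/
def wX (K : Type*) [CommRing K] : Weyl K :=
  RingQuot.mkAlgHom K (WeylRel K) (FreeAlgebra.ι K 0)

/-- The generator `∂` of the first Weyl algebra. -/
def wD (K : Type*) [CommRing K] : Weyl K :=
  RingQuot.mkAlgHom K (WeylRel K) (FreeAlgebra.ι K 1)

/-- The Jacobian `J(τ) = ∂τ(X)/∂X · ∂τ(Y)/∂Y − ∂τ(X)/∂Y · ∂τ(Y)/∂X` of an automorphism of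
`K[X, Y]` (with `X = MvPolynomial.X 0`, `Y = MvPolynomial.X 1`). -/
def jacP (K : Type*) [CommRing K]
    (τ : MvPolynomial (Fin 2) K ≃ₐ[K] MvPolynomial (Fin 2) K) : MvPolynomial (Fin 2) K :=
  MvPolynomial.pderiv 0 (τ (MvPolynomial.X 0)) * MvPolynomial.pderiv 1 (τ (MvPolynomial.X 1))
    - MvPolynomial.pderiv 1 (τ (MvPolynomial.X 0)) *
        MvPolynomial.pderiv 0 (τ (MvPolynomial.X 1))

/-! ### Exponential maps -/

theorem vk_choose_ne (p : ℕ) (hp : p.Prime) (d : ℕ) (hd : 0 < d) :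
    ¬ p ∣ d.choose (p ^ padicValNat p d) := by
  have := Fact.mk hp
  obtain ⟨m, hm⟩ := pow_padicValNat_dvd (p := p) (n := d)
  have hpm : ¬ p ∣ m := by
    intro h
    apply pow_succ_padicValNat_not_dvd (p := p) hd.ne'
    rw [pow_succ]
    conv_rhs => rw [hm]
    exact Nat.mul_dvd_mul_left _ h
  generalize padicValNat p d = l at *
  subst hm
  clear hd
  have key : ∀ l : ℕ, (p ^ l * m).choose (p ^ l) ≡ m [MOD p] := by
    intro l
    induction l with
    | zero => simp [Nat.ModEq]
    | succ l ih =>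
      refine (Choose.choose_modEq_choose_mod_mul_choose_div_nat).trans ?_
      have h1 : p ^ (l + 1) * m = p * (p ^ l * m) := by ring
      have h2 : p ^ (l + 1) = p * p ^ l := by ring
      rw [h1, h2, Nat.mul_mod_right, Nat.mul_mod_right, Nat.mul_div_cancel_left _ hp.pos,
        Nat.mul_div_cancel_left _ hp.pos]
      simpa using ih
  intro h
  apply hpm
  have := key l
  exact (Nat.modEq_zero_iff_dvd.1 (this.symm.trans (Nat.modEq_zero_iff_dvd.2 h)))

/-- An exponential map (locally finite iterative higher derivation). -/
structure VkExp (k R : Type*) [Field k] [CommRing R] [Algebra k R] where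
  φ : R →ₐ[k] Polynomial R
  zero : ∀ h, (φ h).coeff 0 = h
  iter : ∀ h i j, (φ ((φ h).coeff i)).coeff j = ((i + j).choose i : R) * (φ h).coeff (i + j)

theorem vk_inj {k R : Type*} [Field k] [CommRing R] [Algebra k R] (E : VkExp k R) {h : R}
    (hh : h ≠ 0) : E.φ h ≠ 0 := by
  intro h0
  apply hh
  rw [← E.zero h, h0, Polynomial.coeff_zero]

theorem vk_ppow {k R : Type*} [Field k] [CommRing R] [IsDomain R] [Algebra k R] (p : ℕ)
    (hp : p.Prime) [CharP R p] (E : VkExp k R) (h : R) (hd : 0 < (E.φ h).natDegree) :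
    ∃ h', h' ≠ 0 ∧ (E.φ h').natDegree = p ^ padicValNat p (E.φ h).natDegree := by
  set d := (E.φ h).natDegree with hd'
  have hle : p ^ padicValNat p d ≤ d := Nat.le_of_dvd hd pow_padicValNat_dvd
  set q := p ^ padicValNat p d with hq
  have h1 : (E.φ ((E.φ h).coeff (d - q))).coeff q ≠ 0 := by
    rw [E.iter, Nat.sub_add_cancel hle]
    refine mul_ne_zero ?_ ?_
    · rw [Nat.choose_symm hle, Ne, CharP.cast_eq_zero_iff R p]
      exact vk_choose_ne p hp d hd
    · rw [hd', Polynomial.coeff_natDegree, Polynomial.leadingCoeff_ne_zero]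
      intro h0
      rw [h0, Polynomial.natDegree_zero] at hd'
      omega
  refine ⟨(E.φ h).coeff (d - q), ?_, ?_⟩
  · intro h0
    rw [h0] at h1
    simp at h1
  · refine le_antisymm ?_ (Polynomial.le_natDegree_of_ne_zero h1)
    rw [Polynomial.natDegree_le_iff_coeff_eq_zero]
    intro N hN
    rw [E.iter, Polynomial.coeff_eq_zero_of_natDegree_lt (n := d - q + N), mul_zero]
    omega

/-- The homomorphism underlying the exponential map attached to a presentation of `R` as a
polynomial ring. -/
def vkHom {k R P : Type*} [Field k] [CommRing R] [Algebra k R] [CommRing P] [Algebra k P]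
    (ρ : R ≃ₐ[k] Polynomial P) : R →ₐ[k] Polynomial R :=
    ((Polynomial.mapAlgHom (ρ.symm : Polynomial P →ₐ[k] R)).comp
      (((Polynomial.taylorAlgHom (Polynomial.X : Polynomial P)).restrictScalars k).comp
        (Polynomial.mapAlgHom (Polynomial.CAlgHom (R := k) (A := P))))).comp
          (ρ : R →ₐ[k] Polynomial P)

theorem vk_hasse_map {P Q : Type*} [CommRing P] [CommRing Q] (f : P →+* Q) (i : ℕ)
    (q : Polynomial P) :
    Polynomial.hasseDeriv i (q.map f) = (Polynomial.hasseDeriv i q).map f := by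
  ext n
  simp [Polynomial.hasseDeriv_coeff]

theorem vkHom_coeff {k R P : Type*} [Field k] [CommRing R] [Algebra k R] [CommRing P]
    [Algebra k P] (ρ : R ≃ₐ[k] Polynomial P) (h : R) (i : ℕ) :
    (vkHom ρ h).coeff i = ρ.symm (Polynomial.hasseDeriv i (ρ h)) := by
  have : vkHom ρ h = (Polynomial.taylor (Polynomial.X : Polynomial P)
      ((ρ h).map Polynomial.C)).map (ρ.symm : Polynomial P →+* R) := rfl
  rw [this, Polynomial.coeff_map, Polynomial.taylor_coeff, vk_hasse_map]
  rw [Polynomial.eval_map, Polynomial.eval₂_C_X]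
  rfl

/-- The exponential map attached to a presentation of `R` as a polynomial ring. -/
def vkOfEquiv {k R P : Type*} [Field k] [CommRing R] [Algebra k R] [CommRing P] [Algebra k P]
    (ρ : R ≃ₐ[k] Polynomial P) : VkExp k R where
  φ := vkHom ρ
  zero := by
    intro h
    simp [vkHom_coeff]
  iter := by
    intro h i j
    simp only [vkHom_coeff, AlgEquiv.apply_symm_apply]
    have := congrArg (fun F => F (ρ h)) (Polynomial.hasseDeriv_comp (R := P) j i)
    simp only [LinearMap.comp_apply, LinearMap.smul_apply] at this
    rw [this, map_nsmul, nsmul_eq_mul, add_comm j i, Nat.choose_symm_add]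

theorem vkOfEquiv_C {k R P : Type*} [Field k] [CommRing R] [Algebra k R] [CommRing P]
    [Algebra k P] (ρ : R ≃ₐ[k] Polynomial P) (f : R) (c : P) (hf : ρ f = Polynomial.C c) (i : ℕ)
    (hi : 0 < i) : ((vkOfEquiv ρ).φ f).coeff i = 0 := by
  change (vkHom ρ f).coeff i = 0
  rw [vkHom_coeff, hf, Polynomial.hasseDeriv_C _ _ hi, map_zero]

theorem vkOfEquiv_X {k R P : Type*} [Field k] [CommRing R] [Algebra k R] [CommRing P]
    [Algebra k P] (ρ : R ≃ₐ[k] Polynomial P) (g : R) (hg : ρ g = Polynomial.X) :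
    ((vkOfEquiv ρ).φ g).coeff 1 = 1 := by
  change (vkHom ρ g).coeff 1 = 1
  rw [vkHom_coeff, hg]
  simp

/-! ### Homogenization -/
section vkhom
open MvPolynomial

/-- Filtration by weight. -/
def VkFil {k : Type*} [Field k] (w : Fin 2 → ℚ) (a : ℚ) (h : MvPolynomial (Fin 2) k) : Prop :=
  ∀ d, coeff d h ≠ 0 → Finsupp.weight w d ≤ a

variable {k : Type*} [Field k] {w : Fin 2 → ℚ}

theorem VkFil.add {a : ℚ} {h h' : MvPolynomial (Fin 2) k} (H : VkFil w a h) (H' : VkFil w a h') :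
    VkFil w a (h + h') := by
  intro d hd
  by_cases h0 : coeff d h = 0
  · apply H'
    intro h1
    apply hd
    rw [coeff_add, h0, h1, add_zero]
  · exact H d h0

theorem VkFil.sum {ι : Type*} (s : Finset ι) {a : ℚ} {h : ι → MvPolynomial (Fin 2) k}
    (H : ∀ i ∈ s, VkFil w a (h i)) : VkFil w a (∑ i ∈ s, h i) := by
  classical
  induction s using Finset.induction_on with
  | empty => intro d hd; simp at hd
  | insert i s hi ih =>
    rw [Finset.sum_insert hi]
    exact (H i (by simp)).add (ih fun j hj => H j (by simp [hj]))

theorem VkFil.mul {a b : ℚ} {h h' : MvPolynomial (Fin 2) k} (H : VkFil w a h)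
    (H' : VkFil w b h') : VkFil w (a + b) (h * h') := by
  classical
  intro d hd
  rw [coeff_mul] at hd
  obtain ⟨x, hx, hne⟩ := Finset.exists_ne_zero_of_sum_ne_zero hd
  rw [← Finset.HasAntidiagonal.mem_antidiagonal.1 hx, map_add]
  exact add_le_add (H _ (left_ne_zero_of_mul hne)) (H' _ (right_ne_zero_of_mul hne))

theorem vk_comp_coeff (a : ℚ) (h : MvPolynomial (Fin 2) k) (d) :
    coeff d (weightedHomogeneousComponent w a h) = if Finsupp.weight w d = a then coeff d h else 0 := by
  rw [coeff_weightedHomogeneousComponent]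

theorem vk_comp_mul {a b : ℚ} {h h' : MvPolynomial (Fin 2) k} (H : VkFil w a h)
    (H' : VkFil w b h') : weightedHomogeneousComponent w (a + b) (h * h') =
      weightedHomogeneousComponent w a h * weightedHomogeneousComponent w b h' := by
  classical
  ext d
  rw [vk_comp_coeff, coeff_mul, coeff_mul]
  simp only [vk_comp_coeff]
  split_ifs with hd
  · apply Finset.sum_congr rfl
    intro x hx
    have hx' := Finset.HasAntidiagonal.mem_antidiagonal.1 hx
    rw [← hx', map_add] at hd
    by_cases h1 : coeff x.1 h = 0
    · simp [h1]
    by_cases h2 : coeff x.2 h' = 0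
    · simp [h2]
    have h3 := H _ h1
    have h4 := H' _ h2
    rw [if_pos (by linarith), if_pos (by linarith)]
  · symm
    apply Finset.sum_eq_zero
    intro x hx
    have hx' := Finset.HasAntidiagonal.mem_antidiagonal.1 hx
    rw [← hx', map_add] at hd
    by_cases h1 : Finsupp.weight w x.1 = a
    · rw [if_neg (c := Finsupp.weight w x.2 = b) (by intro h2; exact hd (by rw [h1, h2])), mul_zero]
    · rw [if_neg h1, zero_mul]

/-- Top part. -/
def vkTop (w : Fin 2 → ℚ) (δ a : ℚ) (P : Polynomial (MvPolynomial (Fin 2) k)) :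
    Polynomial (MvPolynomial (Fin 2) k) :=
  ∑ i ∈ P.support, Polynomial.monomial i (weightedHomogeneousComponent w (a + i * δ) (P.coeff i))

theorem vkTop_coeff (δ a : ℚ) (P : Polynomial (MvPolynomial (Fin 2) k)) (i : ℕ) :
    (vkTop w δ a P).coeff i = weightedHomogeneousComponent w (a + i * δ) (P.coeff i) := by
  classical
  rw [vkTop, Polynomial.finsetSum_coeff]
  simp only [Polynomial.coeff_monomial]
  rw [Finset.sum_ite_eq' P.support i]
  split_ifs with h
  · rfl
  · rw [Polynomial.notMem_support_iff.1 h, map_zero]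

/-- Filtration on polynomials. -/
def VkFilP (w : Fin 2 → ℚ) (δ a : ℚ) (P : Polynomial (MvPolynomial (Fin 2) k)) : Prop :=
  ∀ i : ℕ, VkFil w (a + i * δ) (P.coeff i)

theorem VkFilP.mul {δ a b : ℚ} {P Q : Polynomial (MvPolynomial (Fin 2) k)}
    (hP : VkFilP w δ a P) (hQ : VkFilP w δ b Q) : VkFilP w δ (a + b) (P * Q) := by
  intro n
  rw [Polynomial.coeff_mul]
  apply VkFil.sum
  intro x hx
  have hx' := Finset.HasAntidiagonal.mem_antidiagonal.1 hx
  have := (hP x.1).mul (hQ x.2)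
  convert this using 1
  rw [← hx']; push_cast; ring

theorem vkTop_mul {δ a b : ℚ} {P Q : Polynomial (MvPolynomial (Fin 2) k)}
    (hP : VkFilP w δ a P) (hQ : VkFilP w δ b Q) :
    vkTop w δ (a + b) (P * Q) = vkTop w δ a P * vkTop w δ b Q := by
  ext1 n
  rw [vkTop_coeff, Polynomial.coeff_mul, Polynomial.coeff_mul, map_sum]
  apply Finset.sum_congr rfl
  intro x hx
  have hx' := Finset.HasAntidiagonal.mem_antidiagonal.1 hx
  rw [vkTop_coeff, vkTop_coeff, ← vk_comp_mul (hP x.1) (hQ x.2)]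
  congr 2
  rw [← hx']; push_cast; ring

theorem vkTop_C (δ : ℚ) (c : k) :
    vkTop w δ 0 (Polynomial.C (C c)) = Polynomial.C (C c) := by
  ext1 i
  rw [vkTop_coeff, Polynomial.coeff_C]
  split_ifs with h
  · subst h
    have := (isWeightedHomogeneous_C w c).weightedHomogeneousComponent_same
    simpa using this
  · simp

theorem vkFilP_C (δ : ℚ) (c : k) : VkFilP w δ 0 (Polynomial.C (C c)) := by
  intro i d hd
  rw [Polynomial.coeff_C] at hd
  split_ifs at hd with h
  · rw [coeff_C] at hd
    split_ifs at hd with h'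
    · subst h; subst h'; simp
    · simp at hd
  · simp at hd

/-- the homogenized homomorphism -/
def vkBar (φ : MvPolynomial (Fin 2) k →ₐ[k] Polynomial (MvPolynomial (Fin 2) k)) (w : Fin 2 → ℚ)
    (δ : ℚ) : MvPolynomial (Fin 2) k →ₐ[k] Polynomial (MvPolynomial (Fin 2) k) :=
  aeval fun j => vkTop w δ (w j) (φ (X j))

variable {φ : MvPolynomial (Fin 2) k →ₐ[k] Polynomial (MvPolynomial (Fin 2) k)} {δ : ℚ}

theorem vkBar_monomial (hφ : ∀ j, VkFilP w δ (w j) (φ (X j))) (d : Fin 2 →₀ ℕ) (c : k) :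
    VkFilP w δ (Finsupp.weight w d) (φ (monomial d c)) ∧
    vkBar φ w δ (monomial d c) = vkTop w δ (Finsupp.weight w d) (φ (monomial d c)) := by
  classical
  induction d using Finsupp.induction_linear generalizing c with
  | zero =>
    have h1 : (monomial 0 c : MvPolynomial (Fin 2) k) = algebraMap k _ c := rfl
    have h2 : algebraMap k (Polynomial (MvPolynomial (Fin 2) k)) c = Polynomial.C (C c) := rfl
    rw [h1, AlgHom.commutes, AlgHom.commutes, h2, map_zero, vkTop_C]
    exact ⟨vkFilP_C _ _, rfl⟩
  | add d e hd he =>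
    have : (monomial (d + e) c : MvPolynomial (Fin 2) k) = monomial d c * monomial e 1 := by
      rw [monomial_mul, mul_one]
    rw [this, map_mul, map_mul, map_add, vkTop_mul (hd c).1 (he 1).1, (hd c).2, (he 1).2]
    exact ⟨(hd c).1.mul (he 1).1, rfl⟩
  | single j n =>
    induction n generalizing c with
    | zero =>
      have h1 : (monomial (Finsupp.single j 0) c : MvPolynomial (Fin 2) k) = algebraMap k _ c := by
        rw [Finsupp.single_zero]; rfl
      have h2 : algebraMap k (Polynomial (MvPolynomial (Fin 2) k)) c = Polynomial.C (C c) := rfl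
      rw [h1, AlgHom.commutes, AlgHom.commutes, h2, Finsupp.single_zero, map_zero, vkTop_C]
      exact ⟨vkFilP_C _ _, rfl⟩
    | succ n ih =>
      have : (monomial (Finsupp.single j (n + 1)) c : MvPolynomial (Fin 2) k)
          = monomial (Finsupp.single j n) c * X j := by
        rw [X, monomial_mul, mul_one, Finsupp.single_add]
      have h3 : Finsupp.weight w (Finsupp.single j (n + 1)) =
          Finsupp.weight w (Finsupp.single j n) + w j := by
        rw [Finsupp.single_add, map_add]; simp [Finsupp.weight_single]
      rw [this, map_mul, map_mul, h3, vkTop_mul (ih c).1 (hφ j), (ih c).2]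
      refine ⟨(ih c).1.mul (hφ j), ?_⟩
      congr 1
      simp [vkBar]

theorem vkFil_mono {a b : ℚ} (hab : a ≤ b) {h : MvPolynomial (Fin 2) k} (H : VkFil w a h) :
    VkFil w b h := fun d hd => (H d hd).trans hab

/-- the lowering of weights -/
theorem vk_phi_fil (hφ : ∀ j, VkFilP w δ (w j) (φ (X j))) {a : ℚ} {h : MvPolynomial (Fin 2) k}
    (H : VkFil w a h) : VkFilP w δ a (φ h) := by
  intro i
  rw [h.as_sum, map_sum, Polynomial.finsetSum_coeff]
  apply VkFil.sum
  intro d hd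
  refine vkFil_mono ?_ ((vkBar_monomial hφ d _).1 i)
  linarith [H d (mem_support_iff.1 hd)]

theorem vk_comp_zero {a b : ℚ} (hab : a < b) {h : MvPolynomial (Fin 2) k} (H : VkFil w a h) :
    weightedHomogeneousComponent w b h = 0 := by
  ext d
  rw [vk_comp_coeff, coeff_zero]
  split_ifs with h1
  · by_contra h2
    linarith [H d h2]
  · rfl

theorem vk_comp_monomial (a : ℚ) (d : Fin 2 →₀ ℕ) (c : k) :
    weightedHomogeneousComponent w a (monomial d c) =
      if Finsupp.weight w d = a then monomial d c else 0 := by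
  classical
  ext e
  rw [vk_comp_coeff, coeff_monomial]
  by_cases h : d = e
  · subst h; split_ifs <;> simp_all
  · split_ifs <;> simp [h, coeff_monomial]

theorem vkBar_comp (hφ : ∀ j, VkFilP w δ (w j) (φ (X j))) {a : ℚ} {h : MvPolynomial (Fin 2) k}
    (H : VkFil w a h) (i : ℕ) :
    (vkBar φ w δ (weightedHomogeneousComponent w a h)).coeff i =
      weightedHomogeneousComponent w (a + i * δ) ((φ h).coeff i) := by
  conv_lhs => rw [h.as_sum]
  conv_rhs => rw [h.as_sum]
  simp only [map_sum, Polynomial.finsetSum_coeff]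
  apply Finset.sum_congr rfl
  intro d hd
  have hd' := H d (mem_support_iff.1 hd)
  rw [vk_comp_monomial]
  split_ifs with h1
  · rw [(vkBar_monomial hφ d _).2, vkTop_coeff, h1]
  · rw [map_zero, Polynomial.coeff_zero]
    symm
    have := (vkBar_monomial hφ d (coeff d h)).1 i
    apply vk_comp_zero _ this
    have := lt_of_le_of_ne hd' h1
    linarith

theorem vkFil_comp {a : ℚ} {h : MvPolynomial (Fin 2) k} :
    VkFil w a (weightedHomogeneousComponent w a h) := by
  intro d hd
  rw [vk_comp_coeff] at hd
  by_contra h1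
  rw [if_neg (by intro h2; exact h1 h2.le)] at hd
  exact hd rfl

theorem vkFil_monomial (d : Fin 2 →₀ ℕ) (c : k) : VkFil w (Finsupp.weight w d) (monomial d c) := by
  classical
  intro e he
  rw [coeff_monomial] at he
  split_ifs at he with h
  · rw [h]
  · simp at he

/-- The homogenized exponential map. -/
def vkBarExp (E : VkExp k (MvPolynomial (Fin 2) k)) (w : Fin 2 → ℚ) (δ : ℚ)
    (hφ : ∀ j, VkFilP w δ (w j) (E.φ (X j))) : VkExp k (MvPolynomial (Fin 2) k) where
  φ := vkBar E.φ w δ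
  zero := by
    intro h
    conv_lhs => rw [h.as_sum]
    conv_rhs => rw [h.as_sum]
    simp only [map_sum, Polynomial.finsetSum_coeff]
    apply Finset.sum_congr rfl
    intro d hd
    rw [(vkBar_monomial hφ d _).2, vkTop_coeff, E.zero, vk_comp_monomial]
    simp
  iter := by
    intro h i j
    conv_lhs => rw [h.as_sum]
    conv_rhs => rw [h.as_sum]
    simp only [map_sum, Polynomial.finsetSum_coeff, Finset.mul_sum]
    apply Finset.sum_congr rfl
    intro d hd
    rw [(vkBar_monomial hφ d _).2, vkTop_coeff, vkTop_coeff,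
      vkBar_comp hφ ((vkBar_monomial hφ d _).1 i), E.iter]
    have : ((i + j).choose i : MvPolynomial (Fin 2) k) = C ((i + j).choose i : k) := by simp
    rw [this, weightedHomogeneousComponent_C_mul]
    congr 3
    push_cast; ring

/-- Existence of the homogenized exponential map. -/
theorem vk_exists_bar (E : VkExp k (MvPolynomial (Fin 2) k)) (w : Fin 2 → ℚ)
    (hnt : ∃ j, ∃ i, 0 < i ∧ (E.φ (X j)).coeff i ≠ 0) :
    ∃ E' : VkExp k (MvPolynomial (Fin 2) k), (∃ j, 0 < (E'.φ (X j)).natDegree) ∧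
      ∀ (f : MvPolynomial (Fin 2) k) (a : ℚ), VkFil w a f → (∀ i, 0 < i → (E.φ f).coeff i = 0) →
        (E'.φ (weightedHomogeneousComponent w a f)).natDegree = 0 := by
  classical
  -- the set of all slopes
  let S : Finset (Fin 2 × ℕ × (Fin 2 →₀ ℕ)) :=
    Finset.univ.biUnion fun j => ((E.φ (X j)).support.filter (0 < ·)).biUnion fun i =>
      (((E.φ (X j)).coeff i).support).image fun d => (j, i, d)
  have hS : ∀ j i d, (j, i, d) ∈ S ↔ 0 < i ∧ coeff d ((E.φ (X j)).coeff i) ≠ 0 := by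
    intro j i d
    simp only [S, Finset.mem_biUnion, Finset.mem_univ, true_and, Finset.mem_filter,
      Finset.mem_image, Polynomial.mem_support_iff, mem_support_iff, Prod.mk.injEq]
    constructor
    · rintro ⟨j', i', ⟨h1, h2⟩, d', h3, rfl, rfl, rfl⟩
      exact ⟨h2, h3⟩
    · rintro ⟨h1, h2⟩
      refine ⟨j, i, ⟨?_, h1⟩, d, h2, rfl, rfl, rfl⟩
      intro h3
      rw [h3] at h2
      simp at h2
  have hne : S.Nonempty := by
    obtain ⟨j, i, hi, h⟩ := hnt
    obtain ⟨d, hd⟩ := ne_zero_iff.1 h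
    exact ⟨(j, i, d), (hS j i d).2 ⟨hi, hd⟩⟩
  obtain ⟨⟨j0, i0, d0⟩, hm, hmax⟩ := S.exists_max_image
    (fun x => (Finsupp.weight w x.2.2 - w x.1) / (x.2.1 : ℚ)) hne
  set δ : ℚ := (Finsupp.weight w d0 - w j0) / (i0 : ℚ) with hδ
  have hφ : ∀ j, VkFilP w δ (w j) (E.φ (X j)) := by
    intro j i d hd
    rcases Nat.eq_zero_or_pos i with rfl | hi
    · rw [E.zero, coeff_X] at hd
      split_ifs at hd with h
      · subst h; simp [Finsupp.weight_single]
      · simp at hd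
    · have := hmax (j, i, d) ((hS j i d).2 ⟨hi, hd⟩)
      simp only at this
      have hi' : (0 : ℚ) < i := by exact_mod_cast hi
      rw [div_le_iff₀ hi'] at this
      linarith
  refine ⟨vkBarExp E w δ hφ, ⟨j0, ?_⟩, ?_⟩
  · have h1 := (hS _ _ _).1 hm
    have h2 : ((vkBarExp E w δ hφ).φ (X j0)).coeff i0 ≠ 0 := by
      have : (vkBarExp E w δ hφ).φ (X j0) = vkTop w δ (w j0) (E.φ (X j0)) := by
        simp [vkBarExp, vkBar]
      rw [this, vkTop_coeff]
      refine ne_zero_iff.2 ⟨d0, ?_⟩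
      rw [vk_comp_coeff, if_pos]
      · exact h1.2
      · have hi' : (0 : ℚ) < i0 := by exact_mod_cast h1.1
        rw [hδ]; field_simp; ring
    exact lt_of_lt_of_le h1.1 (Polynomial.le_natDegree_of_ne_zero h2)
  · intro f a hf h0
    rw [← Nat.le_zero, Polynomial.natDegree_le_iff_coeff_eq_zero]
    intro i hi
    change (vkBar E.φ w δ _).coeff i = 0
    rw [vkBar_comp hφ hf, h0 i hi, map_zero]

end vkhom

section vksemi
open MvPolynomial
variable {k : Type*} [Field k]

/-- The ring of invariants. -/
def vkKer (E : VkExp k (MvPolynomial (Fin 2) k)) : Subalgebra k (MvPolynomial (Fin 2) k) where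
  carrier := {h | (E.φ h).natDegree = 0}
  mul_mem' := by
    intro a b ha hb
    simp only [Set.mem_ofPred_eq] at *
    have := Polynomial.natDegree_mul_le (p := E.φ a) (q := E.φ b)
    rw [map_mul]; omega
  add_mem' := by
    intro a b ha hb
    simp only [Set.mem_ofPred_eq] at *
    have := Polynomial.natDegree_add_le (E.φ a) (E.φ b)
    rw [map_add]; omega
  algebraMap_mem' := by
    intro r
    simp only [Set.mem_ofPred_eq, AlgHom.commutes]
    exact Polynomial.natDegree_C (C r)

theorem vk_mem_ker (E : VkExp k (MvPolynomial (Fin 2) k)) (h : MvPolynomial (Fin 2) k) :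
    h ∈ vkKer E ↔ (E.φ h).natDegree = 0 := Iff.rfl

theorem vk_ker_dvd (E : VkExp k (MvPolynomial (Fin 2) k)) {h g : MvPolynomial (Fin 2) k}
    (hg : g ≠ 0) (hgk : g ∈ vkKer E) (hd : h ∣ g) : h ∈ vkKer E := by
  obtain ⟨q, rfl⟩ := hd
  rw [vk_mem_ker] at *
  have h1 := left_ne_zero_of_mul hg
  have h2 := right_ne_zero_of_mul hg
  rw [map_mul, Polynomial.natDegree_mul (vk_inj E h1) (vk_inj E h2)] at hgk
  omega

theorem vk_span (E : VkExp k (MvPolynomial (Fin 2) k)) (a b : ℕ) (ha : 0 < a) (ζ : k)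
    (ht : (X 0 ^ a - C ζ * X 1 ^ b : MvPolynomial (Fin 2) k) ∈ vkKer E) :
    Submodule.span (vkKer E) (Set.range fun ij : Fin a × ℕ =>
      (X 0 ^ (ij.1 : ℕ) * X 1 ^ ij.2 : MvPolynomial (Fin 2) k)) = ⊤ := by
  set M := Submodule.span (vkKer E) (Set.range fun ij : Fin a × ℕ =>
      (X 0 ^ (ij.1 : ℕ) * X 1 ^ ij.2 : MvPolynomial (Fin 2) k)) with hM
  have hmem : ∀ i j, i < a → (X 0 ^ i * X 1 ^ j : MvPolynomial (Fin 2) k) ∈ M := by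
    intro i j hi
    exact Submodule.subset_span ⟨(⟨i, hi⟩, j), rfl⟩
  have hsm : ∀ c ∈ vkKer E, ∀ h ∈ M, c * h ∈ M := by
    intro c hc h hh
    exact M.smul_mem (⟨c, hc⟩ : vkKer E) hh
  have hC : ∀ c : k, C c ∈ vkKer E := fun c => (vkKer E).algebraMap_mem c
  have hX : ∀ n : Fin 2, ∀ h ∈ M, h * X n ∈ M := by
    intro n h hh
    induction hh using Submodule.span_induction with
    | mem y hy =>
      obtain ⟨⟨i, j⟩, rfl⟩ := hy
      simp only
      fin_cases n
      · simp only [Fin.zero_eta]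
        have e1 : (X 0 ^ (i : ℕ) * X 1 ^ j * X 0 : MvPolynomial (Fin 2) k) =
            X 0 ^ ((i : ℕ) + 1) * X 1 ^ j := by ring
        rw [e1]
        rcases Nat.lt_or_ge ((i : ℕ) + 1) a with h1 | h1
        · exact hmem _ _ h1
        · have h2 : (i : ℕ) + 1 = a := by have := i.2; omega
          rw [h2]
          have e2 : (X 0 ^ a * X 1 ^ j : MvPolynomial (Fin 2) k) =
            (X 0 ^ a - C ζ * X 1 ^ b) * (X 0 ^ 0 * X 1 ^ j) + C ζ * (X 0 ^ 0 * X 1 ^ (b + j)) := by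
            ring
          rw [e2]
          exact M.add_mem (hsm _ ht _ (hmem _ _ ha)) (hsm _ (hC _) _ (hmem _ _ ha))
      · simp only [Fin.mk_one]
        have e1 : (X 0 ^ (i : ℕ) * X 1 ^ j * X 1 : MvPolynomial (Fin 2) k) =
            X 0 ^ (i : ℕ) * X 1 ^ (j + 1) := by ring
        rw [e1]
        exact hmem _ _ i.2
    | zero => simp
    | add y z _ _ hy hz => rw [add_mul]; exact M.add_mem hy hz
    | smul c y _ hy => rw [smul_mul_assoc]; exact M.smul_mem _ hy
  rw [eq_top_iff]
  intro h _
  induction h using MvPolynomial.induction_on with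
  | C c =>
    have := hsm _ (hC c) _ (hmem 0 0 ha)
    simpa using this
  | add p q hp hq => exact M.add_mem (hp trivial) (hq trivial)
  | mul_X p n hp => exact hX n _ (hp trivial)

theorem vk_deg_rel (E : VkExp k (MvPolynomial (Fin 2) k)) (a b : ℕ) (ζ : k) (hζ : ζ ≠ 0)
    (ht : (X 0 ^ a - C ζ * X 1 ^ b : MvPolynomial (Fin 2) k) ∈ vkKer E) :
    a * (E.φ (X 0)).natDegree = b * (E.φ (X 1)).natDegree := by
  rw [vk_mem_ker, map_sub] at ht
  have h0 : (E.φ (X 0 ^ a)).natDegree = a * (E.φ (X 0)).natDegree := by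
    rw [map_pow, Polynomial.natDegree_pow]
  have h1 : (E.φ (C ζ * X 1 ^ b)).natDegree = b * (E.φ (X 1)).natDegree := by
    rw [map_mul, map_pow, ← Polynomial.natDegree_pow]
    have : E.φ (C ζ) = Polynomial.C (C ζ) := E.φ.commutes ζ
    rw [this, Polynomial.natDegree_C_mul]
    simpa using hζ
  rcases lt_trichotomy (E.φ (X 0 ^ a)).natDegree (E.φ (C ζ * X 1 ^ b)).natDegree with h | h | h
  · rw [Polynomial.natDegree_sub_eq_right_of_natDegree_lt h] at ht
    omega
  · omega
  · rw [Polynomial.natDegree_sub_eq_left_of_natDegree_lt h] at ht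
    omega

theorem vk_semigroup (E : VkExp k (MvPolynomial (Fin 2) k)) (a b u : ℕ) (ha : 0 < a) (hb : 0 < b)
    (hab : Nat.Coprime a b) (hu : 0 < u) (ζ : k)
    (ht : (X 0 ^ a - C ζ * X 1 ^ b : MvPolynomial (Fin 2) k) ∈ vkKer E)
    (h0 : (E.φ (X 0)).natDegree = b * u) (h1 : (E.φ (X 1)).natDegree = a * u)
    (h : MvPolynomial (Fin 2) k) : ∃ i j, (E.φ h).natDegree = u * (b * i + a * j) := by
  have hh : h ∈ Submodule.span (vkKer E) (Set.range fun ij : Fin a × ℕ =>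
      (X 0 ^ (ij.1 : ℕ) * X 1 ^ ij.2 : MvPolynomial (Fin 2) k)) := by
    rw [vk_span E a b ha ζ ht]; trivial
  rw [Finsupp.mem_span_range_iff_exists_finsupp] at hh
  obtain ⟨c, rfl⟩ := hh
  have hdeg : ∀ ij : Fin a × ℕ, c ij ≠ 0 → (E.φ (c ij • (X 0 ^ (ij.1 : ℕ) * X 1 ^ ij.2))).natDegree
      = u * (b * ij.1 + a * ij.2) := by
    intro ij hij
    have hij' : ((c ij : vkKer E) : MvPolynomial (Fin 2) k) ≠ 0 := by
      intro h; exact hij (Subtype.ext h)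
    have e : c ij • (X 0 ^ (ij.1 : ℕ) * X 1 ^ ij.2 : MvPolynomial (Fin 2) k) =
      ((c ij : vkKer E) : MvPolynomial (Fin 2) k) * (X 0 ^ (ij.1 : ℕ) * X 1 ^ ij.2) := rfl
    have hx0 : E.φ (X 0) ≠ 0 := vk_inj E (X_ne_zero 0)
    have hx1 : E.φ (X 1) ≠ 0 := vk_inj E (X_ne_zero 1)
    rw [e, map_mul, map_mul, map_pow, map_pow, Polynomial.natDegree_mul (vk_inj E hij')
      (mul_ne_zero (pow_ne_zero _ hx0) (pow_ne_zero _ hx1)),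
      Polynomial.natDegree_mul (pow_ne_zero _ hx0) (pow_ne_zero _ hx1), Polynomial.natDegree_pow,
      Polynomial.natDegree_pow, h0, h1, (vk_mem_ker E _).1 (c ij).2]
    ring
  rw [Finsupp.sum, map_sum, Polynomial.natDegree_sum_eq_of_disjoint]
  · rcases c.support.eq_empty_or_nonempty with he | hne
    · exact ⟨0, 0, by simp [he]⟩
    · obtain ⟨ij, hij, hs⟩ := Finset.exists_mem_eq_sup c.support hne
        (fun i => (E.φ (c i • (X 0 ^ (i.1 : ℕ) * X 1 ^ i.2))).natDegree)
      exact ⟨ij.1, ij.2, by rw [hs, hdeg ij (Finsupp.mem_support_iff.1 hij)]⟩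
  · rintro ⟨i, j⟩ ⟨hi, -⟩ ⟨i', j'⟩ ⟨hi', -⟩ hne heq
    simp only [Function.comp] at heq
    rw [Finsupp.mem_support_iff] at hi hi'
    rw [hdeg _ hi, hdeg _ hi'] at heq
    have heq' := Nat.eq_of_mul_eq_mul_left hu heq
    simp only at heq'
    apply hne
    have hmod : b * (i : ℕ) ≡ b * (i' : ℕ) [MOD a] := by
      have : (b * (i : ℕ) + a * j) % a = (b * (i' : ℕ) + a * j') % a := by rw [heq']
      simpa [Nat.ModEq] using this
    have h2 := Nat.ModEq.cancel_left_of_coprime (by simpa using hab) hmod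
    have h3 : (i : ℕ) = i' := Nat.ModEq.eq_of_lt_of_lt h2 i.2 i'.2
    rw [h3] at heq'
    have h4 : j = j' := Nat.eq_of_mul_eq_mul_left ha (by omega)
    rw [Prod.mk.injEq]
    exact ⟨Fin.ext h3, h4⟩

theorem vk_ab (p : ℕ) (hp : p.Prime) [CharP k p] (E : VkExp k (MvPolynomial (Fin 2) k)) (a b : ℕ)
    (hnt : ∃ j, 0 < (E.φ (X j)).natDegree)
    (ha : 0 < a) (hb : 0 < b) (hab : Nat.Coprime a b) (ζ : k) (hζ : ζ ≠ 0)
    (ht : (X 0 ^ a - C ζ * X 1 ^ b : MvPolynomial (Fin 2) k) ∈ vkKer E) : a = 1 ∨ b = 1 := by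
  have := Fact.mk hp
  have hrel := vk_deg_rel E a b ζ hζ ht
  obtain ⟨u, hu⟩ : b ∣ (E.φ (X 0)).natDegree :=
    (Nat.Coprime.dvd_of_dvd_mul_left hab.symm ⟨_, hrel⟩)
  have hv : (E.φ (X 1)).natDegree = a * u := by
    rw [hu] at hrel
    apply Nat.eq_of_mul_eq_mul_left hb
    rw [← hrel]; ring
  have hupos : 0 < u := by
    rcases Nat.eq_zero_or_pos u with rfl | h
    · obtain ⟨j, hj⟩ := hnt
      fin_cases j
      · simp [hu] at hj
      · simp [hv] at hj
    · exact h
  have hsg := vk_semigroup E a b u ha hb hab hupos ζ ht hu hv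
  have hfin : ∀ c : ℕ, ¬ p ∣ c → 0 < c → ∀ h, (E.φ h).natDegree = c * u → a = 1 ∨ b = 1 := by
    intro c hc hc0 h hh
    have hpos : 0 < (E.φ h).natDegree := by rw [hh]; positivity
    obtain ⟨h', -, hh'⟩ := vk_ppow p hp E h hpos
    have e1 : padicValNat p (c * u) = padicValNat p u := by
      rw [padicValNat.mul hc0.ne' hupos.ne', padicValNat.eq_zero_of_not_dvd hc, zero_add]
    rw [hh, e1] at hh'
    obtain ⟨i, j, hij⟩ := hsg h'
    rw [hh'] at hij
    obtain ⟨m, hm⟩ := pow_padicValNat_dvd (p := p) (n := u)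
    have hq : 0 < p ^ padicValNat p u := pow_pos hp.pos _
    have e2 : m * (b * i + a * j) = 1 := by
      apply Nat.eq_of_mul_eq_mul_left hq
      rw [← mul_assoc, ← hm, ← hij, mul_one]
    have e3 : b * i + a * j = 1 := Nat.eq_one_of_mul_eq_one_left e2
    rcases Nat.eq_zero_or_pos i with rfl | hi
    · left
      simp only [mul_zero, zero_add] at e3
      exact Nat.eq_one_of_mul_eq_one_right e3
    · right
      have : b ≤ b * i := Nat.le_mul_of_pos_right _ hi
      omega
  by_cases hpa : p ∣ a
  · have hpb : ¬ p ∣ b := by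
      intro h
      have := Nat.dvd_gcd hpa h
      rw [hab] at this
      exact hp.one_lt.ne' (Nat.dvd_one.1 this)
    exact hfin b hpb hb _ hu
  · exact hfin a hpa ha _ hv

end vksemi

section vkac
open MvPolynomial
variable {k : Type*} [Field k]

/-- The exponent vector `(i, j)`. -/
def vkd (i j : ℕ) : Fin 2 →₀ ℕ := Finsupp.single 0 i + Finsupp.single 1 j

@[simp] theorem vkd_zero (i j : ℕ) : vkd i j 0 = i := by simp [vkd]
@[simp] theorem vkd_one (i j : ℕ) : vkd i j 1 = j := by simp [vkd]

theorem vkd_eta (d : Fin 2 →₀ ℕ) : vkd (d 0) (d 1) = d := by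
  ext n; fin_cases n <;> simp

theorem vkd_ext {d d' : Fin 2 →₀ ℕ} (h0 : d 0 = d' 0) (h1 : d 1 = d' 1) : d = d' := by
  rw [← vkd_eta d, ← vkd_eta d', h0, h1]

theorem vkd_inj {i j i' j' : ℕ} : vkd i j = vkd i' j' ↔ i = i' ∧ j = j' := by
  constructor
  · intro h
    exact ⟨by simpa using DFunLike.congr_fun h 0, by simpa using DFunLike.congr_fun h 1⟩
  · rintro ⟨rfl, rfl⟩; rfl

theorem vkd_monomial {R : Type*} [CommSemiring R] (i j : ℕ) (c : R) :
    (monomial (vkd i j) c : MvPolynomial (Fin 2) R) = C c * (X 0 ^ i * X 1 ^ j) := by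
  rw [vkd, X_pow_eq_monomial, X_pow_eq_monomial, monomial_mul, C_mul_monomial]
  simp

theorem vk_weight (u v : ℚ) (d : Fin 2 →₀ ℕ) :
    Finsupp.weight ![u, v] d = d 0 * u + d 1 * v := by
  rw [Finsupp.weight_apply, Finsupp.sum_fintype _ _ (by simp)]
  simp

theorem vk_not_dvd (n : Fin 2) (f : MvPolynomial (Fin 2) k) (h : ¬ X n ∣ f) :
    ∃ d, coeff d f ≠ 0 ∧ d n = 0 := by
  by_contra! hc
  apply h
  rw [f.as_sum]
  apply Finset.dvd_sum
  intro d hd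
  rw [X_dvd_monomial]
  exact Or.inr (hc d (mem_support_iff.1 hd))

theorem vk_degreeOf (n : Fin 2) (f : MvPolynomial (Fin 2) k) (hf : f ≠ 0) :
    ∃ d, coeff d f ≠ 0 ∧ d n = degreeOf n f := by
  rw [degreeOf_eq_sup]
  obtain ⟨d, hd, h⟩ := Finset.exists_mem_eq_sup f.support (by simpa using hf) (fun m => m n)
  exact ⟨d, mem_support_iff.1 hd, h.symm⟩

theorem vk_le_degreeOf (n : Fin 2) (f : MvPolynomial (Fin 2) k) (d) (hd : coeff d f ≠ 0) :
    d n ≤ degreeOf n f := monomial_le_degreeOf n (mem_support_iff.2 hd)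

/-- Homogeneous pieces come from univariate polynomials. -/
theorem vk_univ (a b e : ℕ) (ha : 0 < a) (hb : 0 < b) (hab : Nat.Coprime a b)
    (h : MvPolynomial (Fin 2) k) (hh : ∀ d, coeff d h ≠ 0 → b * d 0 + a * d 1 = e * a * b) :
    ∃ q : Polynomial k, (∀ j ≤ e, q.coeff j = coeff (vkd (a * j) (b * (e - j))) h) ∧
      (q.natDegree ≤ e) ∧
      h = aeval ![(X 0 ^ a : MvPolynomial (Fin 2) k), X 1 ^ b] (q.homogenize e) := by
  classical
  let q : Polynomial k := ∑ j ∈ Finset.range (e + 1),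
    Polynomial.monomial j (coeff (vkd (a * j) (b * (e - j))) h)
  have hq : ∀ j ≤ e, q.coeff j = coeff (vkd (a * j) (b * (e - j))) h := by
    intro j hj
    simp only [q, Polynomial.finsetSum_coeff, Polynomial.coeff_monomial]
    rw [Finset.sum_ite_eq' (Finset.range (e+1)) j, if_pos (Finset.mem_range.2 (by omega))]
  refine ⟨q, hq, ?_, ?_⟩
  · apply Polynomial.natDegree_sum_le_of_forall_le
    intro i hi
    exact (Polynomial.natDegree_monomial_le _).trans (by simp at hi; omega)
  · have e1 : aeval ![(X 0 ^ a : MvPolynomial (Fin 2) k), X 1 ^ b] (q.homogenize e) =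
        ∑ j ∈ Finset.range (e + 1), monomial (vkd (a * j) (b * (e - j)))
          (coeff (vkd (a * j) (b * (e - j))) h) := by
      rw [Polynomial.homogenize, map_sum, Finset.Nat.sum_antidiagonal_eq_sum_range_succ_mk]
      apply Finset.sum_congr rfl
      intro j hj
      rw [Finset.mem_range] at hj
      rw [hq j (by omega)]
      have : (fun₀ | (0 : Fin 2) => j | 1 => e - j) = vkd j (e - j) := by
        ext n; fin_cases n <;> simp
      rw [this, vkd_monomial, vkd_monomial]
      simp [← pow_mul, algebraMap_eq]
    rw [e1]
    ext d
    rw [coeff_sum]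
    simp only [coeff_monomial]
    by_cases hd : coeff d h = 0
    · rw [hd]; symm
      apply Finset.sum_eq_zero
      intro j _
      split_ifs with h1
      · rw [h1, hd]
      · rfl
    · have h1 := hh d hd
      have h2 : a ∣ b * d 0 := by
        have : a ∣ b * d 0 + a * d 1 := h1 ▸ ⟨e * b, by ring⟩
        exact (Nat.dvd_add_left ⟨d 1, rfl⟩).1 this
      obtain ⟨j, hj⟩ := hab.dvd_of_dvd_mul_left h2
      have h3 : b * j + d 1 = e * b := by
        rw [hj] at h1
        apply Nat.eq_of_mul_eq_mul_left ha
        linarith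
      have hje : j ≤ e := by
        by_contra hc
        have : (e + 1) * b ≤ j * b := Nat.mul_le_mul_right _ (by omega)
        nlinarith
      have h4 : d 1 = b * (e - j) := by
        obtain ⟨t, rfl⟩ := Nat.exists_eq_add_of_le hje
        simp only [Nat.add_sub_cancel_left]
        nlinarith
      rw [Finset.sum_eq_single j]
      · have : vkd (a * j) (b * (e - j)) = d := by rw [← hj, ← h4, vkd_eta]
        rw [if_pos this, this]
      · intro i _ hij
        rw [if_neg]
        intro hc
        rw [← vkd_eta d, vkd_inj, hj] at hc
        exact hij (Nat.eq_of_mul_eq_mul_left ha hc.1)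
      · intro hc; exact absurd (Finset.mem_range.2 (by omega)) hc

theorem vk_hom_prod (s : Multiset k) :
    ((s.map fun ζ => Polynomial.X - Polynomial.C ζ).prod).homogenize s.card =
      (s.map fun ζ => (X 0 - C ζ * X 1 : MvPolynomial (Fin 2) k)).prod := by
  induction s using Multiset.induction_on with
  | empty => simp
  | cons ζ s ih =>
    rw [Multiset.map_cons, Multiset.prod_cons, Multiset.card_cons, Multiset.map_cons,
      Multiset.prod_cons, add_comm, Polynomial.homogenize_mul, ih]
    · congr 1
      rw [Polynomial.homogenize_sub, Polynomial.homogenize_C, Polynomial.homogenize_X one_ne_zero]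
      simp
    · exact (Polynomial.natDegree_X_sub_C_le _)
    · rw [Polynomial.natDegree_multiset_prod_X_sub_C_eq_card]

/-- top form over algebraically closed fields. -/
theorem vk_topform [IsAlgClosed k] (p : ℕ) (hp : p.Prime) [CharP k p]
    (E : VkExp k (MvPolynomial (Fin 2) k))
    (hnt : ∃ j, 0 < (E.φ (X j)).natDegree)
    (a b e : ℕ) (ha : 0 < a) (hb : 0 < b) (he : 0 < e) (hab : Nat.Coprime a b)
    (h : MvPolynomial (Fin 2) k) (hh : ∀ d, coeff d h ≠ 0 → b * d 0 + a * d 1 = e * a * b)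
    (h0 : coeff (vkd (e * a) 0) h ≠ 0) (h1 : coeff (vkd 0 (e * b)) h ≠ 0)
    (hker : h ∈ vkKer E) :
    (a = 1 ∨ b = 1) ∧ ∃ c ζ : k, c ≠ 0 ∧ ζ ≠ 0 ∧ h = C c * (X 0 ^ a - C ζ * X 1 ^ b) ^ e := by
  obtain ⟨q, hq, hdeg, hqh⟩ := vk_univ a b e ha hb hab h hh
  have hqe : q.coeff e ≠ 0 := by
    rw [hq e le_rfl]; simpa [mul_comm a e] using h0
  have hq0 : q.coeff 0 ≠ 0 := by
    rw [hq 0 (by omega)]; simpa [mul_comm b e] using h1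
  have hd : q.natDegree = e := le_antisymm hdeg (Polynomial.le_natDegree_of_ne_zero hqe)
  have hsp : q.Splits := IsAlgClosed.splits q
  have hcard : q.roots.card = e := by
    rw [← hsp.natDegree_eq_card_roots, hd]
  have hprod := hsp.eq_prod_roots
  have hh2 : h = C q.leadingCoeff *
      (q.roots.map fun ζ => (X 0 ^ a - C ζ * X 1 ^ b : MvPolynomial (Fin 2) k)).prod := by
    rw [hqh]
    conv_lhs => rw [hprod, ← hcard]
    rw [Polynomial.homogenize_C_mul, vk_hom_prod, map_mul, map_multiset_prod, Multiset.map_map]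
    simp [Function.comp_def, algebraMap_eq]
  have hne : h ≠ 0 := by rintro rfl; simp at h0
  have hmem : ∀ ζ ∈ q.roots, (X 0 ^ a - C ζ * X 1 ^ b : MvPolynomial (Fin 2) k) ∈ vkKer E := by
    intro ζ hζ
    apply vk_ker_dvd E hne hker
    rw [hh2]
    exact Dvd.dvd.mul_left (Multiset.dvd_prod (Multiset.mem_map_of_mem _ hζ)) _
  have hroot0 : ∀ ζ ∈ q.roots, ζ ≠ 0 := by
    rintro ζ hζ rfl
    rw [Polynomial.mem_roots', Polynomial.IsRoot.def, ← Polynomial.coeff_zero_eq_eval_zero] at hζ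
    exact hq0 hζ.2
  have hC : ∀ c : k, C c ∈ vkKer E := fun c => (vkKer E).algebraMap_mem c
  have hall : ∀ ζ ∈ q.roots, ∀ ζ' ∈ q.roots, ζ = ζ' := by
    intro ζ hζ ζ' hζ'
    by_contra hne'
    have hs : ζ - ζ' ≠ 0 := sub_ne_zero.2 hne'
    have hy : (X 1 ^ b : MvPolynomial (Fin 2) k) ∈ vkKer E := by
      have e1 : (X 1 ^ b : MvPolynomial (Fin 2) k) = C (ζ - ζ')⁻¹ *
        ((X 0 ^ a - C ζ' * X 1 ^ b) - (X 0 ^ a - C ζ * X 1 ^ b)) := by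
        have : C (ζ - ζ')⁻¹ * C (ζ - ζ') = (1 : MvPolynomial (Fin 2) k) := by
          rw [← C_mul, inv_mul_cancel₀ hs, C_1]
        rw [C_sub] at this
        linear_combination (- X 1 ^ b) * this
      rw [e1]
      exact (vkKer E).mul_mem (hC _) ((vkKer E).sub_mem (hmem _ hζ') (hmem _ hζ))
    have hx : (X 0 ^ a : MvPolynomial (Fin 2) k) ∈ vkKer E := by
      have := (vkKer E).add_mem (hmem _ hζ) ((vkKer E).mul_mem (hC ζ) hy)
      simpa using this
    have hy' := vk_ker_dvd E (pow_ne_zero b (X_ne_zero (1 : Fin 2))) hy (dvd_pow_self _ hb.ne')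
    have hx' := vk_ker_dvd E (pow_ne_zero a (X_ne_zero (0 : Fin 2))) hx (dvd_pow_self _ ha.ne')
    obtain ⟨j, hj⟩ := hnt
    rw [vk_mem_ker] at hx' hy'
    fin_cases j
    · simp at hj; omega
    · simp at hj; omega
  have hcp : 0 < q.roots.card := by omega
  obtain ⟨ζ, hζ⟩ := Multiset.card_pos_iff_exists_mem.1 hcp
  refine ⟨vk_ab p hp E a b hnt ha hb hab ζ (hroot0 ζ hζ) (hmem ζ hζ), q.leadingCoeff, ζ, ?_,
    hroot0 ζ hζ, ?_⟩
  · rw [Polynomial.leadingCoeff, hd]; exact hqe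
  · have : q.roots = Multiset.replicate e ζ := by
      rw [Multiset.eq_replicate]
      exact ⟨hcard, fun b hb => hall _ hb _ hζ⟩
    rw [this] at hh2
    simpa using hh2

end vkac

section vkac2
open MvPolynomial
variable {k : Type*} [Field k]

theorem vk_ker_top (E : VkExp k (MvPolynomial (Fin 2) k)) (h : ∀ j, X j ∈ vkKer E)
    (f : MvPolynomial (Fin 2) k) : f ∈ vkKer E := by
  induction f using MvPolynomial.induction_on with
  | C c => exact (vkKer E).algebraMap_mem c
  | add p q hp hq => exact (vkKer E).add_mem hp hq
  | mul_X p n hp => exact (vkKer E).mul_mem hp (h n)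

theorem vk_exists_E (τ : MvPolynomial (Fin 2) k ≃ₐ[k] MvPolynomial (Fin 2) k) :
    ∃ E : VkExp k (MvPolynomial (Fin 2) k), (∃ j, ∃ i, 0 < i ∧ (E.φ (X j)).coeff i ≠ 0) ∧
      ∀ i, 0 < i → (E.φ (τ (X 1))).coeff i = 0 := by
  let ρ := τ.symm.trans (MvPolynomial.finSuccEquiv k 1)
  have h1 : ρ (τ (X 1)) = Polynomial.C (X 0) := by
    simp only [ρ, AlgEquiv.trans_apply, AlgEquiv.symm_apply_apply]
    exact finSuccEquiv_X_succ (j := (0 : Fin 1))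
  have h0 : ρ (τ (X 0)) = Polynomial.X := by
    simp only [ρ, AlgEquiv.trans_apply, AlgEquiv.symm_apply_apply]
    exact finSuccEquiv_X_zero
  refine ⟨vkOfEquiv ρ, ?_, fun i hi => vkOfEquiv_C ρ _ _ h1 i hi⟩
  by_contra! hc
  have hk : ∀ j, X j ∈ vkKer (vkOfEquiv ρ) := by
    intro j
    rw [vk_mem_ker]
    by_contra hne
    have := hc j _ (Nat.pos_of_ne_zero hne)
    rw [Polynomial.coeff_natDegree, Polynomial.leadingCoeff_eq_zero] at this
    rw [this] at hne
    simp at hne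
  have := vk_ker_top _ hk (τ (X 0))
  rw [vk_mem_ker] at this
  have h2 := vkOfEquiv_X ρ _ h0
  rw [Polynomial.coeff_eq_zero_of_natDegree_lt (by omega)] at h2
  exact zero_ne_one h2

theorem vk_ac [IsAlgClosed k] (p : ℕ) (hp : p.Prime) [CharP k p]
    (τ : MvPolynomial (Fin 2) k ≃ₐ[k] MvPolynomial (Fin 2) k)
    (hr : 0 < degreeOf 0 (τ (X 1))) (hm : 0 < degreeOf 1 (τ (X 1))) :
    ∃ a b e : ℕ, 0 < a ∧ 0 < b ∧ 0 < e ∧ (a = 1 ∨ b = 1) ∧ degreeOf 0 (τ (X 1)) = e * a ∧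
      degreeOf 1 (τ (X 1)) = e * b ∧ ∃ c ζ : k, c ≠ 0 ∧ ζ ≠ 0 ∧
        ∀ d, coeff d (τ (X 1) - C c * (X 0 ^ a - C ζ * X 1 ^ b) ^ e) ≠ 0 →
          b * d 0 + a * d 1 < e * a * b := by
  obtain ⟨E, hE, hEf⟩ := vk_exists_E τ
  set f := τ (X 1) with hf
  have hf0 : f ≠ 0 := by rw [hf]; simp [X_ne_zero]
  set r := degreeOf 0 f with hrd
  set m := degreeOf 1 f with hmd
  obtain ⟨e, he⟩ : ∃ e, e = Nat.gcd r m := ⟨_, rfl⟩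
  have hepos : 0 < e := he ▸ Nat.gcd_pos_of_pos_left _ hr
  obtain ⟨a, b, hab, hra, hmb⟩ : ∃ a b, Nat.Coprime a b ∧ r = e * a ∧ m = e * b := by
    refine ⟨r / e, m / e, ?_, ?_, ?_⟩
    · rw [he]; exact Nat.coprime_div_gcd_div_gcd (he ▸ hepos)
    · rw [Nat.mul_div_cancel' (he ▸ Nat.gcd_dvd_left r m)]
    · rw [Nat.mul_div_cancel' (he ▸ Nat.gcd_dvd_right r m)]
  have ha : 0 < a := Nat.pos_of_mul_pos_left (hra ▸ hr)
  have hb : 0 < b := Nat.pos_of_mul_pos_left (hmb ▸ hm)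
  obtain ⟨E', hnt, hE'⟩ := vk_exists_bar E ![(b : ℚ), (a : ℚ)] hE
  -- maximal weight
  obtain ⟨d0, hd0, hmax⟩ := Finset.exists_max_image f.support
    (fun d : Fin 2 →₀ ℕ => b * d 0 + a * d 1) (by simpa using hf0)
  obtain ⟨D, hD⟩ : ∃ D, D = b * d0 0 + a * d0 1 := ⟨_, rfl⟩
  have hmax' : ∀ d, coeff d f ≠ 0 → b * d 0 + a * d 1 ≤ D := by
    intro d hd; rw [hD]; exact hmax d (mem_support_iff.2 hd)
  have hw : ∀ d : Fin 2 →₀ ℕ, Finsupp.weight ![(b : ℚ), (a : ℚ)] d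
      = ((b * d 0 + a * d 1 : ℕ) : ℚ) := by
    intro d; rw [vk_weight]; push_cast; ring
  have hfil : VkFil ![(b : ℚ), (a : ℚ)] (D : ℚ) f := by
    intro d hd
    rw [hw]
    exact_mod_cast hmax' d hd
  set h := weightedHomogeneousComponent ![(b : ℚ), (a : ℚ)] (D : ℚ) f with hh
  have hcoef : ∀ d, coeff d h = if b * d 0 + a * d 1 = D then coeff d f else 0 := by
    intro d
    rw [hh, vk_comp_coeff, hw]
    congr 1
    simp only [Nat.cast_inj]
  have hker : h ∈ vkKer E' := hE' f D hfil hEf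
  have hh0 : h ≠ 0 := by
    intro hc
    have := hcoef d0
    rw [hc, if_pos hD.symm, coeff_zero] at this
    exact (mem_support_iff.1 hd0) this.symm
  have hsub : ∀ d, coeff d h ≠ 0 → b * d 0 + a * d 1 = D ∧ coeff d f ≠ 0 := by
    intro d hd
    rw [hcoef] at hd
    split_ifs at hd with h1
    · exact ⟨h1, hd⟩
    · exact absurd rfl hd
  obtain ⟨dr, hdr, hdr'⟩ := vk_degreeOf 0 f hf0
  obtain ⟨dm, hdm, hdm'⟩ := vk_degreeOf 1 f hf0
  have hkey : D = e * a * b := by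
    by_cases hdv : X 0 ∣ h
    · have hdv1 : ¬ X 1 ∣ h := by
        intro hdv1
        have h0 := vk_ker_dvd E' hh0 hker hdv
        have h1 := vk_ker_dvd E' hh0 hker hdv1
        rw [vk_mem_ker] at h0 h1
        obtain ⟨j, hj⟩ := hnt
        fin_cases j
        · simp at hj; omega
        · simp at hj; omega
      obtain ⟨d, hd, hd1⟩ := vk_not_dvd 1 h hdv1
      obtain ⟨h1, h2⟩ := hsub d hd
      have h3 := vk_le_degreeOf 0 f d h2
      rw [hd1] at h1
      have h4 := hmax' dr hdr
      rw [hdr', ← hrd, hra] at h4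
      rw [← hrd, hra] at h3
      nlinarith
    · obtain ⟨d, hd, hd1⟩ := vk_not_dvd 0 h hdv
      obtain ⟨h1, h2⟩ := hsub d hd
      have h3 := vk_le_degreeOf 1 f d h2
      rw [hd1] at h1
      have h4 := hmax' dm hdm
      rw [hdm', ← hmd, hmb] at h4
      rw [← hmd, hmb] at h3
      nlinarith
  have hr' : coeff (vkd (e * a) 0) h ≠ 0 := by
    have h4 := hmax' dr hdr
    rw [hdr', ← hrd, hra] at h4
    have h5 : dr 1 = 0 := by
      by_contra hc
      have : 0 < a * dr 1 := Nat.mul_pos ha (Nat.pos_of_ne_zero hc)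
      nlinarith
    have : vkd (e * a) 0 = dr := vkd_ext (by simp [hdr', ← hrd, hra]) (by simp [h5])
    rw [hcoef, this, if_pos]
    · exact hdr
    · rw [h5, hdr', ← hrd, hra, hkey]; ring
  have hm' : coeff (vkd 0 (e * b)) h ≠ 0 := by
    have h4 := hmax' dm hdm
    rw [hdm', ← hmd, hmb] at h4
    have h5 : dm 0 = 0 := by
      by_contra hc
      have : 0 < b * dm 0 := Nat.mul_pos hb (Nat.pos_of_ne_zero hc)
      nlinarith
    have : vkd 0 (e * b) = dm := vkd_ext (by simp [h5]) (by simp [hdm', ← hmd, hmb])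
    rw [hcoef, this, if_pos]
    · exact hdm
    · rw [h5, hdm', ← hmd, hmb, hkey]; ring
  obtain ⟨hor, c, ζ, hc, hζ, hform⟩ := vk_topform p hp E' hnt a b e ha hb hepos hab h
    (fun d hd => (hsub d hd).1.trans hkey) hr' hm' hker
  refine ⟨a, b, e, ha, hb, hepos, hor, hra, hmb, c, ζ, hc, hζ, ?_⟩
  intro d hd
  rw [← hform, coeff_sub, hcoef] at hd
  rw [← hkey]
  split_ifs at hd with h1
  · simp at hd
  · rw [sub_zero] at hd
    exact lt_of_le_of_ne (hmax' d hd) h1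

/-- Base change of an automorphism. -/
def vkBase {K L : Type*} [Field K] [Field L] (i : K →+* L)
    (τ : MvPolynomial (Fin 2) K ≃ₐ[K] MvPolynomial (Fin 2) K) :
    MvPolynomial (Fin 2) L ≃ₐ[L] MvPolynomial (Fin 2) L :=
  have key : ∀ τ : MvPolynomial (Fin 2) K ≃ₐ[K] MvPolynomial (Fin 2) K, ∀ f,
      aeval (R := L) (fun n => MvPolynomial.map i (τ (X n))) (MvPolynomial.map i f)
        = MvPolynomial.map i (τ f) := by
    intro τ f
    induction f using MvPolynomial.induction_on with
    | C c =>
      have : τ (C c) = C c := τ.commutes c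
      simp [this, algebraMap_eq]
    | add p q hp hq => rw [map_add, map_add, map_add, map_add, hp, hq]
    | mul_X p n hp => rw [map_mul, map_mul, map_mul, map_mul, hp, map_X, aeval_X]
  AlgEquiv.ofAlgHom (aeval fun n => MvPolynomial.map i (τ (X n)))
    (aeval fun n => MvPolynomial.map i (τ.symm (X n)))
    (by
      apply MvPolynomial.algHom_ext
      intro n
      rw [AlgHom.comp_apply, aeval_X, key, AlgEquiv.apply_symm_apply, map_X]
      rfl)
    (by
      apply MvPolynomial.algHom_ext
      intro n
      rw [AlgHom.comp_apply, aeval_X, key τ.symm, AlgEquiv.symm_apply_apply, map_X]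
      rfl)

theorem vkBase_X {K L : Type*} [Field K] [Field L] (i : K →+* L)
    (τ : MvPolynomial (Fin 2) K ≃ₐ[K] MvPolynomial (Fin 2) K) (n : Fin 2) :
    vkBase i τ (X n) = MvPolynomial.map i (τ (X n)) := by
  simp [vkBase]

theorem vk_coeff_form (a b e q : ℕ) (ha : 0 < a) (c ζ : k) :
    coeff (vkd (a * (e - q)) (b * q)) (C c * (X 0 ^ a - C ζ * X 1 ^ b) ^ e)
      = if q ≤ e then c * ((e.choose q : k) * (-ζ) ^ q) else
        coeff (vkd (a * (e - q)) (b * q)) (C c * (X 0 ^ a - C ζ * X 1 ^ b) ^ e) := by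
  split_ifs with hq
  swap
  · rfl
  rw [coeff_C_mul, sub_eq_add_neg, add_comm, add_pow, coeff_sum]
  congr 1
  have : ∀ j, (-(C ζ * X 1 ^ b)) ^ j * (X 0 ^ a) ^ (e - j) * ((e.choose j : ℕ) : MvPolynomial (Fin 2) k)
      = monomial (vkd (a * (e - j)) (b * j)) ((e.choose j : k) * (-ζ) ^ j) := by
    intro j
    rw [vkd_monomial, C_mul, C_pow, C_neg, ← map_natCast (C : k →+* MvPolynomial (Fin 2) k),
      pow_mul, pow_mul]
    ring
  simp only [this, coeff_monomial]
  rw [Finset.sum_eq_single q]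
  · simp
  · intro j hj hjq
    rw [if_neg]
    rw [vkd_inj]
    rintro ⟨h1, -⟩
    have := Nat.eq_of_mul_eq_mul_left ha h1
    simp at hj; omega
  · intro h; simp at h; omega

theorem vk_perf (p : ℕ) (hp : p.Prime) {K : Type*} [Field K] [CharP K p]
    (hperf : Function.Surjective fun a : K => a ^ p)
    (τ : MvPolynomial (Fin 2) K ≃ₐ[K] MvPolynomial (Fin 2) K)
    (hr : 0 < degreeOf 0 (τ (X 1))) (hm : 0 < degreeOf 1 (τ (X 1))) :
    ∃ a b e : ℕ, 0 < a ∧ 0 < b ∧ 0 < e ∧ (a = 1 ∨ b = 1) ∧ degreeOf 0 (τ (X 1)) = e * a ∧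
      degreeOf 1 (τ (X 1)) = e * b ∧ ∃ c ζ : K, c ≠ 0 ∧ ζ ≠ 0 ∧
        ∀ d, coeff d (τ (X 1) - C c * (X 0 ^ a - C ζ * X 1 ^ b) ^ e) ≠ 0 →
          b * d 0 + a * d 1 < e * a * b := by
  have : Fact p.Prime := ⟨hp⟩
  let L := AlgebraicClosure K
  let i : K →+* L := algebraMap K L
  have hi : Function.Injective i := i.injective
  have : CharP L p := charP_of_injective_ringHom hi p
  have hdeg : ∀ n, degreeOf n (vkBase i τ (X 1)) = degreeOf n (τ (X 1)) := by
    intro n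
    rw [vkBase_X, degreeOf_eq_sup, degreeOf_eq_sup, support_map_of_injective _ hi]
  obtain ⟨a, b, e, ha, hb, he, hor, h1, h2, c, ζ, hc, hζ, hform⟩ :=
    vk_ac p hp (vkBase i τ) (by rwa [hdeg]) (by rwa [hdeg])
  rw [hdeg] at h1 h2
  rw [vkBase_X] at hform
  have htop : ∀ q ≤ e, i (coeff (vkd (a * (e - q)) (b * q)) (τ (X 1))) =
      c * ((e.choose q : L) * (-ζ) ^ q) := by
    intro q hq
    have := hform (vkd (a * (e - q)) (b * q))
    rw [coeff_sub, vk_coeff_form a b e q ha, if_pos hq, coeff_map] at this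
    by_contra hne
    have h3 := this (sub_ne_zero.2 hne)
    simp only [vkd_zero, vkd_one] at h3
    obtain ⟨t, rfl⟩ := Nat.exists_eq_add_of_le hq
    simp only [Nat.add_sub_cancel_left] at h3
    nlinarith
  obtain ⟨c0, hc0⟩ : ∃ c0 : K, i c0 = c := ⟨_, by simpa using htop 0 (by omega)⟩
  obtain ⟨ζ0, hζ0⟩ : ∃ ζ0 : K, i ζ0 = ζ := by
    set v := padicValNat p e with hv
    have hle : p ^ v ≤ e := Nat.le_of_dvd he pow_padicValNat_dvd
    have h3 := htop (p ^ v) hle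
    have hch : ((e.choose (p ^ v) : ℕ) : K) ≠ 0 := by
      rw [Ne, CharP.cast_eq_zero_iff K p]
      exact vk_choose_ne p hp e he
    have hc0' : c0 ≠ 0 := by rintro rfl; exact hc (by simpa using hc0.symm)
    have hsurj : ∀ v : ℕ, Function.Surjective fun a : K => a ^ p ^ v := by
      intro v
      induction v with
      | zero => intro x; exact ⟨x, by simp⟩
      | succ v ih =>
        intro x
        obtain ⟨y, hy⟩ := hperf x
        obtain ⟨z, hz⟩ := ih y
        refine ⟨z, ?_⟩
        simp only at hy hz ⊢
        rw [pow_succ, pow_mul, hz, hy]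
    obtain ⟨z, hz⟩ := hsurj v (c0⁻¹ * ((e.choose (p ^ v) : ℕ) : K)⁻¹ *
      coeff (vkd (a * (e - p ^ v)) (b * p ^ v)) (τ (X 1)))
    refine ⟨-z, ?_⟩
    have h4 : (i z) ^ p ^ v = (-ζ) ^ p ^ v := by
      rw [← map_pow]
      simp only at hz
      rw [hz, map_mul, map_mul, h3, map_inv₀, map_inv₀, hc0, map_natCast]
      have : ((e.choose (p ^ v) : ℕ) : L) ≠ 0 := by
        rw [← map_natCast i]
        exact (map_ne_zero_iff i hi).2 hch
      rw [show c⁻¹ * ((e.choose (p ^ v) : ℕ) : L)⁻¹ * (c * (((e.choose (p ^ v) : ℕ) : L) *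
        (-ζ) ^ p ^ v)) = (c⁻¹ * c) * ((((e.choose (p ^ v) : ℕ) : L)⁻¹ *
          ((e.choose (p ^ v) : ℕ) : L))) * (-ζ) ^ p ^ v by ring, inv_mul_cancel₀ hc,
        inv_mul_cancel₀ this, one_mul, one_mul]
    have h5 : i z = -ζ := by
      have := iterateFrobenius_inj L p v
      apply this
      simpa [iterateFrobenius_def] using h4
    rw [map_neg, h5, neg_neg]
  refine ⟨a, b, e, ha, hb, he, hor, h1, h2, c0, ζ0, ?_, ?_, ?_⟩
  · rintro rfl; exact hc (by simpa using hc0.symm)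
  · rintro rfl; exact hζ (by simpa using hζ0.symm)
  · intro d hd
    apply hform d
    have e1 : MvPolynomial.map i (τ (X 1) - C c0 * (X 0 ^ a - C ζ0 * X 1 ^ b) ^ e) =
      MvPolynomial.map i (τ (X 1)) - C c * (X 0 ^ a - C ζ * X 1 ^ b) ^ e := by
      simp [hc0, hζ0]
    rw [← e1, coeff_map]
    exact (map_ne_zero_iff i hi).2 hd

end vkac2

section vkgrp
open MvPolynomial
variable {K : Type*} [Field K]

theorem vkAut_ext {τ τ' : MvPolynomial (Fin 2) K ≃ₐ[K] MvPolynomial (Fin 2) K}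
    (h0 : τ (X 0) = τ' (X 0)) (h1 : τ (X 1) = τ' (X 1)) : τ = τ' := by
  apply AlgEquiv.coe_toAlgHom_injective
  apply MvPolynomial.algHom_ext
  intro n
  fin_cases n
  · exact h0
  · exact h1

/-- Automorphism from images of the variables. -/
def vkAut (u v : Fin 2 → MvPolynomial (Fin 2) K) (h1 : ∀ n, aeval u (v n) = X n)
    (h2 : ∀ n, aeval v (u n) = X n) : MvPolynomial (Fin 2) K ≃ₐ[K] MvPolynomial (Fin 2) K :=
  AlgEquiv.ofAlgHom (aeval u) (aeval v)
    (by
      apply MvPolynomial.algHom_ext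
      intro n
      rw [AlgHom.comp_apply, aeval_X, h1]; rfl)
    (by
      apply MvPolynomial.algHom_ext
      intro n
      rw [AlgHom.comp_apply, aeval_X, h2]; rfl)

theorem vkAut_X (u v : Fin 2 → MvPolynomial (Fin 2) K) (h1 h2) (n : Fin 2) :
    vkAut u v h1 h2 (X n) = u n := by
  change aeval u (X n) = u n
  rw [aeval_X]

theorem vk_aeval_aeval {A B : Type*} [CommRing A] [Algebra K A] [CommRing B] [Algebra K B]
    (f : A →ₐ[K] B) (a : A) (F : Polynomial K) :
    f (Polynomial.aeval a F) = Polynomial.aeval (f a) F :=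
  (Polynomial.aeval_algHom_apply f a F).symm

/-- The shear `X1 ↦ X1 + F(X0)`. -/
def vkShear (F : Polynomial K) : MvPolynomial (Fin 2) K ≃ₐ[K] MvPolynomial (Fin 2) K :=
  vkAut ![X 0, X 1 + Polynomial.aeval (X 0) F] ![X 0, X 1 - Polynomial.aeval (X 0) F]
    (by
      intro n
      fin_cases n
      · simp
      · change aeval _ (X 1 - Polynomial.aeval (X 0) F) = X 1
        rw [map_sub, vk_aeval_aeval, aeval_X, aeval_X]
        simp)
    (by
      intro n
      fin_cases n
      · simp
      · change aeval _ (X 1 + Polynomial.aeval (X 0) F) = X 1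
        rw [map_add, vk_aeval_aeval, aeval_X, aeval_X]
        simp)

theorem vkShear_0 (F : Polynomial K) : vkShear F (X 0) = X 0 := by
  rw [vkShear, vkAut_X]; simp
theorem vkShear_1 (F : Polynomial K) :
    vkShear F (X 1) = X 1 + Polynomial.aeval (X 0) F := by
  rw [vkShear, vkAut_X]; simp

/-- The swap `X0 ↦ X1`, `X1 ↦ -X0`. -/
def vkSwap (K : Type*) [Field K] : MvPolynomial (Fin 2) K ≃ₐ[K] MvPolynomial (Fin 2) K :=
  vkAut ![X 1, - X 0] ![- X 1, X 0]
    (by intro n; fin_cases n <;> simp)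
    (by intro n; fin_cases n <;> simp)

theorem vkSwap_0 : vkSwap K (X 0) = X 1 := by
  rw [vkSwap, vkAut_X]; simp
theorem vkSwap_1 : vkSwap K (X 1) = - X 0 := by
  rw [vkSwap, vkAut_X]; simp
theorem vkSwap_inv_0 : (vkSwap K)⁻¹ (X 0) = - X 1 := by
  change (vkSwap K).symm (X 0) = - X 1
  rw [AlgEquiv.symm_apply_eq, map_neg, vkSwap_1, neg_neg]
theorem vkSwap_inv_1 : (vkSwap K)⁻¹ (X 1) = X 0 := by
  change (vkSwap K).symm (X 1) = X 0
  rw [AlgEquiv.symm_apply_eq, vkSwap_0]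

/-- Diagonal automorphisms. -/
def vkDg (α β : Kˣ) : MvPolynomial (Fin 2) K ≃ₐ[K] MvPolynomial (Fin 2) K :=
  vkAut ![C (α : K) * X 0, C (β : K) * X 1]
    ![C ((α⁻¹ : Kˣ) : K) * X 0, C ((β⁻¹ : Kˣ) : K) * X 1]
    (by
      intro n
      fin_cases n
      · simp [algebraMap_eq, ← mul_assoc, ← C_mul]
      · simp [algebraMap_eq, ← mul_assoc, ← C_mul])
    (by
      intro n
      fin_cases n
      · simp [algebraMap_eq, ← mul_assoc, ← C_mul]
      · simp [algebraMap_eq, ← mul_assoc, ← C_mul])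

theorem vkDg_0 (α β : Kˣ) : vkDg α β (X 0) = C (α : K) * X 0 := by
  rw [vkDg, vkAut_X]; simp
theorem vkDg_1 (α β : Kˣ) : vkDg α β (X 1) = C (β : K) * X 1 := by
  rw [vkDg, vkAut_X]; simp

theorem vk_map_C (τ : MvPolynomial (Fin 2) K ≃ₐ[K] MvPolynomial (Fin 2) K) (c : K) :
    τ (C c) = C c := τ.commutes c

/-- The opposite shear `X0 ↦ X0 + F(X1)`. -/
theorem vk_shear' (G : Subgroup (MvPolynomial (Fin 2) K ≃ₐ[K] MvPolynomial (Fin 2) K))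
    (hsh : ∀ F, vkShear F ∈ G) (hsw : vkSwap K ∈ G) (F : Polynomial K) :
    ∃ s ∈ G, s (X 0) = X 0 + Polynomial.aeval (X 1) F ∧ s (X 1) = X 1 := by
  refine ⟨vkSwap K * vkShear (-F) * (vkSwap K)⁻¹,
    G.mul_mem (G.mul_mem hsw (hsh _)) (G.inv_mem hsw), ?_, ?_⟩
  · simp only [AlgEquiv.mul_apply, vkSwap_inv_0, map_neg, vkShear_1, map_add, vkSwap_1]
    have := vk_aeval_aeval (vkSwap K : MvPolynomial (Fin 2) K →ₐ[K] MvPolynomial (Fin 2) K) (X 0) F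
    simp only [AlgEquiv.coe_toAlgHom, vkSwap_0] at this
    rw [this]; ring
  · simp only [AlgEquiv.mul_apply, vkSwap_inv_1, vkShear_0, vkSwap_0]

theorem vk_range (n : Fin 2) (f : MvPolynomial (Fin 2) K) (hf : degreeOf (1 - n) f = 0) :
    ∃ P : Polynomial K, f = Polynomial.aeval (X n) P := by
  suffices h : f ∈ (Polynomial.aeval (X n : MvPolynomial (Fin 2) K)).range by
    obtain ⟨P, hP⟩ := h
    exact ⟨P, hP.symm⟩
  rw [f.as_sum]
  apply sum_mem
  intro d hd
  have h0 : d (1 - n) = 0 := by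
    have := vk_le_degreeOf (1 - n) f d (mem_support_iff.1 hd); omega
  refine ⟨Polynomial.monomial (d n) (coeff d f), ?_⟩
  change Polynomial.aeval (X n : MvPolynomial (Fin 2) K) _ = _
  rw [Polynomial.aeval_monomial, algebraMap_eq]
  conv_rhs => rw [← vkd_eta d, vkd_monomial]
  rw [vkd_eta]
  fin_cases n
  · simp at h0; simp [h0]
  · simp at h0; simp [h0]

theorem vk_fil_hom {w : Fin 2 → ℚ} (s : MvPolynomial (Fin 2) K →ₐ[K] MvPolynomial (Fin 2) K)
    (hs : ∀ j, VkFil w (w j) (s (X j))) {a : ℚ} {h : MvPolynomial (Fin 2) K} (H : VkFil w a h) :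
    VkFil w a (s h) := by
  have hC : ∀ c : K, VkFil w 0 (C c) := by
    intro c
    have := vkFil_monomial (k := K) (w := w) 0 c
    simpa using this
  have hpow : ∀ (j : Fin 2) (n : ℕ), VkFil w (n * w j) (s (X j) ^ n) := by
    intro j n
    induction n with
    | zero => simpa using hC 1
    | succ n ih =>
      rw [pow_succ]
      have := ih.mul (hs j)
      push_cast
      rwa [add_mul, one_mul]
  rw [h.as_sum, map_sum]
  apply VkFil.sum
  intro d hd
  have h1 := H d (mem_support_iff.1 hd)
  refine vkFil_mono h1 ?_
  have e1 : s (monomial d (coeff d h)) = C (coeff d h) * (s (X 0) ^ d 0 * s (X 1) ^ d 1) := by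
    conv_lhs => rw [← vkd_eta d, vkd_monomial]
    rw [vkd_eta, map_mul, map_mul, map_pow, map_pow]
    congr 1
    exact s.commutes _
  rw [e1]
  have := (hC (coeff d h)).mul ((hpow 0 (d 0)).mul (hpow 1 (d 1)))
  convert this using 1
  rw [Finsupp.weight_apply, Finsupp.sum_fintype _ _ (by simp)]
  simp

/-- `s` lowers the degree. -/
theorem vk_lower (a b e : ℕ) (ha : 0 < a) (hb : 0 < b) (he : 0 < e)
    (f t : MvPolynomial (Fin 2) K)
    (s : MvPolynomial (Fin 2) K ≃ₐ[K] MvPolynomial (Fin 2) K)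
    (hs : ∀ j, VkFil ![(b : ℚ), (a : ℚ)] (![(b : ℚ), (a : ℚ)] j) (s (X j)))
    (hf : ∀ d, coeff d (f - t) ≠ 0 → b * d 0 + a * d 1 < e * a * b)
    (d : Fin 2 →₀ ℕ) (hd : coeff d (s f) ≠ 0) :
    coeff d (s t) ≠ 0 ∨ (d 0 < e * a ∧ d 1 < e * b) := by
  have hw : ∀ d : Fin 2 →₀ ℕ, Finsupp.weight ![(b : ℚ), (a : ℚ)] d
      = ((b * d 0 + a * d 1 : ℕ) : ℚ) := by
    intro d; rw [vk_weight]; push_cast; ring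
  have h1 : VkFil ![(b : ℚ), (a : ℚ)] ((e * a * b - 1 : ℕ) : ℚ) (f - t) := by
    intro d hd
    rw [hw]
    have := hf d hd
    exact_mod_cast (by omega : b * d 0 + a * d 1 ≤ e * a * b - 1)
  have h2 := vk_fil_hom (s : MvPolynomial (Fin 2) K →ₐ[K] MvPolynomial (Fin 2) K) hs h1
  by_cases h3 : coeff d (s t) = 0
  · right
    have h4 : coeff d (s (f - t)) ≠ 0 := by
      rw [map_sub, coeff_sub, h3, sub_zero]; exact hd
    have h5 := h2 d h4
    rw [hw] at h5
    have h6 : b * d 0 + a * d 1 ≤ e * a * b - 1 := by exact_mod_cast h5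
    have h7 : 0 < e * a * b := Nat.mul_pos (Nat.mul_pos he ha) hb
    have h8 : b * d 0 + a * d 1 < e * a * b := by omega
    constructor
    · by_contra hc
      push Not at hc
      have := Nat.mul_le_mul_left b hc
      nlinarith
    · by_contra hc
      push Not at hc
      have := Nat.mul_le_mul_left a hc
      nlinarith
  · exact Or.inl h3

theorem vk_fil_C_pow (u v : ℚ) (n : Fin 2) (c : K) (i : ℕ) :
    VkFil ![u, v] (i * ![u, v] n) (C c * X n ^ i) := by
  rw [X_pow_eq_monomial, C_mul_monomial]
  have := vkFil_monomial (k := K) (w := ![u, v]) (Finsupp.single n i) (c * 1)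
  rw [Finsupp.weight_single] at this
  simpa using this

theorem vk_descend (p : ℕ) (hp : p.Prime) [CharP K p]
    (hperf : Function.Surjective fun a : K => a ^ p)
    (G : Subgroup (MvPolynomial (Fin 2) K ≃ₐ[K] MvPolynomial (Fin 2) K))
    (hsh : ∀ F, vkShear F ∈ G) (hsw : vkSwap K ∈ G)
    (τ : MvPolynomial (Fin 2) K ≃ₐ[K] MvPolynomial (Fin 2) K)
    (hr : 0 < degreeOf 0 (τ (X 1))) (hm : 0 < degreeOf 1 (τ (X 1))) :
    ∃ s ∈ G, degreeOf 0 ((s * τ) (X 1)) + degreeOf 1 ((s * τ) (X 1)) <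
      degreeOf 0 (τ (X 1)) + degreeOf 1 (τ (X 1)) := by
  obtain ⟨a, b, e, ha, hb, he, hor, h1, h2, c, ζ, hc, hζ, hform⟩ := vk_perf p hp hperf τ hr hm
  rw [h1, h2]
  have hea : 0 < e * a := Nat.mul_pos he ha
  have heb : 0 < e * b := Nat.mul_pos he hb
  rcases hor with rfl | rfl
  · obtain ⟨s, hsG, hs0, hs1⟩ := vk_shear' G hsh hsw (Polynomial.C ζ * Polynomial.X ^ b)
    refine ⟨s, hsG, ?_⟩
    have hs0' : s (X 0) = X 0 + C ζ * X 1 ^ b := by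
      rw [hs0]; simp [algebraMap_eq]
    have hl := vk_lower 1 b e ha hb he (τ (X 1)) (C c * (X 0 ^ 1 - C ζ * X 1 ^ b) ^ e) s ?_ hform
    · have ht : s (C c * (X 0 ^ 1 - C ζ * X 1 ^ b) ^ e) = C c * (X 0 ^ e * X 1 ^ 0) := by
        simp [hs0', hs1, vk_map_C]
      rw [ht, ← vkd_monomial] at hl
      simp only [coeff_monomial] at hl
      rw [AlgEquiv.mul_apply]
      have g0 : degreeOf 0 (s (τ (X 1))) ≤ e * 1 := by
        rw [degreeOf_le_iff]
        intro d hd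
        rcases hl d (mem_support_iff.1 hd) with h | h
        · split_ifs at h with h'
          · rw [← h']; simp
          · exact absurd rfl h
        · exact h.1.le
      have g1 : degreeOf 1 (s (τ (X 1))) < e * b := by
        rw [degreeOf_lt_iff heb]
        intro d hd
        rcases hl d (mem_support_iff.1 hd) with h | h
        · split_ifs at h with h'
          · rw [← h']; simpa using heb
          · exact absurd rfl h
        · exact h.2
      omega
    · intro j
      fin_cases j
      · simp only [Fin.zero_eta, hs0']
        apply VkFil.add
        · have := vk_fil_C_pow (b : ℚ) ((1 : ℕ) : ℚ) 0 (1 : K) 1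
          simpa using this
        · have := vk_fil_C_pow (b : ℚ) ((1 : ℕ) : ℚ) 1 ζ b
          simpa using this
      · simp only [Fin.mk_one, hs1]
        have := vk_fil_C_pow (b : ℚ) ((1 : ℕ) : ℚ) 1 (1 : K) 1
        simpa using this
  · refine ⟨vkShear (Polynomial.C ζ⁻¹ * Polynomial.X ^ a), hsh _, ?_⟩
    set s := vkShear (Polynomial.C ζ⁻¹ * Polynomial.X ^ a) with hs
    have hs0 : s (X 0) = X 0 := vkShear_0 _
    have hs1 : s (X 1) = X 1 + C ζ⁻¹ * X 0 ^ a := by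
      rw [hs, vkShear_1]; simp [algebraMap_eq]
    have hl := vk_lower a 1 e ha hb he (τ (X 1)) (C c * (X 0 ^ a - C ζ * X 1 ^ 1) ^ e) s ?_ hform
    · have ht : s (C c * (X 0 ^ a - C ζ * X 1 ^ 1) ^ e) =
          C (c * (-ζ) ^ e) * (X 0 ^ 0 * X 1 ^ e) := by
        have : C ζ * C ζ⁻¹ = (1 : MvPolynomial (Fin 2) K) := by
          rw [← C_mul, mul_inv_cancel₀ hζ, C_1]
        have h3 : (X 0 ^ a - C ζ * (X 1 + C ζ⁻¹ * X 0 ^ a) : MvPolynomial (Fin 2) K)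
          = - C ζ * X 1 := by
          linear_combination (- X 0 ^ a) * this
        simp only [map_mul, map_pow, map_sub, hs0, hs1, vk_map_C, pow_one, h3, mul_pow, C_neg]
        ring
      rw [ht, ← vkd_monomial] at hl
      simp only [coeff_monomial] at hl
      rw [AlgEquiv.mul_apply]
      have g0 : degreeOf 0 (s (τ (X 1))) < e * a := by
        rw [degreeOf_lt_iff hea]
        intro d hd
        rcases hl d (mem_support_iff.1 hd) with h | h
        · split_ifs at h with h'
          · rw [← h']; simpa using hea
          · exact absurd rfl h
        · exact h.1
      have g1 : degreeOf 1 (s (τ (X 1))) ≤ e * 1 := by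
        rw [degreeOf_le_iff]
        intro d hd
        rcases hl d (mem_support_iff.1 hd) with h | h
        · split_ifs at h with h'
          · rw [← h']; simp
          · exact absurd rfl h
        · exact h.2.le
      omega
    · intro j
      fin_cases j
      · simp only [Fin.zero_eta, hs0]
        have := vk_fil_C_pow ((1 : ℕ) : ℚ) (a : ℚ) 0 (1 : K) 1
        simpa using this
      · simp only [Fin.mk_one, hs1]
        apply VkFil.add
        · have := vk_fil_C_pow ((1 : ℕ) : ℚ) (a : ℚ) 1 (1 : K) 1
          simpa using this
        · have := vk_fil_C_pow ((1 : ℕ) : ℚ) (a : ℚ) 0 ζ⁻¹ a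
          simpa using this

end vkgrp

section vkbase
open MvPolynomial
variable {K : Type*} [Field K]

theorem vk_comp_one {R : Type*} [CommRing R] [IsDomain R] (P Q : Polynomial R)
    (h : P.comp Q = Polynomial.X) : ∃ u v : R, IsUnit u ∧
      P = Polynomial.C u * Polynomial.X + Polynomial.C v := by
  have h1 := congrArg Polynomial.natDegree h
  rw [Polynomial.natDegree_comp, Polynomial.natDegree_X] at h1
  have h2 : P.natDegree = 1 := Nat.eq_one_of_mul_eq_one_right h1
  have h3 : Q.natDegree = 1 := Nat.eq_one_of_mul_eq_one_left h1
  have h4 := congrArg Polynomial.leadingCoeff h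
  rw [Polynomial.leadingCoeff_comp (by omega), Polynomial.leadingCoeff_X, h2, pow_one] at h4
  refine ⟨P.coeff 1, P.coeff 0, ?_, ?_⟩
  · have : P.leadingCoeff = P.coeff 1 := by rw [Polynomial.leadingCoeff, h2]
    rw [← this]
    exact IsUnit.of_mul_eq_one _ h4
  · exact Polynomial.eq_X_add_C_of_natDegree_le_one h2.le

theorem vk_base1 (τ : MvPolynomial (Fin 2) K ≃ₐ[K] MvPolynomial (Fin 2) K) (P : Polynomial K)
    (hP : τ (X 1) = Polynomial.aeval (X 1) P) :
    ∃ (α : Kˣ) (β : K), τ (X 1) = C (α : K) * X 1 + C β := by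
  have h1 : (X 1 : MvPolynomial (Fin 2) K) = Polynomial.aeval (τ.symm (X 1)) P := by
    have := congrArg τ.symm hP
    rw [AlgEquiv.symm_apply_apply] at this
    refine this.trans ?_
    exact vk_aeval_aeval (τ.symm : MvPolynomial (Fin 2) K →ₐ[K] MvPolynomial (Fin 2) K) _ _
  let ev : MvPolynomial (Fin 2) K →ₐ[K] Polynomial K := aeval ![0, Polynomial.X]
  have h2 := congrArg ev h1
  rw [vk_aeval_aeval] at h2
  have h3 : ev (X 1) = Polynomial.X := by simp [ev]
  rw [h3] at h2
  have h4 : P.comp (ev (τ.symm (X 1))) = Polynomial.X := by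
    rw [h2, Polynomial.comp, Polynomial.aeval_def]; rfl
  obtain ⟨u, v, hu, hP'⟩ := vk_comp_one _ _ h4
  obtain ⟨α, rfl⟩ := hu
  refine ⟨α, v, ?_⟩
  rw [hP, hP']
  simp [algebraMap_eq]

theorem vk_base2_aux {R : Type*} [CommRing R] [Algebra K R]
    (ε : MvPolynomial (Fin 2) K ≃ₐ[K] Polynomial R) (x : R)
    (e0 : ε (X 0) = Polynomial.X) (e1 : ε (X 1) = Polynomial.C x)
    (τ : MvPolynomial (Fin 2) K ≃ₐ[K] MvPolynomial (Fin 2) K)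
    (h1 : τ (X 1) = X 1) (h : MvPolynomial (Fin 2) K) :
    ε (τ h) = (ε h).comp (ε (τ (X 0))) := by
  have eC : ∀ c, ε (C c) = Polynomial.C (algebraMap K R c) := fun c => ε.commutes c
  induction h using MvPolynomial.induction_on with
  | C c => rw [vk_map_C, eC, Polynomial.C_comp]
  | add p q hp hq => rw [map_add, map_add, hp, hq, map_add, Polynomial.add_comp]
  | mul_X p n hp =>
    have : ∀ n : Fin 2, ε (τ (X n)) = (ε (X n)).comp (ε (τ (X 0))) := by
      rw [Fin.forall_fin_two]
      exact ⟨by rw [e0, Polynomial.X_comp], by rw [h1, e1, Polynomial.C_comp]⟩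
    rw [map_mul, map_mul, hp, map_mul, Polynomial.mul_comp, this n]

theorem vk_base2 (τ : MvPolynomial (Fin 2) K ≃ₐ[K] MvPolynomial (Fin 2) K)
    (h1 : τ (X 1) = X 1) :
    ∃ (α : Kˣ) (F : Polynomial K), τ (X 0) = C (α : K) * X 0 + Polynomial.aeval (X 1) F := by
  obtain ⟨ε, hε⟩ : ∃ ε : MvPolynomial (Fin 2) K ≃ₐ[K] Polynomial (MvPolynomial (Fin 1) K),
    ε = finSuccEquiv K 1 := ⟨_, rfl⟩
  have e0 : ε (X 0) = Polynomial.X := hε ▸ finSuccEquiv_X_zero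
  have e1 : ε (X 1) = Polynomial.C (X 0) := hε ▸ finSuccEquiv_X_succ (j := (0 : Fin 1))
  have eC : ∀ c, ε (C c) = Polynomial.C (C c) := fun c => ε.commutes c
  have h1s : τ.symm (X 1) = X 1 := by rw [AlgEquiv.symm_apply_eq, h1]
  have key' := vk_base2_aux ε _ e0 e1 τ.symm h1s
  have h2 : (ε (τ (X 0))).comp (ε (τ.symm (X 0))) = Polynomial.X := by
    rw [← key', AlgEquiv.symm_apply_apply, e0]
  obtain ⟨u, v, hu, hP⟩ := vk_comp_one _ _ h2
  obtain ⟨α, hα, rfl⟩ := (isUnit_iff_eq_C_of_isReduced).1 hu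
  obtain ⟨α, rfl⟩ := hα
  have hdeg : degreeOf (1 - 1) (ε.symm (Polynomial.C v)) = 0 := by
    rw [sub_self, ← natDegree_finSuccEquiv]
    rw [← hε]
    rw [AlgEquiv.apply_symm_apply, Polynomial.natDegree_C]
  obtain ⟨F, hF⟩ := vk_range 1 _ hdeg
  refine ⟨α, F, ?_⟩
  apply ε.injective
  rw [hP, map_add, map_mul, eC, e0, ← hF, AlgEquiv.apply_symm_apply]

/-- The theorem of van der Kulk over a perfect field. -/
theorem vk_vdk (p : ℕ) (hp : p.Prime) [CharP K p]
    (hperf : Function.Surjective fun a : K => a ^ p)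
    (G : Subgroup (MvPolynomial (Fin 2) K ≃ₐ[K] MvPolynomial (Fin 2) K))
    (hsh : ∀ F, vkShear F ∈ G) (hsw : vkSwap K ∈ G) (hdg : ∀ α : Kˣ, vkDg α α⁻¹ ∈ G)
    (τ : MvPolynomial (Fin 2) K ≃ₐ[K] MvPolynomial (Fin 2) K) :
    ∃ s ∈ G, ∃ c : Kˣ, s * τ = vkDg c 1 := by
  obtain ⟨N, hN⟩ : ∃ N, N = degreeOf 0 (τ (X 1)) + degreeOf 1 (τ (X 1)) := ⟨_, rfl⟩
  induction N using Nat.strong_induction_on generalizing τ with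
  | _ N ih =>
  have red : ∀ s ∈ G, (∃ s' ∈ G, ∃ c : Kˣ, s' * (s * τ) = vkDg c 1) →
      ∃ s ∈ G, ∃ c : Kˣ, s * τ = vkDg c 1 := by
    rintro s hs ⟨s', hs', c, hc⟩
    exact ⟨s' * s, G.mul_mem hs' hs, c, by rw [mul_assoc, hc]⟩
  by_cases hpos : 0 < degreeOf 0 (τ (X 1)) ∧ 0 < degreeOf 1 (τ (X 1))
  · obtain ⟨s, hs, hlt⟩ := vk_descend p hp hperf G hsh hsw τ hpos.1 hpos.2
    exact red s hs (ih _ (hN ▸ hlt) (s * τ) rfl)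
  clear ih hN
  -- step 3
  have st3 : ∀ τ : MvPolynomial (Fin 2) K ≃ₐ[K] MvPolynomial (Fin 2) K, τ (X 1) = X 1 →
      ∃ s ∈ G, ∃ c : Kˣ, s * τ = vkDg c 1 := by
    intro τ h1
    obtain ⟨α, F, hF⟩ := vk_base2 τ h1
    obtain ⟨s, hs, hs0, hs1⟩ := vk_shear' G hsh hsw (Polynomial.C (-((α⁻¹ : Kˣ) : K)) * F)
    refine ⟨s, hs, α, vkAut_ext ?_ ?_⟩
    · rw [AlgEquiv.mul_apply, hF, map_add, map_mul, vk_map_C, hs0, vkDg_0]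
      have h3 : s (Polynomial.aeval (X 1) F) = Polynomial.aeval (X 1) F := by
        have := vk_aeval_aeval (s : MvPolynomial (Fin 2) K →ₐ[K] MvPolynomial (Fin 2) K) (X 1) F
        simp only [AlgEquiv.coe_toAlgHom, hs1] at this
        exact this
      have h4 : C (α : K) * C ((α⁻¹ : Kˣ) : K) = (1 : MvPolynomial (Fin 2) K) := by
        rw [← C_mul, Units.mul_inv, C_1]
      rw [h3, map_mul, Polynomial.aeval_C, algebraMap_eq, C_neg]
      linear_combination (-Polynomial.aeval (X 1) F) * h4
    · rw [AlgEquiv.mul_apply, h1, hs1, vkDg_1]; simp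
  have st2 : ∀ τ : MvPolynomial (Fin 2) K ≃ₐ[K] MvPolynomial (Fin 2) K, ∀ P : Polynomial K,
      τ (X 1) = Polynomial.aeval (X 1) P → ∃ s ∈ G, ∃ c : Kˣ, s * τ = vkDg c 1 := by
    intro τ P hP
    obtain ⟨α, β, hα⟩ := vk_base1 τ P hP
    obtain ⟨s, hs, c, hc⟩ := st3
      (vkDg α α⁻¹ * vkShear (Polynomial.C (-(((α⁻¹ : Kˣ) : K) * β))) * τ) (by
      rw [AlgEquiv.mul_apply, hα, map_add, map_mul, vk_map_C, vk_map_C, AlgEquiv.mul_apply,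
        vkShear_1, map_add, vkDg_1, Polynomial.aeval_C, algebraMap_eq, vk_map_C]
      have h4 : C (α : K) * C ((α⁻¹ : Kˣ) : K) = (1 : MvPolynomial (Fin 2) K) := by
        rw [← C_mul, Units.mul_inv, C_1]
      rw [C_neg, C_mul]
      linear_combination (X 1 - C β) * h4)
    exact ⟨s * (vkDg α α⁻¹ * vkShear (Polynomial.C (-(((α⁻¹ : Kˣ) : K) * β)))),
      G.mul_mem hs (G.mul_mem (hdg _) (hsh _)), c, by rw [← hc, mul_assoc]⟩
  by_cases h0 : degreeOf 0 (τ (X 1)) = 0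
  · obtain ⟨P, hP⟩ := vk_range 1 (τ (X 1)) (by simpa using h0)
    exact st2 τ P hP
  · have h1 : degreeOf 1 (τ (X 1)) = 0 := by omega
    obtain ⟨P, hP⟩ := vk_range 0 (τ (X 1)) (by simpa using h1)
    apply red _ hsw
    apply st2 _ P
    rw [AlgEquiv.mul_apply, hP]
    have := vk_aeval_aeval (vkSwap K : MvPolynomial (Fin 2) K →ₐ[K] MvPolynomial (Fin 2) K) (X 0) P
    simp only [AlgEquiv.coe_toAlgHom, vkSwap_0] at this
    exact this

end vkbase

section vkjac
open MvPolynomial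
variable {K : Type*} [Field K]

theorem vk_chain (s : MvPolynomial (Fin 2) K ≃ₐ[K] MvPolynomial (Fin 2) K) (j : Fin 2)
    (h : MvPolynomial (Fin 2) K) :
    pderiv j (s h) = s (pderiv 0 h) * pderiv j (s (X 0)) + s (pderiv 1 h) * pderiv j (s (X 1)) := by
  induction h using MvPolynomial.induction_on with
  | C c => simp [vk_map_C]
  | add p q hp hq => simp only [map_add, hp, hq]; ring
  | mul_X p n hp =>
    simp only [map_mul, Derivation.leibniz, smul_eq_mul, map_add, hp]
    have : ∀ n : Fin 2, pderiv j (s (X n)) = s (pderiv 0 (X n)) * pderiv j (s (X 0)) +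
        s (pderiv 1 (X n)) * pderiv j (s (X 1)) := by
      rw [Fin.forall_fin_two]
      constructor
      · rw [pderiv_X_self, pderiv_X_of_ne (by decide : (0 : Fin 2) ≠ 1)]; simp
      · rw [pderiv_X_self, pderiv_X_of_ne (by decide : (1 : Fin 2) ≠ 0)]; simp
    rw [this n]
    ring

theorem vk_jac_mul (s t : MvPolynomial (Fin 2) K ≃ₐ[K] MvPolynomial (Fin 2) K) :
    jacP K (s * t) = jacP K s * s (jacP K t) := by
  simp only [jacP, AlgEquiv.mul_apply]
  rw [vk_chain s 0 (t (X 0)), vk_chain s 1 (t (X 0)), vk_chain s 0 (t (X 1)),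
    vk_chain s 1 (t (X 1)), map_sub, map_mul, map_mul]
  ring

theorem vk_jac_one : jacP K 1 = 1 := by
  simp [jacP, pderiv_X_self, pderiv_X_of_ne]

theorem vk_jac_inv (s : MvPolynomial (Fin 2) K ≃ₐ[K] MvPolynomial (Fin 2) K)
    (hs : jacP K s = 1) : jacP K s⁻¹ = 1 := by
  have := vk_jac_mul s⁻¹ s
  rw [inv_mul_cancel, vk_jac_one, hs, map_one, mul_one] at this
  exact this.symm

theorem vk_jac_shear (F : Polynomial K) : jacP K (vkShear F) = 1 := by
  simp only [jacP, vkShear_0, vkShear_1]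
  have h : pderiv 1 (Polynomial.aeval (X 0 : MvPolynomial (Fin 2) K) F) = 0 := by
    induction F using Polynomial.induction_on' with
    | add p q hp hq => simp [hp, hq]
    | monomial n a =>
      rw [Polynomial.aeval_monomial, algebraMap_eq, pderiv_C_mul, Derivation.leibniz_pow,
        pderiv_X_of_ne (by decide : (0 : Fin 2) ≠ 1)]
      simp
  rw [map_add, h]
  simp [pderiv_X_self, pderiv_X_of_ne]

theorem vk_jac_swap : jacP K (vkSwap K) = 1 := by
  simp [jacP, vkSwap_0, vkSwap_1, pderiv_X_self, pderiv_X_of_ne]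

theorem vk_jac_dg (α β : Kˣ) : jacP K (vkDg α β) = C ((α : K) * β) := by
  simp [jacP, vkDg_0, vkDg_1, pderiv_X_self, pderiv_X_of_ne, pderiv_C_mul]

theorem vkShear_add (F F' : Polynomial K) : vkShear F * vkShear F' = vkShear (F + F') := by
  apply vkAut_ext
  · rw [AlgEquiv.mul_apply, vkShear_0, vkShear_0, vkShear_0]
  · rw [AlgEquiv.mul_apply, vkShear_1, map_add, vkShear_1, vkShear_1, map_add]
    have := vk_aeval_aeval (vkShear F : MvPolynomial (Fin 2) K →ₐ[K] MvPolynomial (Fin 2) K) (X 0) F'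
    simp only [AlgEquiv.coe_toAlgHom, vkShear_0] at this
    rw [this]; ring

theorem vkShear_zero : vkShear (0 : Polynomial K) = 1 := by
  apply vkAut_ext
  · rw [vkShear_0]; rfl
  · rw [vkShear_1]; simp

/-- Automorphisms fixing `X 0`. -/
theorem vk_fix0 (τ : MvPolynomial (Fin 2) K ≃ₐ[K] MvPolynomial (Fin 2) K)
    (h0 : τ (X 0) = X 0) :
    ∃ (α : Kˣ) (F : Polynomial K), τ (X 1) = C (α : K) * X 1 + Polynomial.aeval (X 0) F := by
  obtain ⟨α, F, hF⟩ := vk_base2 (vkSwap K * τ * (vkSwap K)⁻¹) (by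
    simp only [AlgEquiv.mul_apply, vkSwap_inv_1, h0, vkSwap_0])
  simp only [AlgEquiv.mul_apply, vkSwap_inv_0] at hF
  refine ⟨α, -F, ?_⟩
  apply (vkSwap K).injective
  rw [map_neg, map_neg] at hF
  rw [map_add, map_mul, vk_map_C, vkSwap_1]
  have := vk_aeval_aeval (vkSwap K : MvPolynomial (Fin 2) K →ₐ[K] MvPolynomial (Fin 2) K) (X 0) (-F)
  simp only [AlgEquiv.coe_toAlgHom, vkSwap_0] at this
  rw [this, map_neg]
  linear_combination -hF

end vkjac

section vkweyl
variable {K : Type*} [Field K]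

theorem wRel : wD K * wX K = wX K * wD K + 1 := by
  have := RingQuot.mkAlgHom_rel K (WeylRel.rel (K := K))
  rw [map_mul, map_add, map_mul, map_one] at this
  exact this

/-- Universal property of the Weyl algebra. -/
def wLift {A : Type*} [Ring A] [Algebra K A] (a b : A) (h : b * a = a * b + 1) :
    Weyl K →ₐ[K] A :=
  RingQuot.liftAlgHom K ⟨FreeAlgebra.lift K ![a, b], by
    rintro _ _ ⟨⟩
    simpa using h⟩

theorem wLift_X {A : Type*} [Ring A] [Algebra K A] (a b : A) (h : b * a = a * b + 1) :
    wLift (K := K) a b h (wX K) = a := by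
  rw [wLift, wX, RingQuot.liftAlgHom_mkAlgHom_apply]; simp

theorem wLift_D {A : Type*} [Ring A] [Algebra K A] (a b : A) (h : b * a = a * b + 1) :
    wLift (K := K) a b h (wD K) = b := by
  rw [wLift, wD, RingQuot.liftAlgHom_mkAlgHom_apply]; simp

theorem wExt {A : Type*} [Ring A] [Algebra K A] {f g : Weyl K →ₐ[K] A}
    (h0 : f (wX K) = g (wX K)) (h1 : f (wD K) = g (wD K)) : f = g := by
  apply RingQuot.ringQuot_ext'
  apply FreeAlgebra.hom_ext
  funext n
  fin_cases n
  · exact h0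
  · exact h1

theorem wInd {P : Weyl K → Prop} (hC : ∀ c, P (algebraMap K _ c)) (h0 : P (wX K)) (h1 : P (wD K))
    (hadd : ∀ a b, P a → P b → P (a + b)) (hmul : ∀ a b, P a → P b → P (a * b)) (u) : P u := by
  obtain ⟨v, rfl⟩ := RingQuot.mkAlgHom_surjective K (WeylRel K) u
  induction v using FreeAlgebra.induction with
  | grade0 c => rw [AlgHom.commutes]; exact hC c
  | grade1 n =>
    fin_cases n
    · exact h0
    · exact h1
  | mul a b ha hb => rw [map_mul]; exact hmul _ _ ha hb
  | add a b ha hb => rw [map_add]; exact hadd _ _ ha hb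

/-- polynomials in `x`. -/
def wI : Polynomial K →ₐ[K] Weyl K := Polynomial.aeval (wX K)

theorem wI_X : wI (Polynomial.X) = wX K := by simp [wI]

theorem wComm (g : Polynomial K) : wD K * wI g = wI g * wD K + wI (Polynomial.derivative g) := by
  induction g using Polynomial.induction_on with
  | C c =>
    have : wI (Polynomial.C c) = algebraMap K (Weyl K) c := by simp [wI]
    rw [this, Polynomial.derivative_C, map_zero, add_zero, Algebra.commutes]
  | add p q hp hq => simp only [map_add, mul_add, add_mul, hp, hq]; abel
  | monomial n c h =>
    rw [pow_succ, ← mul_assoc]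
    generalize Polynomial.C c * Polynomial.X ^ n = g at h ⊢
    rw [map_mul, wI_X, ← mul_assoc, h, add_mul, mul_assoc (wI _), wRel,
      Polynomial.derivative_mul, Polynomial.derivative_X, mul_one, map_add, map_mul, wI_X,
      mul_add, mul_one, mul_assoc]
    abel

/-- normal form -/
theorem wNF (u : Weyl K) : ∃ h : Polynomial (Polynomial K),
    u = h.eval₂ (wI : Polynomial K →ₐ[K] Weyl K).toRingHom (wD K) := by
  suffices H : ∀ h : Polynomial (Polynomial K), ∃ h' : Polynomial (Polynomial K),
      u * h.eval₂ (wI : Polynomial K →ₐ[K] Weyl K).toRingHom (wD K) =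
        h'.eval₂ (wI : Polynomial K →ₐ[K] Weyl K).toRingHom (wD K) by
    obtain ⟨h', hh⟩ := H 1
    rw [Polynomial.eval₂_one, mul_one] at hh
    exact ⟨h', hh⟩
  have hpoly : ∀ (g : Polynomial K) (h : Polynomial (Polynomial K)),
      ∃ h' : Polynomial (Polynomial K),
      wI g * h.eval₂ (wI : Polynomial K →ₐ[K] Weyl K).toRingHom (wD K) =
        h'.eval₂ (wI : Polynomial K →ₐ[K] Weyl K).toRingHom (wD K) := by
    intro g h
    induction h using Polynomial.induction_on' with
    | add p q hp hq =>
      obtain ⟨p', hp⟩ := hp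
      obtain ⟨q', hq⟩ := hq
      exact ⟨p' + q', by rw [Polynomial.eval₂_add, mul_add, hp, hq, Polynomial.eval₂_add]⟩
    | monomial n a =>
      refine ⟨Polynomial.monomial n (g * a), ?_⟩
      rw [Polynomial.eval₂_monomial, Polynomial.eval₂_monomial, ← mul_assoc, map_mul]
      rfl
  induction u using wInd with
  | hC c =>
    intro h
    have := hpoly (Polynomial.C c) h
    rwa [show wI (Polynomial.C c) = algebraMap K (Weyl K) c by simp [wI]] at this
  | h0 => intro h; have := hpoly Polynomial.X h; rwa [wI_X] at this
  | h1 =>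
    intro h
    induction h using Polynomial.induction_on' with
    | add p q hp hq =>
      obtain ⟨p', hp⟩ := hp
      obtain ⟨q', hq⟩ := hq
      exact ⟨p' + q', by rw [Polynomial.eval₂_add, mul_add, hp, hq, Polynomial.eval₂_add]⟩
    | monomial n a =>
      refine ⟨Polynomial.monomial (n + 1) a + Polynomial.monomial n (Polynomial.derivative a), ?_⟩
      rw [Polynomial.eval₂_add, Polynomial.eval₂_monomial, Polynomial.eval₂_monomial,
        Polynomial.eval₂_monomial, ← mul_assoc]
      change wD K * wI a * _ = wI a * _ + wI _ * _
      rw [wComm, add_mul, mul_assoc, ← pow_succ']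
  | hadd a b ha hb =>
    intro h
    obtain ⟨h1, ha⟩ := ha h
    obtain ⟨h2, hb⟩ := hb h
    exact ⟨h1 + h2, by rw [add_mul, ha, hb, Polynomial.eval₂_add]⟩
  | hmul a b ha hb =>
    intro h
    obtain ⟨h1, hb⟩ := hb h
    obtain ⟨h2, ha⟩ := ha h1
    exact ⟨h2, by rw [mul_assoc, hb, ha]⟩

/-- the operator `x` -/
def wOpX : Module.End K (ℕ → Polynomial K) where
  toFun h := fun n => Polynomial.X * h n
  map_add' h h' := by funext n; simp [mul_add]
  map_smul' c h := by funext n; simp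

/-- the operator `∂` -/
def wOpD : Module.End K (ℕ → Polynomial K) where
  toFun h := fun n => Polynomial.derivative (h n) + (if n = 0 then 0 else h (n - 1))
  map_add' h h' := by
    funext n
    by_cases hn : n = 0
    · simp [hn]
    · simp [hn]; abel
  map_smul' c h := by
    funext n
    by_cases hn : n = 0 <;> simp [hn]

/-- A faithful representation of the Weyl algebra. -/
def wRho : Weyl K →ₐ[K] Module.End K (ℕ → Polynomial K) :=
  wLift wOpX wOpD (by
    apply LinearMap.ext
    intro h
    funext n
    by_cases hn : n = 0
    · simp [wOpX, wOpD, hn]; ring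
    · simp [wOpX, wOpD, hn]; ring)

theorem wRho_X (h : ℕ → Polynomial K) (n : ℕ) : wRho (wX K) h n = Polynomial.X * h n := by
  rw [wRho, wLift_X]; rfl

theorem wRho_D (h : ℕ → Polynomial K) (n : ℕ) :
    wRho (wD K) h n = Polynomial.derivative (h n) + (if n = 0 then 0 else h (n - 1)) := by
  rw [wRho, wLift_D]; rfl

theorem wRho_I (g : Polynomial K) (h : ℕ → Polynomial K) (n : ℕ) :
    wRho (wI g) h n = g * h n := by
  induction g using Polynomial.induction_on generalizing h with
  | C c =>
    have : wI (Polynomial.C c) = algebraMap K (Weyl K) c := by simp [wI]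
    rw [this, AlgHom.commutes, Module.algebraMap_end_apply, Pi.smul_apply, Polynomial.smul_eq_C_mul]
  | add p q hp hq => rw [map_add, map_add, LinearMap.add_apply, Pi.add_apply, hp, hq, add_mul]
  | monomial m c hm =>
    rw [pow_succ, ← mul_assoc, map_mul, wI_X, map_mul, Module.End.mul_apply, hm, wRho_X]; ring

theorem wRho_Dpow (j : ℕ) (f : ℕ → Polynomial K) (m : ℕ) (hf : ∀ i, m < i → f i = 0) :
    (∀ i, m + j < i → wRho (wD K ^ j) f i = 0) ∧ wRho (wD K ^ j) f (m + j) = f m := by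
  induction j with
  | zero => simpa using hf
  | succ j ih =>
    obtain ⟨h1, h2⟩ := ih
    constructor
    · intro i hi
      rw [pow_succ', map_mul, Module.End.mul_apply, wRho_D, h1 i (by omega),
        if_neg (by omega), h1 (i - 1) (by omega)]
      simp
    · rw [pow_succ', map_mul, Module.End.mul_apply, wRho_D, h1 _ (by omega),
        if_neg (by omega), show m + (j + 1) - 1 = m + j by omega, h2]
      simp

/-- `u` has order `≤ n` with symbol `L`. -/
def WSym (u : Weyl K) (n : ℕ) (L : Polynomial K) : Prop :=
  ∀ (f : ℕ → Polynomial K) (m : ℕ), (∀ i, m < i → f i = 0) →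
    (∀ i, m + n < i → wRho u f i = 0) ∧ wRho u f (m + n) = L * f m

theorem wSym_mul {u v : Weyl K} {n m : ℕ} {L M : Polynomial K} (hu : WSym u n L)
    (hv : WSym v m M) : WSym (u * v) (m + n) (L * M) := by
  intro f k hf
  obtain ⟨h1, h2⟩ := hv f k hf
  obtain ⟨h3, h4⟩ := hu _ _ h1
  rw [map_mul]
  refine ⟨fun i hi => h3 i (by omega), ?_⟩
  rw [Module.End.mul_apply, ← add_assoc, h4, h2, mul_assoc]

theorem wSym_pow {u : Weyl K} {n : ℕ} {L : Polynomial K} (hu : WSym u n L) (k : ℕ) :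
    WSym (u ^ k) (k * n) (L ^ k) := by
  induction k with
  | zero =>
    intro f m hf
    simpa using hf
  | succ k ih =>
    have := wSym_mul ih hu
    rw [← pow_succ, ← pow_succ] at this
    rwa [show (k + 1) * n = n + k * n by ring]

theorem wSym_NF (h : Polynomial (Polynomial K)) :
    WSym (h.eval₂ (wI : Polynomial K →ₐ[K] Weyl K).toRingHom (wD K)) h.natDegree
      h.leadingCoeff := by
  intro f m hf
  have key : ∀ i, wRho (h.eval₂ (wI : Polynomial K →ₐ[K] Weyl K).toRingHom (wD K)) f i =
      ∑ j ∈ Finset.range (h.natDegree + 1), h.coeff j * wRho (wD K ^ j) f i := by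
    intro i
    rw [Polynomial.eval₂_eq_sum_range, map_sum, LinearMap.sum_apply, Finset.sum_apply]
    apply Finset.sum_congr rfl
    intro j _
    rw [map_mul, Module.End.mul_apply]
    exact wRho_I _ _ _
  constructor
  · intro i hi
    rw [key]
    apply Finset.sum_eq_zero
    intro j hj
    rw [(wRho_Dpow j f m hf).1 i (by simp at hj; omega), mul_zero]
  · rw [key, Finset.sum_range_succ, Finset.sum_eq_zero, zero_add, (wRho_Dpow _ f m hf).2]
    · rfl
    · intro j hj
      rw [(wRho_Dpow j f m hf).1 _ (by simp at hj; omega), mul_zero]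

/-- the vacuum vector -/
def wE (K : Type*) [Field K] : ℕ → Polynomial K := fun n => if n = 0 then 1 else 0

theorem wE_zero : wE K 0 = 1 := rfl
theorem wE_pos (i : ℕ) (h : 0 < i) : wE K i = 0 := if_neg (by omega)

theorem wI_inj : Function.Injective (wI : Polynomial K →ₐ[K] Weyl K) := by
  intro g g' h
  have h1 := wRho_I g (wE K) 0
  rw [h, wRho_I, wE_zero, mul_one, mul_one] at h1
  exact h1.symm

/-- key rigidity -/
theorem wRoot (p : ℕ) (hp : p.Prime) [CharP K p] (u : Weyl K) (c : K)
    (h : u ^ p = c ^ p • wX K ^ p) : u = c • wX K := by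
  have : Fact p.Prime := ⟨hp⟩
  have hr : c ^ p • wX K ^ p = wI ((Polynomial.C c * Polynomial.X) ^ p) := by
    rw [mul_pow, ← Polynomial.C_pow, ← Polynomial.smul_eq_C_mul, map_smul, map_pow, wI_X]
  rw [hr] at h
  obtain ⟨g, hg⟩ := wNF u
  have h1 := wSym_pow (wSym_NF g) p (wE K) 0 wE_pos
  rw [← hg, h] at h1
  have hn : g.natDegree = 0 := by
    by_contra hne
    have hpos : 0 < 0 + p * g.natDegree := by
      have := Nat.mul_pos hp.pos (Nat.pos_of_ne_zero hne); omega
    have h2 := h1.2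
    rw [wRho_I, wE_pos _ hpos, wE_zero, mul_zero, mul_one] at h2
    have h3 : g.leadingCoeff = 0 := eq_zero_of_pow_eq_zero h2.symm
    rw [Polynomial.leadingCoeff_eq_zero] at h3
    rw [h3] at hne; simp at hne
  have hu : u = wI (g.coeff 0) := by
    rw [hg, Polynomial.eq_C_of_natDegree_eq_zero hn, Polynomial.eval₂_C, Polynomial.coeff_C_zero]
    rfl
  rw [hu, ← map_pow] at h
  have h2 := wI_inj h
  have h3 : g.coeff 0 = Polynomial.C c * Polynomial.X := frobenius_inj (Polynomial K) p h2
  rw [hu, h3, ← Polynomial.smul_eq_C_mul, map_smul, wI_X]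

end vkweyl

section vkfinal
variable {K : Type*} [Field K]

/-- Automorphisms of the Weyl algebra from generator images. -/
def wAut (a b a' b' : Weyl K) (h : b * a = a * b + 1) (h' : b' * a' = a' * b' + 1)
    (h1 : wLift (K := K) a b h a' = wX K) (h2 : wLift (K := K) a b h b' = wD K)
    (h3 : wLift (K := K) a' b' h' a = wX K) (h4 : wLift (K := K) a' b' h' b = wD K) :
    Weyl K ≃ₐ[K] Weyl K :=
  AlgEquiv.ofAlgHom (wLift a b h) (wLift a' b' h')
    (wExt (by rw [AlgHom.comp_apply, wLift_X, h1]; rfl)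
      (by rw [AlgHom.comp_apply, wLift_D, h2]; rfl))
    (wExt (by rw [AlgHom.comp_apply, wLift_X, h3]; rfl)
      (by rw [AlgHom.comp_apply, wLift_D, h4]; rfl))

theorem wAut_X (a b a' b' : Weyl K) (h h' h1 h2 h3 h4) :
    wAut a b a' b' h h' h1 h2 h3 h4 (wX K) = a := wLift_X a b h

theorem wAut_D (a b a' b' : Weyl K) (h h' h1 h2 h3 h4) :
    wAut a b a' b' h h' h1 h2 h3 h4 (wD K) = b := wLift_D a b h

theorem wI_map (s : Weyl K →ₐ[K] Weyl K) (hs : s (wX K) = wX K) (f : Polynomial K) :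
    s (wI f) = wI f := by
  rw [wI, ← Polynomial.aeval_algHom_apply, hs]

theorem wI_comm (f : Polynomial K) : wI f * wX K = wX K * wI f := by
  rw [← wI_X, ← map_mul, ← map_mul, mul_comm]

theorem w_shear_rel (f : Polynomial K) :
    (wD K + wI f) * wX K = wX K * (wD K + wI f) + 1 := by
  rw [add_mul, wRel, wI_comm, mul_add]; abel

theorem w_exists_shear (f : Polynomial K) : ∃ σ : Weyl K ≃ₐ[K] Weyl K,
    σ (wX K) = wX K ∧ σ (wD K) = wD K + wI f := by
  refine ⟨wAut (wX K) (wD K + wI f) (wX K) (wD K + wI (-f)) (w_shear_rel f) (w_shear_rel (-f))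
    ?_ ?_ ?_ ?_, wAut_X _ _ _ _ _ _ _ _ _ _, wAut_D _ _ _ _ _ _ _ _ _ _⟩
  · rw [wLift_X]
  · rw [map_add, wLift_D, wI_map _ (wLift_X _ _ _), map_neg]; abel
  · rw [wLift_X]
  · rw [map_add, wLift_D, wI_map _ (wLift_X _ _ _), map_neg]; abel

theorem w_exists_swap : ∃ σ : Weyl K ≃ₐ[K] Weyl K,
    σ (wX K) = wD K ∧ σ (wD K) = (-1 : K) • wX K := by
  have hn : (-1 : K) • (1 : Weyl K) + 1 = 0 := by
    calc (-1 : K) • (1 : Weyl K) + 1 = (-1 : K) • (1 : Weyl K) + (1 : K) • 1 := by rw [one_smul]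
      _ = 0 := by rw [← add_smul, neg_add_cancel, zero_smul]
  refine ⟨wAut (wD K) ((-1 : K) • wX K) ((-1 : K) • wD K) (wX K) ?_ ?_
    ?_ ?_ ?_ ?_, wAut_X _ _ _ _ _ _ _ _ _ _, wAut_D _ _ _ _ _ _ _ _ _ _⟩
  · rw [mul_smul_comm, wRel, smul_mul_assoc, smul_add, add_assoc, hn, add_zero]
  · rw [mul_smul_comm, smul_mul_assoc, wRel, smul_add, add_assoc, hn, add_zero]
  · rw [map_smul, wLift_D, smul_smul, neg_one_mul, neg_neg, one_smul]
  · rw [wLift_X]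
  · rw [wLift_D]
  · rw [map_smul, wLift_X, smul_smul, neg_one_mul, neg_neg, one_smul]

theorem w_diag_rel (α : Kˣ) : (((α⁻¹ : Kˣ) : K) • wD K) * ((α : K) • wX K) =
    ((α : K) • wX K) * (((α⁻¹ : Kˣ) : K) • wD K) + 1 := by
  rw [smul_mul_smul_comm, smul_mul_smul_comm, Units.inv_mul, Units.mul_inv, one_smul, one_smul,
    wRel]

theorem w_exists_diag (α : Kˣ) : ∃ σ : Weyl K ≃ₐ[K] Weyl K,
    σ (wX K) = (α : K) • wX K ∧ σ (wD K) = ((α⁻¹ : Kˣ) : K) • wD K := by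
  refine ⟨wAut _ _ _ _ (w_diag_rel α) (w_diag_rel α⁻¹)
    ?_ ?_ ?_ ?_, wAut_X _ _ _ _ _ _ _ _ _ _, wAut_D _ _ _ _ _ _ _ _ _ _⟩
  · rw [map_smul, wLift_X, smul_smul, Units.inv_mul, one_smul]
  · rw [map_smul, wLift_D, smul_smul, inv_inv, Units.mul_inv, one_smul]
  · rw [map_smul, wLift_X, smul_smul, Units.mul_inv, one_smul]
  · rw [map_smul, wLift_D, smul_smul, inv_inv, Units.inv_mul, one_smul]

/-- the iterates of `d/dx + f` on `1` -/
def wP (f : Polynomial K) : ℕ → Polynomial K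
  | 0 => 1
  | k + 1 => Polynomial.derivative (wP f k) + f * wP f k

theorem wP_spec (f : Polynomial K) (k : ℕ) :
    wRho ((wD K + wI f) ^ k) (wE K) 0 = wP f k := by
  induction k with
  | zero => simp [wP, wE_zero]
  | succ k ih =>
    rw [pow_succ', map_mul, Module.End.mul_apply, map_add, LinearMap.add_apply, Pi.add_apply,
      wRho_D, wRho_I, ih, if_pos rfl, add_zero, wP]

theorem wP_deg (n : ℕ) (γ : K) (k : ℕ) :
    (wP (Polynomial.monomial n γ) k).natDegree ≤ k * n ∧
      (wP (Polynomial.monomial n γ) k).coeff (k * n) = γ ^ k := by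
  induction k with
  | zero => simp [wP]
  | succ k ih =>
    obtain ⟨h1, h2⟩ := ih
    rw [wP, add_mul, one_mul]
    constructor
    · apply (Polynomial.natDegree_add_le _ _).trans
      apply max_le
      · apply (Polynomial.natDegree_derivative_le _).trans; omega
      · apply (Polynomial.natDegree_mul_le).trans
        have := Polynomial.natDegree_monomial_le (m := n) γ
        omega
    · rw [Polynomial.coeff_add, Polynomial.coeff_derivative,
        Polynomial.coeff_eq_zero_of_natDegree_lt (by omega), zero_mul, zero_add,
        Polynomial.coeff_monomial_mul, h2, pow_succ']

theorem wSym_shear (f : Polynomial K) : WSym (wD K + wI f) 1 1 := by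
  intro h m hh
  constructor
  · intro i hi
    rw [map_add, LinearMap.add_apply, Pi.add_apply, wRho_D, wRho_I, hh i (by omega),
      if_neg (by omega), hh (i - 1) (by omega)]
    simp
  · rw [map_add, LinearMap.add_apply, Pi.add_apply, wRho_D, wRho_I, hh (m + 1) (by omega),
      if_neg (by omega)]
    simp

end vkfinal

section vkres
open MvPolynomial

theorem vk_res (p : ℕ) (hp : p.Prime) (K : Type*) [Field K] [CharP K p]
    (hperf : Function.Surjective fun a : K => a ^ p)
    (ψ : MvPolynomial (Fin 2) K ≃ₐ[K] Subalgebra.center K (Weyl K))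
    (hψX : (↑(ψ (MvPolynomial.X 0)) : Weyl K) = wX K ^ p)
    (hψY : (↑(ψ (MvPolynomial.X 1)) : Weyl K) = wD K ^ p)
    (res : (Weyl K ≃ₐ[K] Weyl K) → (MvPolynomial (Fin 2) K ≃ₐ[K] MvPolynomial (Fin 2) K))
    (hres : ∀ (σ : Weyl K ≃ₐ[K] Weyl K) (f : MvPolynomial (Fin 2) K),
      (↑(ψ (res σ f)) : Weyl K) = σ (↑(ψ f) : Weyl K)) :
    (∀ σ τ, res (σ * τ) = res σ * res τ) ∧ Function.Injective res ∧
      Set.range res = {τ | jacP K τ = 1} := by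
  have : Fact p.Prime := ⟨hp⟩
  -- the embedding of the polynomial ring
  obtain ⟨Ψ, hΨ⟩ : ∃ Ψ : MvPolynomial (Fin 2) K →ₐ[K] Weyl K, ∀ f, Ψ f = ↑(ψ f) :=
    ⟨(Subalgebra.center K (Weyl K)).val.comp (ψ : _ →ₐ[K] _), fun f => rfl⟩
  have hΨinj : Function.Injective Ψ := by
    intro f g h
    rw [hΨ, hΨ] at h
    exact ψ.injective (Subtype.ext h)
  have hX : Ψ (X 0) = wX K ^ p := (hΨ _).trans hψX
  have hD : Ψ (X 1) = wD K ^ p := (hΨ _).trans hψY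
  have hr : ∀ σ f, Ψ (res σ f) = σ (Ψ f) := by
    intro σ f; rw [hΨ, hΨ, hres]
  clear hψX hψY hres hΨ
  have hmul : ∀ σ τ, res (σ * τ) = res σ * res τ := by
    intro σ τ
    apply AlgEquiv.ext
    intro f
    apply hΨinj
    rw [hr, AlgEquiv.mul_apply, AlgEquiv.mul_apply, hr, hr]
  let R : (Weyl K ≃ₐ[K] Weyl K) →* (MvPolynomial (Fin 2) K ≃ₐ[K] MvPolynomial (Fin 2) K) :=
    MonoidHom.mk' res hmul
  have hRr : ∀ σ, R σ = res σ := fun σ => rfl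
  have hC : ∀ c, Ψ (C c) = algebraMap K (Weyl K) c := fun c => Ψ.commutes c
  -- rigidity
  have hrig : ∀ σ (c : Kˣ), res σ = vkDg c 1 → c = 1 ∧ σ = 1 := by
    intro σ c hσ
    obtain ⟨γ, hγ⟩ := hperf (c : K)
    simp only at hγ
    have h0 := hr σ (X 0)
    rw [hσ, vkDg_0, map_mul, hX, hC, map_pow, ← Algebra.smul_def, ← hγ] at h0
    have h0' := wRoot p hp _ _ h0.symm
    have h1 := hr σ (X 1)
    rw [hσ, vkDg_1, Units.val_one, C_1, one_mul, hD, map_pow] at h1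
    obtain ⟨w, hwX, hwD⟩ := w_exists_swap (K := K)
    have h2 : (w.symm (σ (wD K))) ^ p = (1 : K) ^ p • wX K ^ p := by
      rw [← map_pow, ← h1, map_pow, one_pow, one_smul]
      congr 1
      rw [AlgEquiv.symm_apply_eq, hwX]
    have h3 := wRoot p hp _ _ h2
    rw [one_smul, AlgEquiv.symm_apply_eq, hwX] at h3
    have h4 := congrArg σ (wRel (K := K))
    rw [map_mul, map_add, map_mul, map_one, h0', h3, mul_smul_comm, wRel, smul_mul_assoc,
      smul_add, add_right_inj] at h4
    have hγ1 : γ = 1 := by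
      have h5 : wI (Polynomial.C γ) = wI (Polynomial.C (1 : K)) := by
        rw [wI, Polynomial.aeval_C, Polynomial.aeval_C, Algebra.algebraMap_eq_smul_one, h4, map_one]
      exact Polynomial.C_injective (wI_inj h5)
    constructor
    · ext; rw [← hγ, hγ1]; simp
    · rw [hγ1, one_smul] at h0'
      apply AlgEquiv.coe_toAlgHom_injective
      exact wExt h0' h3
  -- shears
  have hshear : ∀ (n : ℕ) (F : Polynomial K), F.degree < (n : WithBot ℕ) → ∃ σ, res σ = vkShear F := by
    intro n
    induction n with
    | zero =>
      intro F hF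
      have : F = 0 := by
        rw [Nat.cast_zero] at hF
        by_contra hne
        rw [Polynomial.degree_eq_natDegree hne] at hF
        exact absurd hF (by simp)
      exact ⟨1, by rw [this, vkShear_zero]; exact map_one R⟩
    | succ n ih =>
      intro F hF
      obtain ⟨γ, hγ⟩ := hperf (F.coeff n)
      simp only at hγ
      obtain ⟨σ, hσX, hσD⟩ := w_exists_shear (Polynomial.monomial n γ)
      have hfix : res σ (X 0) = X 0 := by
        apply hΨinj
        rw [hr, hX, map_pow, hσX]
      obtain ⟨α, F', hF'⟩ := vk_fix0 (res σ) hfix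
      have hΨF : Ψ (Polynomial.aeval (X 0) F') = wI (Polynomial.expand K p F') := by
        have h1 := Polynomial.aeval_algHom_apply Ψ (X 0) F'
        rw [← h1, hX, wI, Polynomial.expand_aeval]
      have h1 := hr σ (X 1)
      rw [hF', hD, map_pow, hσD, map_add, map_mul, hC, hD, hΨF, ← Algebra.smul_def] at h1
      have hs := wSym_pow (wSym_shear (Polynomial.monomial n γ)) p (wE K) 0 wE_pos
      have hsp := wP_spec (Polynomial.monomial n γ) p
      rw [← h1] at hs hsp
      have hd := wRho_Dpow p (wE K) 0 wE_pos
      have hd0 : ∀ k, 0 < k → wRho (wD K ^ k) (wE K) 0 = 0 := by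
        intro k hk
        have : ∀ k, (wRho (wD K ^ (k + 1)) (wE K) 0 = 0) ∧
            Polynomial.derivative (wRho (wD K ^ k) (wE K) 0) = 0 := by
          intro k
          induction k with
          | zero => simp [wRho_D, wE_zero]
          | succ k ih =>
            have h5 : wRho (wD K ^ (k + 1 + 1)) (wE K) 0 =
              Polynomial.derivative (wRho (wD K ^ (k + 1)) (wE K) 0) := by
              rw [pow_succ' _ (k + 1), map_mul, Module.End.mul_apply, wRho_D, if_pos rfl, add_zero]
            rw [h5, ih.1]; simp
        obtain ⟨j, rfl⟩ := Nat.exists_eq_succ_of_ne_zero hk.ne'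
        exact (this j).1
      have hα : (α : K) = 1 := by
        have h2 := hs.2
        rw [map_add, LinearMap.add_apply, Pi.add_apply, wRho_I, wE_pos _ (by simp [hp.pos]),
          map_smul, LinearMap.smul_apply, Pi.smul_apply, mul_zero, add_zero, mul_one, hd.2,
          wE_zero, one_pow, mul_one, Polynomial.smul_eq_C_mul, mul_one] at h2
        exact Polynomial.C_injective (h2.trans Polynomial.C_1.symm)
      have hexp : Polynomial.expand K p F' = wP (Polynomial.monomial n γ) p := by
        rw [map_add, LinearMap.add_apply, Pi.add_apply, wRho_I, wE_zero,
          map_smul, LinearMap.smul_apply, Pi.smul_apply, hd0 p hp.pos, smul_zero, zero_add,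
          mul_one] at hsp
        exact hsp
      have hdeg := wP_deg n γ p
      rw [← hexp, Polynomial.natDegree_expand, mul_comm p n, Polynomial.coeff_expand_mul hp.pos]
        at hdeg
      have hdegF : F'.natDegree ≤ n := Nat.le_of_mul_le_mul_right hdeg.1 hp.pos
      have hσ : res σ = vkShear F' := by
        apply vkAut_ext
        · rw [hfix, vkShear_0]
        · rw [hF', vkShear_1, hα, C_1, one_mul]
      have hlt : (F - F').degree < n := by
        rw [Polynomial.degree_lt_iff_coeff_zero]
        intro m hm
        rcases Nat.eq_or_lt_of_le hm with rfl | hm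
        · rw [Polynomial.coeff_sub, hdeg.2, hγ, sub_self]
        · rw [Polynomial.coeff_sub, Polynomial.coeff_eq_zero_of_natDegree_lt (p := F') (by omega),
            sub_zero]
          exact (Polynomial.degree_lt_iff_coeff_zero F (n + 1)).1 hF m hm
      obtain ⟨σ', hσ'⟩ := ih _ hlt
      exact ⟨σ' * σ, by rw [hmul, hσ, hσ', vkShear_add, sub_add_cancel]⟩
  have hshear' : ∀ F : Polynomial K, ∃ σ, res σ = vkShear F := by
    intro F
    refine hshear (F.natDegree + 1) F ?_
    exact Polynomial.degree_lt_iff_coeff_zero F _ |>.2 fun m hm =>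
      Polynomial.coeff_eq_zero_of_natDegree_lt (by omega)
  have hswap : ∃ σ, res σ = vkSwap K := by
    obtain ⟨w, hwX, hwD⟩ := w_exists_swap (K := K)
    refine ⟨w, vkAut_ext ?_ ?_⟩
    · apply hΨinj
      rw [hr, hX, map_pow, hwX, vkSwap_0, hD]
    · apply hΨinj
      have hneg : (-X 0 : MvPolynomial (Fin 2) K) = (-1 : K) • X 0 := by
        rw [neg_smul, one_smul]
      rw [hr, hD, map_pow, hwD, vkSwap_1, hneg, map_smul, hX, smul_pow, neg_one_pow_char]
  have hdiag : ∀ α : Kˣ, ∃ σ, res σ = vkDg α α⁻¹ := by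
    intro α
    obtain ⟨γ, hγ⟩ := hperf (α : K)
    simp only at hγ
    have hγ0 : γ ≠ 0 := by
      rintro rfl
      rw [zero_pow hp.ne_zero] at hγ
      exact α.ne_zero hγ.symm
    obtain ⟨σ, hσX, hσD⟩ := w_exists_diag (Units.mk0 γ hγ0)
    refine ⟨σ, vkAut_ext ?_ ?_⟩
    · apply hΨinj
      rw [hr, hX, map_pow, hσX, vkDg_0, map_mul, hX, hC, ← Algebra.smul_def, smul_pow,
        Units.val_mk0, hγ]
    · apply hΨinj
      rw [hr, hD, map_pow, hσD, vkDg_1, map_mul, hD, hC, ← Algebra.smul_def, smul_pow,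
        Units.val_inv_eq_inv_val, Units.val_mk0, inv_pow, hγ, Units.val_inv_eq_inv_val]
  -- the group
  let G : Subgroup (MvPolynomial (Fin 2) K ≃ₐ[K] MvPolynomial (Fin 2) K) :=
    { carrier := {τ | (∃ σ, res σ = τ) ∧ jacP K τ = 1}
      mul_mem' := by
        rintro a b ⟨⟨s, rfl⟩, ha⟩ ⟨⟨t, rfl⟩, hb⟩
        exact ⟨⟨s * t, hmul s t⟩, by rw [vk_jac_mul, ha, hb, map_one, mul_one]⟩
      one_mem' := ⟨⟨1, map_one R⟩, vk_jac_one⟩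
      inv_mem' := by
        rintro a ⟨⟨s, rfl⟩, ha⟩
        exact ⟨⟨s⁻¹, map_inv R s⟩, vk_jac_inv _ ha⟩ }
  have hG : ∀ τ, ∃ s ∈ G, ∃ c : Kˣ, s * τ = vkDg c 1 :=
    vk_vdk p hp hperf G (fun F => ⟨hshear' F, vk_jac_shear F⟩) ⟨hswap, vk_jac_swap⟩
      (fun α => ⟨hdiag α, by rw [vk_jac_dg, Units.mul_inv, C_1]⟩)
  refine ⟨hmul, ?_, ?_⟩
  · have : Function.Injective R := by
      rw [injective_iff_map_eq_one]
      intro σ hσ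
      apply (hrig σ 1 ?_).2
      rw [← hRr, hσ]
      apply vkAut_ext
      · rw [vkDg_0]; simp
      · rw [vkDg_1]; simp
    exact this
  · ext τ
    constructor
    · rintro ⟨σ, rfl⟩
      obtain ⟨s, ⟨⟨t, rfl⟩, hs⟩, c, hc⟩ := hG (res σ)
      rw [← hmul] at hc
      have h1 := (hrig _ _ hc).1
      have h2 := vk_jac_mul (res t) (res σ)
      rw [← hmul, hc, vk_jac_dg, h1, hs] at h2
      change jacP K (res σ) = 1
      apply (res t).injective
      rw [map_one]
      simpa using h2.symm
    · intro hτ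
      have hτ' : jacP K τ = 1 := hτ
      obtain ⟨s, ⟨⟨t, rfl⟩, hs⟩, c, hc⟩ := hG τ
      have h2 := vk_jac_mul (res t) τ
      rw [hc, vk_jac_dg, hs, hτ', map_one, mul_one, Units.val_one, mul_one, ← C_1] at h2
      have hc1 : c = 1 := Units.ext (C_injective (Fin 2) K h2)
      refine ⟨t⁻¹, ?_⟩
      have h3 : vkDg (1 : Kˣ) 1 = 1 := by
        apply vkAut_ext
        · rw [vkDg_0]; simp
        · rw [vkDg_1]; simp
      rw [hc1, h3] at hc
      have h4 : res t⁻¹ = (res t)⁻¹ := map_inv R t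
      rw [h4]
      exact (eq_inv_of_mul_eq_one_right hc).symm

end vkres

theorem statement4 (p : ℕ) (hp : p.Prime) (K : Type*) [Field K] [CharP K p]
    (hperf : Function.Surjective fun a : K => a ^ p)
    (ψ : MvPolynomial (Fin 2) K ≃ₐ[K] Subalgebra.center K (Weyl K))
    (hψX : (↑(ψ (MvPolynomial.X 0)) : Weyl K) = wX K ^ p)
    (hψY : (↑(ψ (MvPolynomial.X 1)) : Weyl K) = wD K ^ p)
    (res : (Weyl K ≃ₐ[K] Weyl K) → (MvPolynomial (Fin 2) K ≃ₐ[K] MvPolynomial (Fin 2) K))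
    (hres : ∀ (σ : Weyl K ≃ₐ[K] Weyl K) (f : MvPolynomial (Fin 2) K),
      (↑(ψ (res σ f)) : Weyl K) = σ (↑(ψ f) : Weyl K)) :
    (∀ σ τ, res (σ * τ) = res σ * res τ) ∧ Function.Injective res ∧
      Set.range res = {τ | jacP K τ = 1} := by
  exact vk_res p hp K hperf ψ hψX hψY res hres
end
end

section
/- Let K be a perfect field of characteristic p > 0. The additive map θ : K[x] → K[x^p] defined by θ(f) = f^p + d^{p-1}f/dx^{p-1} is an F_p-linear bijection, and for every i ≥ 0 it maps the space {f ∈ K[x] : deg f ≤ i} bijectively onto {g ∈ K[x^p] : deg_{x^p} g ≤ i} (i.e. polynomials in x^p of degree at most pi in x). -/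
/-!
STATEMENT 9: Let `K` be a perfect field of characteristic `p > 0`.  The map
`θ : K[x] → K[x^p]`, `θ(f) = f^p + d^{p-1}f/dx^{p-1}`, is an additive (`𝔽_p`-linear)
bijection onto `K[x^p]`, and for every `i ≥ 0` it maps `{f : deg f ≤ i}` bijectively onto
`{g ∈ K[x^p] : deg_{x^p} g ≤ i}`.

The subring `K[x^p]` is realised as the range of `Polynomial.expand K p`, and
`{g ∈ K[x^p] : deg_{x^p} g ≤ i}` as the image under `expand` of `{h : deg h ≤ i}`.
-/

noncomputable section

open Polynomial

/-- The map `θ(f) = f^p + d^{p-1}f/dx^{p-1}`. -/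
def theta (p : ℕ) (K : Type*) [CommRing K] (f : Polynomial K) : Polynomial K :=
  f ^ p + derivative^[p - 1] f

theorem theta_add' (p : ℕ) (hp : p.Prime) (K : Type*) [Field K] [CharP K p]
    (f g : Polynomial K) : theta p K (f + g) = theta p K f + theta p K g := by
  have : Fact p.Prime := ⟨hp⟩
  unfold theta
  rw [add_pow_char, iterate_map_add]
  ring

theorem theta_coeff (p : ℕ) (hp : p.Prime) (K : Type*) [Field K] [CharP K p]
    (f : Polynomial K) (i : ℕ) (hf : f.natDegree ≤ i) :
    (derivative^[p - 1] f).coeff (p * i) = 0 := by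
  have h2 := hp.two_le
  rw [Polynomial.coeff_iterate_derivative, Polynomial.coeff_eq_zero_of_natDegree_lt, smul_zero]
  have : 1 * i ≤ p * i := Nat.mul_le_mul_right i (by omega)
  omega

theorem theta_natDegree (p : ℕ) (hp : p.Prime) (K : Type*) [Field K] [CharP K p]
    (f : Polynomial K) (i : ℕ) (hf : f.natDegree ≤ i) :
    (theta p K f).natDegree ≤ p * i := by
  have h2 := hp.two_le
  unfold theta
  have : 1 * i ≤ p * i := Nat.mul_le_mul_right i (by omega)
  have h1 := Polynomial.natDegree_iterate_derivative f (p - 1)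
  refine (Polynomial.natDegree_add_le _ _).trans (max_le ?_ (by omega))
  rw [Polynomial.natDegree_pow]
  exact Nat.mul_le_mul_left p hf

theorem theta_mem (p : ℕ) (hp : p.Prime) (K : Type*) [Field K] [CharP K p]
    (f : Polynomial K) (i : ℕ) (hf : f.natDegree ≤ i) :
    ∃ h : Polynomial K, h.natDegree ≤ i ∧ expand K p h = theta p K f := by
  have hd : derivative (theta p K f) = 0 := by
    unfold theta
    rw [derivative_add, derivative_pow, CharP.cast_eq_zero K p, C_0, zero_mul, zero_mul, zero_add,
      ← Function.iterate_succ_apply' (f := derivative),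
      show (p - 1).succ = p by have := hp.pos; omega]
    ext n
    rw [coeff_iterate_derivative, coeff_zero, nsmul_eq_mul]
    have : p ∣ (n + p).descFactorial p :=
      (Nat.dvd_factorial hp.pos le_rfl).trans (Nat.factorial_dvd_descFactorial _ _)
    rw [(CharP.cast_eq_zero_iff K p _).2 this, zero_mul]
  have he := expand_contract p hd hp.ne_zero
  refine ⟨contract p (theta p K f), ?_, he⟩
  have h1 := theta_natDegree p hp K f i hf
  rw [← he, natDegree_expand, mul_comm] at h1
  exact Nat.le_of_mul_le_mul_left h1 hp.pos

theorem theta_surj (p : ℕ) (hp : p.Prime) (K : Type*) [Field K] [CharP K p]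
    (hperf : Function.Surjective fun a : K => a ^ p) (i : ℕ) :
    ∀ h : Polynomial K, h.natDegree ≤ i →
      ∃ f : Polynomial K, f.natDegree ≤ i ∧ theta p K f = expand K p h := by
  have step : ∀ (i : ℕ) (h : Polynomial K), h.natDegree ≤ i →
      ∃ f h' : Polynomial K, f.natDegree ≤ i ∧ h'.natDegree ≤ i ∧
        theta p K f = expand K p h' ∧ (h - h').coeff i = 0 := by
    intro i h hh
    obtain ⟨a, ha⟩ := hperf (h.coeff i)
    have hf : (C a * X ^ i).natDegree ≤ i := natDegree_C_mul_X_pow_le a i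
    obtain ⟨h', h1, h2⟩ := theta_mem p hp K _ i hf
    refine ⟨_, h', hf, h1, h2.symm, ?_⟩
    have h3 := congrArg (fun q => coeff q (p * i)) h2
    have h4 := theta_coeff p hp K _ i hf
    rw [mul_comm p i] at h3 h4
    simp only [theta, coeff_add, h4, add_zero, coeff_expand_mul hp.pos] at h3
    rw [mul_pow, ← C_pow, ← pow_mul, coeff_C_mul_X_pow, if_pos rfl] at h3
    rw [coeff_sub, h3, sub_eq_zero]
    exact ha.symm
  induction i with
  | zero =>
    intro h hh
    obtain ⟨f, h', hf, hh', he, hc⟩ := step 0 h hh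
    refine ⟨f, hf, ?_⟩
    have : h - h' = 0 := by
      rw [eq_C_of_natDegree_le_zero ((natDegree_sub_le _ _).trans (max_le hh hh')), hc, C_0]
    rw [he, sub_eq_zero.1 this]
  | succ i ih =>
    intro h hh
    obtain ⟨f, h', hf, hh', he, hc⟩ := step (i + 1) h hh
    have h5 : (h - h').natDegree ≤ i := by
      rw [natDegree_le_iff_coeff_eq_zero]
      intro N hN
      rcases Nat.lt_or_ge (i + 1) N with h6 | h6
      · exact coeff_eq_zero_of_natDegree_lt
          (((natDegree_sub_le _ _).trans (max_le hh hh')).trans_lt h6)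
      · rw [show N = i + 1 by omega, hc]
    obtain ⟨g, hg, hge⟩ := ih _ h5
    refine ⟨g + f, (natDegree_add_le _ _).trans (max_le (by omega) hf), ?_⟩
    rw [theta_add' p hp, hge, he, ← map_add, sub_add_cancel]

theorem theta_ker (p : ℕ) (hp : p.Prime) (K : Type*) [Field K] [CharP K p]
    (h : Polynomial K) (h0 : theta p K h = 0) : h = 0 := by
  have h1 := theta_coeff p hp K h _ le_rfl
  have h2 := congrArg (fun q => coeff q (p * h.natDegree)) h0
  simp only [theta, coeff_add, h1, add_zero, coeff_zero] at h2
  rw [← natDegree_pow] at h2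
  have h3 : h ^ p = 0 := leadingCoeff_eq_zero.1 h2
  exact pow_eq_zero_iff hp.ne_zero |>.1 h3

theorem statement9 (p : ℕ) (hp : p.Prime) (K : Type*) [Field K] [CharP K p]
    (hperf : Function.Surjective fun a : K => a ^ p) :
    (∀ f g : Polynomial K, theta p K (f + g) = theta p K f + theta p K g) ∧
    Function.Injective (theta p K) ∧
    Set.range (theta p K) = Set.range (Polynomial.expand K p) ∧
    (∀ i : ℕ, theta p K '' {f : Polynomial K | f.natDegree ≤ i}
        = (Polynomial.expand K p) '' {h : Polynomial K | h.natDegree ≤ i}) := by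
  have key : ∀ i : ℕ, theta p K '' {f : Polynomial K | f.natDegree ≤ i}
        = (Polynomial.expand K p) '' {h : Polynomial K | h.natDegree ≤ i} := by
    intro i
    ext g
    constructor
    · rintro ⟨f, hf, rfl⟩
      exact theta_mem p hp K f i hf
    · rintro ⟨h, hh, rfl⟩
      exact theta_surj p hp K hperf i h hh
  refine ⟨theta_add' p hp K, ?_, ?_, key⟩
  · intro f g hfg
    have h1 := theta_add' p hp K (f - g) g
    rw [sub_add_cancel, hfg] at h1
    exact sub_eq_zero.1 (theta_ker p hp K _ (left_eq_add.1 (h1.trans (add_comm _ _))))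
  · ext g
    constructor
    · rintro ⟨f, rfl⟩
      obtain ⟨h, -, hh⟩ := theta_mem p hp K f _ le_rfl
      exact ⟨h, hh⟩
    · rintro ⟨h, rfl⟩
      obtain ⟨f, -, hf⟩ := theta_surj p hp K hperf _ h le_rfl
      exact ⟨f, hf⟩
end
end

section
/- Let K be a field of characteristic p > 0. Every K-algebra automorphism σ of the polynomial ring K[X, Y] can be written as a product σ = γ_μ ∘ t_ν ∘ φ_{f_1} ∘ s ∘ φ_{f_2} ∘ s ∘ ⋯ ∘ φ_{f_{n-1}} ∘ s ∘ φ_{f_n} for some n ≥ 1, μ, ν ∈ K^*, and f_1, …, f_n ∈ K[X]. -/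
/-!
STATEMENT 13: Let `K` be a field of characteristic `p > 0`.  Every `K`-algebra
automorphism `σ` of `K[X, Y]` can be written as
`σ = γ_μ ∘ t_ν ∘ φ_{f₁} ∘ s ∘ φ_{f₂} ∘ s ∘ ⋯ ∘ φ_{f_{n-1}} ∘ s ∘ φ_{f_n}`
for some `n ≥ 1`, `μ, ν ∈ K^*`, `f₁, …, f_n ∈ K[X]`.

Here `K[X, Y] = MvPolynomial (Fin 2) K` with `X = X 0`, `Y = X 1`; the automorphisms
`γ_μ : X ↦ μX, Y ↦ Y`, `t_ν : X ↦ νX, Y ↦ ν⁻¹Y`, `s : X ↦ Y, Y ↦ −X`,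
`φ_f : X ↦ X, Y ↦ Y + f(X)` are specified by their values on the generators; the word
`φ_{f₁} s φ_{f₂} s ⋯ φ_{f_n}` is the product of the list `w 0, w 1, …, w (2n−2)` where the
even entries are the `φ_{f_k}` and the odd entries are `s` (multiplication of
automorphisms being composition).
-/

noncomputable section

namespace JvdK
open Polynomial

variable {K : Type*} [Field K]

lemma img_C (Φ : K[X][X] ≃ₐ[K] K[X][X]) (c : K[X]) :
    Φ (C c) = (c.map (C : K →+* K[X])).comp (Φ (C X)) := by
  induction c using Polynomial.induction_on' with
  | add p q hp hq => simp only [map_add, hp, hq, Polynomial.map_add, add_comp]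
  | monomial n a =>
    have h1 : (C (monomial n a) : K[X][X]) = algebraMap K K[X][X] a * (C X) ^ n := by
      rw [← C_mul_X_pow_eq_monomial, C_mul, C_pow]; rfl
    rw [h1, map_mul, map_pow, AlgEquiv.commutes]
    simp [← C_mul_X_pow_eq_monomial]

lemma natDegree_img (Φ : K[X][X] ≃ₐ[K] K[X][X]) (c : K[X]) :
    (Φ (C c)).natDegree = c.natDegree * (Φ (C X)).natDegree := by
  rw [img_C, natDegree_comp, natDegree_map]

lemma leadingCoeff_img (Φ : K[X][X] ≃ₐ[K] K[X][X]) (hb : (Φ (C X)).natDegree ≠ 0) (c : K[X]) :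
    (Φ (C c)).leadingCoeff = C c.leadingCoeff * (Φ (C X)).leadingCoeff ^ c.natDegree := by
  rw [img_C, leadingCoeff_comp hb, natDegree_map, leadingCoeff_map]

/-- a linear map to a smaller space has a kernel -/
lemma exists_ker (R : Type*) [CommRing R] [Nontrivial R] {α β : Type*} [Fintype α] [Fintype β]
    (f : (α → R) →ₗ[R] (β → R)) (h : Fintype.card β < Fintype.card α) :
    ∃ v, v ≠ 0 ∧ f v = 0 := by
  by_contra! H
  have : Function.Injective f := by
    rw [← LinearMap.ker_eq_bot, LinearMap.ker_eq_bot']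
    intro m hm
    by_contra h0
    exact H m h0 hm
  exact absurd (card_le_of_injective R f this) (by omega)

lemma natDegree_double_sum_lt {R : Type*} [CommRing R] {n : ℕ} (hn : 0 < n) {α : Type*}
    (s : Finset α) (F : α → R[X]) (hF : ∀ i ∈ s, (F i).natDegree < n) :
    (∑ i ∈ s, F i).natDegree < n := by
  have := natDegree_sum_le_of_forall_le (n := n - 1) s F (fun i hi => by have := hF i hi; omega)
  omega

lemma lemB (Φ : K[X][X] ≃ₐ[K] K[X][X]) (π : K[X]) (hπ : π.Monic) (he : 0 < π.natDegree)
    (x1 : K[X][X]) (b1 : ℕ) (hx1 : x1.natDegree ≤ b1) (hd : C π ∣ Φ (C X) - x1) :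
    (Φ.symm (C X)).natDegree ≤ b1 := by
  by_contra! hlt
  set b' := (Φ.symm (C X)).natDegree with hb'
  set e := π.natDegree with he'
  set a := (Φ X).natDegree with ha
  set M := b' * e * a + 1 with hM
  set L := M * b1 + b' * e * a + 1 with hL
  let T : (Fin (M + 1) × Fin (b' * e) → K) →ₗ[K] K[X][X] :=
    ∑ p : Fin (M + 1) × Fin (b' * e),
      (LinearMap.toSpanSingleton K K[X][X] (x1 ^ (p.1 : ℕ) * (Φ X) ^ (p.2 : ℕ))).comp
        (LinearMap.proj p)
  have hT : ∀ c, T c = ∑ p, c p • (x1 ^ (p.1 : ℕ) * (Φ X) ^ (p.2 : ℕ)) := by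
    intro c; simp [T]
  have hTdeg : ∀ c, (T c).natDegree < L := by
    intro c
    rw [hT]
    apply natDegree_double_sum_lt (by omega)
    intro p _
    have h1 := natDegree_smul_le (c p) (x1 ^ (p.1 : ℕ) * (Φ X) ^ (p.2 : ℕ))
    have h2 := natDegree_mul_le (p := x1 ^ (p.1 : ℕ)) (q := (Φ X) ^ (p.2 : ℕ))
    rw [natDegree_pow, natDegree_pow] at h2
    have h3 : (p.1 : ℕ) * x1.natDegree ≤ M * b1 := Nat.mul_le_mul (by omega) hx1
    have h4 : (p.2 : ℕ) * (Φ X).natDegree ≤ b' * e * a := Nat.mul_le_mul (by omega) le_rfl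
    omega
  let U : K[X][X] →ₗ[K] (Fin L × Fin e → K) :=
    LinearMap.pi fun q =>
      (lcoeff K (q.2 : ℕ)).comp ((modByMonicHom π).comp
        ((lcoeff K[X] (q.1 : ℕ)).restrictScalars K))
  have hU : ∀ h q, U h q = (h.coeff (q.1 : ℕ) %ₘ π).coeff (q.2 : ℕ) := by
    intro h q; rfl
  obtain ⟨c, hc0, hc⟩ := exists_ker K (U.comp T) (by
    simp only [Fintype.card_prod, Fintype.card_fin]
    rw [← mul_assoc]
    apply Nat.mul_lt_mul_of_pos_right _ he
    have : M * (b1 + 1) ≤ M * b' := Nat.mul_le_mul le_rfl hlt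
    nlinarith)
  have hdvd : C π ∣ T c := by
    rw [C_dvd_iff_dvd_coeff]
    intro i
    by_cases hi : i < L
    · rw [← modByMonic_eq_zero_iff_dvd hπ]
      ext s
      by_cases hs : s < e
      · have := congrFun hc (⟨i, hi⟩, ⟨s, hs⟩)
        rw [LinearMap.comp_apply, hU] at this
        simpa using this
      · rw [coeff_zero]
        apply coeff_eq_zero_of_degree_lt
        refine lt_of_lt_of_le (degree_modByMonic_lt _ hπ) ?_
        rw [degree_eq_natDegree hπ.ne_zero]
        exact_mod_cast (by omega : e ≤ s)
    · rw [coeff_eq_zero_of_natDegree_lt (by have := hTdeg c; omega)]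
      exact dvd_zero _
  set h : K[X][X] := ∑ p : Fin (M + 1) × Fin (b' * e), c p • ((C X) ^ (p.1 : ℕ) * X ^ (p.2 : ℕ))
    with hh
  have hΦ : C π ∣ Φ h := by
    have : Φ h = T c + ∑ p : Fin (M + 1) × Fin (b' * e),
        c p • ((Φ (C X) ^ (p.1 : ℕ) - x1 ^ (p.1 : ℕ)) * (Φ X) ^ (p.2 : ℕ)) := by
      rw [hT, hh, map_sum, ← Finset.sum_add_distrib]
      refine Finset.sum_congr rfl fun p _ => ?_
      rw [map_smul, map_mul, map_pow, map_pow, ← smul_add]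
      congr 1; ring
    rw [this]
    refine dvd_add hdvd (Finset.dvd_sum fun p _ => ?_)
    rw [Algebra.smul_def]
    refine Dvd.dvd.mul_left ?_ _
    exact Dvd.dvd.mul_right (hd.trans (sub_dvd_pow_sub_pow _ _ _)) _
  have hne : h ≠ 0 := by
    obtain ⟨p, hp⟩ := Function.ne_iff.mp hc0
    intro h0
    apply hp
    have h1 : (h.coeff (p.2 : ℕ)).coeff (p.1 : ℕ) = 0 := by rw [h0]; simp
    rw [hh] at h1
    simp only [finsetSum_coeff, coeff_smul, ← C_pow, coeff_C_mul, coeff_X_pow] at h1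
    rw [Finset.sum_eq_single p] at h1
    · simpa using h1
    · intro q _ hq
      by_cases h2 : (p.2 : ℕ) = q.2
      · have h3 : (p.1 : ℕ) ≠ q.1 := by
          intro h3
          exact hq (Prod.ext (Fin.ext h3.symm) (Fin.ext h2.symm))
        simp [h2, coeff_X_pow, h3]
      · simp [h2]
    · simp
  have hpos : 0 < b' * e := Nat.mul_pos (by omega) he
  have hdeg : h.natDegree < b' * e := by
    apply natDegree_double_sum_lt hpos
    intro p _
    refine lt_of_le_of_lt (natDegree_smul_le _ _) ?_
    rw [← C_pow]
    refine lt_of_le_of_lt (natDegree_C_mul_X_pow_le _ _) p.2.2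
  have h5 : Φ.symm (C π) ∣ h := by
    have := map_dvd Φ.symm hΦ
    simpa using this
  have h6 := natDegree_le_of_dvd h5 hne
  rw [natDegree_img, ← hb', mul_comm, ← he'] at h6
  omega

lemma degB (Φ : K[X][X] ≃ₐ[K] K[X][X]) :
    (Φ.symm (C X)).natDegree = (Φ (C X)).natDegree := by
  apply le_antisymm
  · exact lemB Φ X monic_X (by simp) _ _ le_rfl (by simp)
  · exact lemB Φ.symm X monic_X (by simp) _ _ le_rfl (by simp)

lemma lcB (Φ : K[X][X] ≃ₐ[K] K[X][X]) (hb : 0 < (Φ (C X)).natDegree) :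
    (Φ (C X)).leadingCoeff.natDegree = 0 := by
  by_contra h
  set x := Φ (C X) with hx
  set u := x.leadingCoeff with hu
  have hu0 : u ≠ 0 := by
    rw [hu, leadingCoeff_ne_zero]; intro h0; rw [h0] at hb; simp at hb
  have := lemB Φ (u * C u.leadingCoeff⁻¹) (monic_mul_leadingCoeff_inv hu0)
    (by rw [natDegree_mul_leadingCoeff_inv _ hu0]; omega) x.eraseLead (x.natDegree - 1)
    (eraseLead_natDegree_le x) (by
      have : Φ (C X) - x.eraseLead = C u * X ^ x.natDegree := by
        rw [← hx, sub_eq_iff_eq_add, add_comm, hu, eraseLead_add_C_mul_X_pow]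
      rw [this]
      refine Dvd.dvd.mul_right ?_ _
      refine ⟨C (C u.leadingCoeff), ?_⟩
      rw [← C_mul, mul_assoc, ← C_mul, inv_mul_cancel₀ (leadingCoeff_ne_zero.2 hu0)]
      simp)
  rw [degB, ← hx] at this
  omega

lemma sumZ (Φ : K[X][X] ≃ₐ[K] K[X][X]) (b e : ℕ) (hb : (Φ (C X)).natDegree = b) (hb0 : 0 < b)
    (c : Fin b × Fin e → K[X]) (hc : c ≠ 0) (Z : K[X][X])
    (hZ : Z = ∑ p, Φ (C (c p)) * (C (X ^ (p.2 : ℕ)) * X ^ (p.1 : ℕ))) :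
    Z ≠ 0 ∧ Z.leadingCoeff.natDegree < e := by
  classical
  obtain ⟨p1, hp1⟩ := Function.ne_iff.mp hc
  obtain ⟨p0, hp0, hmax⟩ := Finset.exists_max_image
    (Finset.univ.filter fun p => c p ≠ 0) (fun p => (c p).natDegree * b + p.1)
    ⟨p1, by simpa using hp1⟩
  simp only [Finset.mem_filter, Finset.mem_univ, true_and] at hp0 hmax
  set N := (c p0).natDegree * b + p0.1 with hN
  have hu := lcB Φ (by omega)
  obtain ⟨u, hu⟩ := natDegree_eq_zero.mp hu
  have hlc : ∀ p, (Φ (C (c p))).leadingCoeff = C ((c p).leadingCoeff * u ^ (c p).natDegree) := by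
    intro p
    rw [leadingCoeff_img _ (by omega), ← hu]; simp
  have hu0 : u ≠ 0 := by
    rintro rfl
    rw [C_0, eq_comm, leadingCoeff_eq_zero] at hu
    rw [hu] at hb; simp at hb; omega
  have hterm : ∀ p l, (Φ (C (c p)) * (C (X ^ (p.2 : ℕ)) * X ^ (p.1 : ℕ))).coeff (l + p.1)
      = (Φ (C (c p))).coeff l * X ^ (p.2 : ℕ) := by
    intro p l
    rw [← mul_assoc, coeff_mul_X_pow, coeff_mul_C]
  have hdegt : ∀ p, (Φ (C (c p)) * (C (X ^ (p.2 : ℕ)) * X ^ (p.1 : ℕ))).natDegree ≤ N := by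
    intro p
    by_cases h0 : c p = 0
    · simp [h0]
    · have h1 := natDegree_mul_le (p := Φ (C (c p))) (q := C (X ^ (p.2 : ℕ)) * X ^ (p.1 : ℕ))
      have h2 := natDegree_C_mul_X_pow_le (X ^ (p.2 : ℕ) : K[X]) (p.1 : ℕ)
      have h3 := hmax p h0
      rw [natDegree_img, hb] at h1
      omega
  have key : ∀ p, ∃ κ : K,
      (Φ (C (c p)) * (C (X ^ (p.2 : ℕ)) * X ^ (p.1 : ℕ))).coeff N = C κ * X ^ (p.2 : ℕ) ∧
      (p.1 ≠ p0.1 → κ = 0) ∧ (p = p0 → κ ≠ 0) := by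
    intro p
    by_cases h0 : c p = 0
    · refine ⟨0, by simp [h0], by simp, ?_⟩
      rintro rfl; exact absurd h0 hp0
    · by_cases h1 : (c p).natDegree * b + p.1 = N
      · refine ⟨(c p).leadingCoeff * u ^ (c p).natDegree, ?_, ?_, ?_⟩
        · rw [← h1, hterm, ← hlc, leadingCoeff, natDegree_img, hb]
        · intro h2
          exfalso
          apply h2
          have h3 : ((c p).natDegree * b + p.1) % b = ((c p0).natDegree * b + p0.1) % b := by
            rw [h1]
          rw [Nat.mul_add_mod', Nat.mul_add_mod', Nat.mod_eq_of_lt p.1.2,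
            Nat.mod_eq_of_lt p0.1.2] at h3
          exact Fin.ext h3
        · intro _
          exact mul_ne_zero (leadingCoeff_ne_zero.2 h0) (pow_ne_zero _ hu0)
      · refine ⟨0, ?_, by simp, ?_⟩
        · have h3 := hmax p h0
          have h2 := hterm p (N - p.1)
          rw [Nat.sub_add_cancel (by omega)] at h2
          rw [h2, coeff_eq_zero_of_natDegree_lt]
          · simp
          · rw [natDegree_img, hb]; omega
        · rintro rfl; exact absurd rfl h1
  choose κ hκ1 hκ2 hκ3 using key
  have hcoef : Z.coeff N = ∑ p : Fin b × Fin e, C (κ p) * X ^ (p.2 : ℕ) := by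
    rw [hZ, finsetSum_coeff]
    exact Finset.sum_congr rfl fun p _ => hκ1 p
  have hne : Z.coeff N ≠ 0 := by
    intro h0
    apply hκ3 p0 rfl
    have h1 := congrArg (fun q => q.coeff (p0.2 : ℕ)) hcoef
    simp only [h0, coeff_zero, finsetSum_coeff, coeff_C_mul, coeff_X_pow] at h1
    rw [Finset.sum_eq_single p0] at h1
    · simpa using h1.symm
    · intro q _ hq
      by_cases h2 : q.1 = p0.1
      · have h3 : (p0.2 : ℕ) ≠ q.2 := by
          intro h3
          exact hq (Prod.ext h2 (Fin.ext h3.symm))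
        simp [h3]
      · simp [hκ2 q h2]
    · simp
  have hZN : Z.natDegree = N := by
    apply le_antisymm
    · rw [hZ]
      exact natDegree_sum_le_of_forall_le _ _ fun p _ => hdegt p
    · exact le_natDegree_of_ne_zero hne
  refine ⟨fun h => hne (by simp [h]), ?_⟩
  rw [leadingCoeff, hZN, hcoef]
  apply natDegree_double_sum_lt (by have := p0.2.2; omega)
  intro p _
  exact lt_of_le_of_lt (natDegree_C_mul_X_pow_le _ _) p.2.2

lemma lemP (Φ : K[X][X] ≃ₐ[K] K[X][X]) (b : ℕ) (hb : (Φ (C X)).natDegree = b) (hb0 : 0 < b)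
    (h : K[X][X]) : b * (Φ h).leadingCoeff.natDegree ≤ h.natDegree := by
  classical
  by_cases hh0 : h = 0
  · simp [hh0]
  by_contra! hlt
  set e := (Φ h).leadingCoeff.natDegree with he
  set J := h.natDegree with hJ
  set f := Φ.symm (C X) with hf
  set g := Φ.symm X with hg
  set Lm := e * f.natDegree + b * g.natDegree + 1 with hLm
  let T : ((Fin b × Fin e) ⊕ Fin Lm → K[X]) →ₗ[K[X]] K[X][X] :=
    ∑ p : (Fin b × Fin e) ⊕ Fin Lm,
      (LinearMap.toSpanSingleton K[X] K[X][X]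
        (Sum.elim (fun p : Fin b × Fin e => f ^ (p.2 : ℕ) * g ^ (p.1 : ℕ))
          (fun m : Fin Lm => X ^ (m : ℕ) * h) p)).comp (LinearMap.proj p)
  have hT : ∀ v, T v = (∑ p : Fin b × Fin e, C (v (.inl p)) * (f ^ (p.2 : ℕ) * g ^ (p.1 : ℕ)))
      + (∑ m : Fin Lm, C (v (.inr m)) * X ^ (m : ℕ)) * h := by
    intro v
    simp [T, smul_eq_C_mul, Finset.sum_mul, mul_assoc]
  have hTdeg : ∀ v, (T v).natDegree < J + Lm := by
    intro v
    rw [hT]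
    refine lt_of_le_of_lt (natDegree_add_le _ _) (max_lt ?_ ?_)
    · apply natDegree_double_sum_lt (by omega)
      intro p _
      refine lt_of_le_of_lt (natDegree_C_mul_le _ _) ?_
      refine lt_of_le_of_lt natDegree_mul_le ?_
      rw [natDegree_pow, natDegree_pow]
      have h1 : (p.2 : ℕ) * f.natDegree ≤ e * f.natDegree := Nat.mul_le_mul (by omega) le_rfl
      have h2 : (p.1 : ℕ) * g.natDegree ≤ b * g.natDegree := Nat.mul_le_mul (by omega) le_rfl
      omega
    · refine lt_of_le_of_lt natDegree_mul_le ?_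
      have : (∑ m : Fin Lm, C (v (.inr m)) * X ^ (m : ℕ)).natDegree < Lm := by
        apply natDegree_double_sum_lt (by omega)
        intro m _
        exact lt_of_le_of_lt (natDegree_C_mul_X_pow_le _ _) m.2
      omega
  let U : K[X][X] →ₗ[K[X]] (Fin (J + Lm) → K[X]) :=
    LinearMap.pi fun q => lcoeff K[X] (q : ℕ)
  obtain ⟨v, hv0, hv⟩ := exists_ker K[X] (U.comp T) (by
    simp only [Fintype.card_sum, Fintype.card_prod, Fintype.card_fin]
    omega)
  have hTv : T v = 0 := by
    ext1 i
    by_cases hi : i < J + Lm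
    · exact congrFun hv ⟨i, hi⟩
    · rw [coeff_eq_zero_of_natDegree_lt (by have := hTdeg v; omega), coeff_zero]
  rw [hT] at hTv
  set m := ∑ m : Fin Lm, C (v (.inr m)) * X ^ (m : ℕ) with hm
  by_cases hc : (fun p => v (.inl p)) = 0
  · have hc' : ∀ p, v (.inl p) = 0 := fun p => congrFun hc p
    simp only [hc', C_0, zero_mul, Finset.sum_const_zero, zero_add] at hTv
    have hm0 : m = 0 := (mul_eq_zero.mp hTv).resolve_right hh0
    apply hv0
    funext q
    rcases q with p | q
    · exact hc' p
    · have h1 := congrArg (fun z => z.coeff (q : ℕ)) hm0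
      simp only [hm, finsetSum_coeff, coeff_C_mul, coeff_X_pow, coeff_zero] at h1
      rw [Finset.sum_eq_single q] at h1
      · simpa using h1
      · intro r _ hr
        have : (q : ℕ) ≠ r := fun h => hr (Fin.ext h.symm)
        simp [this]
      · simp
  · obtain ⟨hZ0, hZ⟩ := sumZ Φ b e hb hb0 (fun p => v (.inl p)) hc _ rfl
    have h1 := congrArg Φ hTv
    rw [map_add, map_sum, map_mul, map_zero] at h1
    have h2 : ∀ p : Fin b × Fin e, Φ (C (v (.inl p)) * (f ^ (p.2 : ℕ) * g ^ (p.1 : ℕ)))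
        = Φ (C (v (.inl p))) * (C (X ^ (p.2 : ℕ)) * X ^ (p.1 : ℕ)) := by
      intro p
      simp [hf, hg]
    simp only [h2] at h1
    rw [add_eq_zero_iff_eq_neg] at h1
    rw [h1] at hZ hZ0
    rw [leadingCoeff_neg, leadingCoeff_mul, natDegree_neg] at hZ
    have h3 : Φ m ≠ 0 := by
      intro h0; apply hZ0; simp [h0]
    have h4 : Φ h ≠ 0 := by
      intro h0; apply hZ0; simp [h0]
    rw [natDegree_mul (leadingCoeff_ne_zero.2 h3) (leadingCoeff_ne_zero.2 h4)] at hZ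
    omega

lemma main_dvd (Φ : K[X][X] ≃ₐ[K] K[X][X]) (a b : ℕ) (hb : (Φ (C X)).natDegree = b) (hb0 : 0 < b)
    (ha : (Φ X).natDegree = a) (hab : b ≤ a) : b ∣ a := by
  classical
  by_contra hnd
  have hb1 : 1 < b := by
    rcases Nat.lt_or_ge 1 b with h | h
    · exact h
    · exact absurd (by rw [show b = 1 by omega]; exact one_dvd a) hnd
  have hc : ∀ h : K[X][X], h.natDegree < b → ∃ κ, (Φ h).leadingCoeff = C κ := by
    intro h hh
    have h1 := lemP Φ b hb hb0 h
    have h2 : (Φ h).leadingCoeff.natDegree = 0 := by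
      by_contra h3
      have : b * 1 ≤ b * (Φ h).leadingCoeff.natDegree := Nat.mul_le_mul le_rfl (by omega)
      omega
    exact ⟨_, eq_C_of_natDegree_eq_zero h2⟩
  have hi : ∀ h : K[X][X], b * h.leadingCoeff.natDegree ≤ (Φ h).natDegree := by
    intro h
    have := lemP Φ.symm b (by rw [degB, hb]) hb0 (Φ h)
    simpa using this
  have hlcC : ∀ (c : K[X]) (h : K[X][X]), c ≠ 0 → h ≠ 0 →
      (Φ (C c * h)).natDegree = b * c.natDegree + (Φ h).natDegree := by
    intro c h hc0 h0
    rw [map_mul, natDegree_mul (by simpa using hc0) (by simpa using h0), natDegree_img, hb,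
      mul_comm]
  let D : ℕ → ℕ := fun j => sInf {d | ∃ h : K[X][X], h.natDegree = j ∧ h ≠ 0 ∧
    (Φ h).natDegree = b * h.leadingCoeff.natDegree + d}
  have D_mem : ∀ j, ∃ h : K[X][X], h.natDegree = j ∧ h ≠ 0 ∧
      (Φ h).natDegree = b * h.leadingCoeff.natDegree + D j := by
    intro j
    exact Nat.sInf_mem (s := {d | ∃ h : K[X][X], h.natDegree = j ∧ h ≠ 0 ∧
      (Φ h).natDegree = b * h.leadingCoeff.natDegree + d})
      ⟨(Φ (X ^ j)).natDegree, X ^ j, by simp, by simp, by simp⟩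
  have D_le : ∀ h : K[X][X], h ≠ 0 →
      b * h.leadingCoeff.natDegree + D h.natDegree ≤ (Φ h).natDegree := by
    intro h h0
    have h1 := hi h
    have : D h.natDegree ≤ (Φ h).natDegree - b * h.leadingCoeff.natDegree :=
      Nat.sInf_le ⟨h, rfl, h0, by omega⟩
    omega
  have D_dist : ∀ i j, i < j → j < b → D i % b ≠ D j % b := by
    intro i j hij hjb heq
    obtain ⟨hI, hI1, hI2, hI3⟩ := D_mem i
    obtain ⟨hJ, hJ1, hJ2, hJ3⟩ := D_mem j
    have hmod : (Φ hI).natDegree % b = (Φ hJ).natDegree % b := by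
      rw [hI3, hJ3, Nat.mul_add_mod, Nat.mul_add_mod, heq]
    set s := (Φ hJ).natDegree / b + 1 with hs
    set t := (Φ hI).natDegree / b + 1 with ht
    set p := C (X ^ t) * hJ with hp
    set q := C (X ^ s) * hI with hq
    have hp0 : p ≠ 0 := mul_ne_zero (by simp) hJ2
    have hq0 : q ≠ 0 := mul_ne_zero (by simp) hI2
    have hpd : p.natDegree = j := by rw [hp, natDegree_C_mul (by simp), hJ1]
    have hqd : q.natDegree = i := by rw [hq, natDegree_C_mul (by simp), hI1]
    have hpΦ : (Φ p).natDegree = b * t + (Φ hJ).natDegree := by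
      rw [hp, hlcC _ _ (by simp) hJ2, natDegree_X_pow]
    have hqΦ : (Φ q).natDegree = b * s + (Φ hI).natDegree := by
      rw [hq, hlcC _ _ (by simp) hI2, natDegree_X_pow]
    have hpq : (Φ p).natDegree = (Φ q).natDegree := by
      rw [hpΦ, hqΦ, hs, ht, mul_add, mul_add]
      have h1 := Nat.div_add_mod (Φ hI).natDegree b
      have h2 := Nat.div_add_mod (Φ hJ).natDegree b
      omega
    obtain ⟨α, hα⟩ := hc p (by omega)
    obtain ⟨β, hβ⟩ := hc q (by omega)
    have hα0 : α ≠ 0 := by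
      rintro rfl
      rw [C_0, leadingCoeff_eq_zero] at hα
      exact hp0 (by simpa using hα)
    have hβ0 : β ≠ 0 := by
      rintro rfl
      rw [C_0, leadingCoeff_eq_zero] at hβ
      exact hq0 (by simpa using hβ)
    have hcomm : ∀ κ : K, Φ (C (C κ)) = C (C κ) := fun κ => Φ.commutes κ
    set z := C (C β) * p - C (C α) * q with hz
    have hd1 : (C (C α) * q).natDegree < (C (C β) * p).natDegree := by
      have e1 : (C (C α) * q).natDegree = i :=
        (natDegree_C_mul (a := C α) (p := q) (by simpa using hα0)).trans hqd
      have e2 : (C (C β) * p).natDegree = j :=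
        (natDegree_C_mul (a := C β) (p := p) (by simpa using hβ0)).trans hpd
      omega
    have hzd : z.natDegree = j := by
      rw [hz, natDegree_sub_eq_left_of_natDegree_lt hd1, natDegree_C_mul (by simpa using hβ0), hpd]
    have hzl : z.leadingCoeff.natDegree = t + hJ.leadingCoeff.natDegree := by
      rw [hz, leadingCoeff_sub_of_degree_lt (degree_lt_degree hd1), leadingCoeff_mul,
        leadingCoeff_C, hp, leadingCoeff_mul, leadingCoeff_C, natDegree_C_mul hβ0,
        natDegree_mul (by simp) (by simpa using hJ2), natDegree_X_pow]
    have hz0 : z ≠ 0 := by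
      intro h0; rw [h0] at hzd; simp at hzd; omega
    have hzΦ : (Φ z).natDegree < (Φ p).natDegree := by
      have h1 : Φ z = C (C β) * Φ p - C (C α) * Φ q := by
        rw [hz, map_sub, map_mul Φ (C (C β)) p, map_mul Φ (C (C α)) q, hcomm, hcomm]
      have hΦp : Φ p ≠ 0 := by simpa using hp0
      have hΦq : Φ q ≠ 0 := by simpa using hq0
      have h2 : (C (C β) * Φ p).natDegree = (Φ p).natDegree :=
        natDegree_C_mul (by simpa using hβ0)
      have h3 : (C (C α) * Φ q).natDegree = (Φ q).natDegree :=
        natDegree_C_mul (by simpa using hα0)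
      have h4 : C (C β) * Φ p ≠ 0 := mul_ne_zero (by simpa using hβ0) hΦp
      have h5 : C (C α) * Φ q ≠ 0 := mul_ne_zero (by simpa using hα0) hΦq
      have h6 : (Φ z).degree < (C (C β) * Φ p).degree := by
        rw [h1]
        apply degree_sub_lt_left _ h4
        · rw [leadingCoeff_mul, leadingCoeff_mul, hα, hβ, leadingCoeff_C, leadingCoeff_C, mul_comm]
        · rw [degree_eq_natDegree h4, degree_eq_natDegree h5, h2, h3, hpq]
      have := natDegree_lt_natDegree (by simpa using hz0) h6
      omega
    have h7 := D_le z hz0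
    rw [hzl, hzd, mul_add] at h7
    omega
  have hD1 : D 1 = a := by
    apply le_antisymm
    · have := D_le X X_ne_zero
      simp [ha] at this
      exact this
    · obtain ⟨h, h1, h2, h3⟩ := D_mem 1
      have h4 : h = C h.leadingCoeff * X + C (h.coeff 0) := by
        have := eq_X_add_C_of_natDegree_le_one (le_of_eq h1)
        rw [leadingCoeff, h1]; exact this
      set c := h.leadingCoeff with hcc
      set d := h.coeff 0
      have hc0 : c ≠ 0 := leadingCoeff_ne_zero.2 h2
      have h5 : Φ h = Φ (C c * X) + Φ (C d) := by
        conv_lhs => rw [h4]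
        rw [map_add]
      have h6 := hlcC c X hc0 X_ne_zero
      have h7 := natDegree_img Φ d
      rw [hb] at h7
      rw [ha] at h6
      have h8 : (Φ (C c * X)).natDegree ≠ (Φ (C d)).natDegree := by
        intro h9
        rw [h6, h7] at h9
        apply hnd
        have h10 : b ∣ b * c.natDegree + a := by rw [h9]; exact dvd_mul_left _ _
        exact (Nat.dvd_add_right (dvd_mul_right _ _)).1 h10
      rcases lt_or_gt_of_ne h8 with h9 | h9
      · have := natDegree_add_eq_right_of_natDegree_lt h9
        rw [← h5] at this
        omega
      · have := natDegree_add_eq_left_of_natDegree_lt h9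
        rw [← h5] at this
        omega
  -- counting
  have hr : a % b < b := Nat.mod_lt _ hb0
  set r := a % b with hrdef
  set f := Φ.symm (C X) with hf
  have hfd : f.natDegree = b := by rw [hf, degB, hb]
  obtain ⟨u, hu⟩ := natDegree_eq_zero.mp (lcB Φ.symm (by rw [degB]; omega))
  have hu0 : u ≠ 0 := by
    rintro rfl
    rw [C_0, eq_comm, leadingCoeff_eq_zero] at hu
    rw [hf, hu] at hfd; simp at hfd; omega
  set f' := C (C u⁻¹) * f with hf'
  have hmon : f'.Monic := by
    rw [Monic, hf', leadingCoeff_mul, leadingCoeff_C, hf, ← hu, ← C_mul, inv_mul_cancel₀ hu0, C_1]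
  have hf'd : f'.natDegree = b := by
    rw [hf', natDegree_C_mul (by simpa using hu0), hfd]
  have hΦf' : Φ f' = C (C u⁻¹ * X) := by
    have : Φ (C (C u⁻¹)) = C (C u⁻¹) := Φ.commutes u⁻¹
    rw [hf', map_mul, hf, AlgEquiv.apply_symm_apply, this, C_mul]
  let m : ℕ → K[X][X] := fun N => Φ.symm (X ^ N) %ₘ f'
  have hmd : ∀ N, (m N).natDegree < b := by
    intro N
    have := natDegree_modByMonic_lt (Φ.symm (X ^ N)) hmon
      (by intro h1; rw [h1] at hf'd; simp at hf'd; omega)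
    rw [hf'd] at this
    exact this
  let ρ : K[X][X] →+* K[X] := mapRingHom (evalRingHom 0)
  have hρm : ∀ N, ρ (Φ (m N)) = X ^ N := by
    intro N
    have h1 : m N = Φ.symm (X ^ N) - f' * (Φ.symm (X ^ N) /ₘ f') := by
      rw [eq_sub_iff_add_eq]
      exact modByMonic_add_div _ _
    rw [h1, map_sub, map_mul, hΦf', AlgEquiv.apply_symm_apply, map_sub, map_mul]
    simp [ρ]
  let T : (Fin (r + 1) → K) →ₗ[K] K[X][X] :=
    ∑ N : Fin (r + 1), (LinearMap.toSpanSingleton K K[X][X] (m N)).comp (LinearMap.proj N)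
  have hT : ∀ c, T c = ∑ N : Fin (r + 1), C (C (c N)) * m N := by
    intro c
    simp only [T, LinearMap.sum_apply, LinearMap.comp_apply, LinearMap.proj_apply,
      LinearMap.toSpanSingleton_apply]
    refine Finset.sum_congr rfl fun N _ => ?_
    rw [Algebra.smul_def]; rfl
  have hρT : ∀ c, ρ (Φ (T c)) = ∑ N : Fin (r + 1), C (c N) * X ^ (N : ℕ) := by
    intro c
    rw [hT, map_sum, map_sum]
    refine Finset.sum_congr rfl fun N _ => ?_
    have : Φ (C (C (c N))) = C (C (c N)) := Φ.commutes (c N)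
    rw [map_mul, map_mul, hρm, this]
    simp [ρ]
  have hTd : ∀ c, (T c).natDegree < b := by
    intro c
    rw [hT]
    apply natDegree_double_sum_lt hb0
    intro N _
    exact lt_of_le_of_lt (natDegree_C_mul_le _ _) (hmd N)
  have hT0 : ∀ c, c ≠ 0 → T c ≠ 0 := by
    intro c hc0 h0
    obtain ⟨N, hN⟩ := Function.ne_iff.mp hc0
    apply hN
    have h1 := hρT c
    rw [h0, map_zero, map_zero] at h1
    have h2 := congrArg (fun z => z.coeff (N : ℕ)) h1
    simp only [coeff_zero, finsetSum_coeff, coeff_C_mul, coeff_X_pow] at h2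
    rw [Finset.sum_eq_single N] at h2
    · simpa using h2.symm
    · intro q _ hq
      have : (N : ℕ) ≠ q := fun h => hq (Fin.ext h.symm)
      simp [this]
    · simp
  have hTν : ∀ c, c ≠ 0 → (Φ (T c)).natDegree ≤ r := by
    intro c hc0
    obtain ⟨κ, hκ⟩ := hc (T c) (hTd c)
    have h1 : κ ≠ 0 := by
      rintro rfl
      rw [C_0, leadingCoeff_eq_zero] at hκ
      exact hT0 c hc0 (by simpa using hκ)
    have h2 : (ρ (Φ (T c))).natDegree = (Φ (T c)).natDegree := by
      apply natDegree_map_of_leadingCoeff_ne_zero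
      rw [hκ]; simpa using h1
    rw [← h2, hρT]
    apply natDegree_sum_le_of_forall_le
    intro N _
    exact (natDegree_C_mul_X_pow_le _ _).trans (by omega)
  let E : Finset (ℕ × ℕ) :=
    (Finset.range b ×ˢ Finset.range (r + 1)).filter fun p => b * p.2 + D p.1 ≤ r
  have hE : E.card ≤ r := by
    have : E.card ≤ (Finset.range r).card := by
      apply Finset.card_le_card_of_injOn (fun p => b * p.2 + D p.1)
      · rintro ⟨j, k⟩ hp
        simp only [E, Finset.coe_filter, Finset.mem_product, Finset.mem_range,
          Set.mem_ofPred_eq] at hp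
        simp only [Finset.coe_range, Set.mem_Iio]
        refine lt_of_le_of_ne hp.2 fun heq => ?_
        have h1 : D j % b = D 1 % b := by
          have h2 : (b * k + D j) % b = r % b := by rw [heq]
          rw [Nat.mul_add_mod, hrdef, Nat.mod_mod] at h2
          rw [h2, hD1]
        have h3 : j = 1 := by
          rcases lt_trichotomy j 1 with h4 | h4 | h4
          · exact absurd h1 (D_dist j 1 h4 hb1)
          · exact h4
          · exact absurd h1.symm (D_dist 1 j h4 hp.1.1)
        rw [h3, hD1] at heq
        omega
      · rintro ⟨j, k⟩ hp ⟨j', k'⟩ hp' heq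
        simp only [E, Finset.coe_filter, Finset.mem_product, Finset.mem_range,
          Set.mem_ofPred_eq] at hp hp'
        simp only at heq
        have h1 : D j % b = D j' % b := by
          have h2 : (b * k + D j) % b = (b * k' + D j') % b := by rw [heq]
          rwa [Nat.mul_add_mod, Nat.mul_add_mod] at h2
        have h3 : j = j' := by
          rcases lt_trichotomy j j' with h4 | h4 | h4
          · exact absurd h1 (D_dist j j' h4 hp'.1.1)
          · exact h4
          · exact absurd h1.symm (D_dist j' j h4 hp.1.1)
        subst h3
        have h5 : b * k = b * k' := by omega
        rw [Nat.eq_of_mul_eq_mul_left hb0 h5]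
    simpa using this
  let U : K[X][X] →ₗ[K] (E → K) := LinearMap.pi fun q =>
      (lcoeff K (q.1.2 : ℕ)).comp ((lcoeff K[X] (q.1.1 : ℕ)).restrictScalars K)
  obtain ⟨c, hc0, hcU⟩ := exists_ker K (U.comp T) (by
    rw [Fintype.card_coe, Fintype.card_fin]; omega)
  have h1 := hT0 c hc0
  have h2 := hTν c hc0
  have h3 := D_le _ h1
  have hmem : ((T c).natDegree, (T c).leadingCoeff.natDegree) ∈ E := by
    simp only [E, Finset.mem_filter, Finset.mem_product, Finset.mem_range]
    refine ⟨⟨hTd c, ?_⟩, by omega⟩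
    have : 1 * (T c).leadingCoeff.natDegree ≤ b * (T c).leadingCoeff.natDegree :=
      Nat.mul_le_mul hb0 le_rfl
    omega
  have h4 := congrFun hcU ⟨_, hmem⟩
  have h5 : (T c).leadingCoeff.leadingCoeff = 0 := h4
  rw [leadingCoeff_eq_zero, leadingCoeff_eq_zero] at h5
  exact h1 h5

lemma aeval_CX (f : K[X]) : aeval (C X : K[X][X]) f = C f := by
  have := aeval_algebraMap_apply (R := K) (A := K[X]) K[X][X] (X : K[X]) f
  rw [aeval_X_left_apply] at this
  exact this

/-- The elementary automorphism `X ↦ X, Y ↦ Y + f(X)`. -/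
def phi (f : K[X]) : K[X][X] ≃ₐ[K] K[X][X] :=
  .ofAlgHom (aevalAeval (C X) (X + C f)) (aevalAeval (C X) (X - C f))
    (by ext <;> simp [aeval_CX])
    (by ext <;> simp [aeval_CX])

@[simp] lemma phi_x (f : K[X]) : phi f (C X) = C X := by simp [phi]
@[simp] lemma phi_y (f : K[X]) : phi f X = X + C f := by simp [phi]

/-- The automorphism `X ↦ Y, Y ↦ -X`. -/
def sw : K[X][X] ≃ₐ[K] K[X][X] :=
  .ofAlgHom (aevalAeval X (- C (X : K[X]))) (aevalAeval (-X) (C X))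
    (by ext <;> simp) (by ext <;> simp)

@[simp] lemma sw_x : sw (K := K) (C X) = X := by simp [sw]
@[simp] lemma sw_y : sw (K := K) X = - C (X : K[X]) := by simp [sw]

lemma unit_cancel (α : Kˣ) : (C (C ((α⁻¹ : Kˣ) : K)) : K[X][X]) * C (C (α : K)) = 1 := by
  rw [← C_mul, ← C_mul, Units.inv_mul, C_1, C_1]

lemma unit_cancel₂ (α : Kˣ) : (C (C (α : K)) : K[X][X]) * C (C ((α⁻¹ : Kˣ) : K)) = 1 := by
  rw [← C_mul, ← C_mul, Units.mul_inv, C_1, C_1]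

/-- The diagonal automorphism `X ↦ αX, Y ↦ βY`. -/
def dg (α β : Kˣ) : K[X][X] ≃ₐ[K] K[X][X] :=
  .ofAlgHom (aevalAeval (C (C (α : K)) * C X) (C (C (β : K)) * X))
    (aevalAeval (C (C ((α⁻¹ : Kˣ) : K)) * C X) (C (C ((β⁻¹ : Kˣ) : K)) * X))
    (by
      ext1
      · ext1
        simp [-Units.val_inv_eq_inv_val, ← mul_assoc, unit_cancel]
      · simp [-Units.val_inv_eq_inv_val, ← mul_assoc, unit_cancel])
    (by
      ext1
      · ext1
        simp [-Units.val_inv_eq_inv_val, ← mul_assoc, unit_cancel₂]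
      · simp [-Units.val_inv_eq_inv_val, ← mul_assoc, unit_cancel₂])

@[simp] lemma dg_x (α β : Kˣ) : dg α β (C X) = C (C (α : K)) * C X := by simp [dg]
@[simp] lemma dg_y (α β : Kˣ) : dg α β X = C (C (β : K)) * X := by simp [dg]

lemma aut_ext {Φ Ψ : K[X][X] ≃ₐ[K] K[X][X]} (h1 : Φ (C X) = Ψ (C X)) (h2 : Φ X = Ψ X) :
    Φ = Ψ := by
  have : (Φ : K[X][X] →ₐ[K] K[X][X]) = Ψ := by
    ext <;> simp [h1, h2]
  ext1 z
  exact DFunLike.congr_fun this z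

lemma phi_C (f g : K[X]) : phi f (C g) = C g := by
  have := aeval_algHom_apply (phi f : K[X][X] ≃ₐ[K] K[X][X]) (C X) g
  rw [phi_x, aeval_CX] at this
  exact this.symm

lemma phi_mul (f g : K[X]) : phi f * phi g = phi (f + g) := by
  apply aut_ext
  · simp [AlgEquiv.mul_apply]
  · simp [AlgEquiv.mul_apply, phi_C, add_assoc]

lemma phi_zero : phi (0 : K[X]) = 1 := by
  apply aut_ext <;> simp

lemma sw_four : (sw : K[X][X] ≃ₐ[K] K[X][X]) * sw * sw * sw = 1 := by
  apply aut_ext <;> simp [AlgEquiv.mul_apply]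

/-- The word `φ_{f₀} s φ_{f₁} s ⋯ s φ_{f_n}`. -/
def word (fs : ℕ → K[X]) : ℕ → (K[X][X] ≃ₐ[K] K[X][X])
  | 0 => phi (fs 0)
  | n + 1 => word fs n * sw * phi (fs (n + 1))

lemma word_congr {fs gs : ℕ → K[X]} : ∀ n, (∀ k ≤ n, fs k = gs k) → word fs n = word gs n
  | 0, h => by simp [word, h 0 le_rfl]
  | n + 1, h => by
    rw [word, word, h _ le_rfl, word_congr n (fun k hk => h k (by omega))]

/-- Automorphisms of the desired form. -/
def Good (Φ : K[X][X] ≃ₐ[K] K[X][X]) : Prop :=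
  ∃ (α β : Kˣ) (n : ℕ) (fs : ℕ → K[X]), Φ = dg α β * word fs n

lemma Good.mul_phi {Φ : K[X][X] ≃ₐ[K] K[X][X]} (h : Good Φ) (f : K[X]) : Good (Φ * phi f) := by
  obtain ⟨α, β, n, fs, rfl⟩ := h
  refine ⟨α, β, n, Function.update fs n (fs n + f), ?_⟩
  rw [mul_assoc]
  congr 1
  cases n with
  | zero => simp [word, phi_mul]
  | succ n =>
    rw [word, word, Function.update_self, mul_assoc, phi_mul]
    congr 2
    apply word_congr
    intro k hk
    rw [Function.update_of_ne (by omega)]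

lemma Good.mul_sw {Φ : K[X][X] ≃ₐ[K] K[X][X]} (h : Good Φ) : Good (Φ * sw) := by
  obtain ⟨α, β, n, fs, rfl⟩ := h
  refine ⟨α, β, n + 1, Function.update fs (n + 1) 0, ?_⟩
  rw [word, Function.update_self, phi_zero, mul_one, mul_assoc]
  congr 2
  apply word_congr
  intro k hk
  rw [Function.update_of_ne (by omega)]

lemma Good.of_mul_phi {Φ : K[X][X] ≃ₐ[K] K[X][X]} (f : K[X]) (h : Good (Φ * phi f)) : Good Φ := by
  have := h.mul_phi (-f)
  rwa [mul_assoc, phi_mul, add_neg_cancel, phi_zero, mul_one] at this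

lemma Good.of_mul_sw {Φ : K[X][X] ≃ₐ[K] K[X][X]} (h : Good (Φ * sw)) : Good Φ := by
  have := h.mul_sw.mul_sw.mul_sw
  rwa [mul_assoc, mul_assoc, mul_assoc, ← mul_assoc sw sw, ← mul_assoc, ← mul_assoc, ← mul_assoc,
    mul_assoc, mul_assoc, mul_assoc, ← mul_assoc, ← mul_assoc, ← mul_assoc,
    mul_assoc, mul_assoc, mul_assoc, ← mul_assoc sw sw, ← mul_assoc (sw * sw), sw_four, mul_one]
    at this

lemma good_dg (α β : Kˣ) : Good (dg α β : K[X][X] ≃ₐ[K] K[X][X]) :=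
  ⟨α, β, 0, fun _ => 0, by simp [word, phi_zero]⟩

lemma good_iff (σ : MvPolynomial (Fin 2) K ≃ₐ[K] MvPolynomial (Fin 2) K)
    (h : Good (AlgEquiv.autCongr (Bivariate.equivMvPolynomial K).symm σ)) :
    ∃ n : ℕ, 1 ≤ n ∧ ∃ μ ν : K, μ ≠ 0 ∧ ν ≠ 0 ∧
    ∃ g t : MvPolynomial (Fin 2) K ≃ₐ[K] MvPolynomial (Fin 2) K,
    ∃ fs : ℕ → Polynomial K,
    ∃ w : ℕ → MvPolynomial (Fin 2) K ≃ₐ[K] MvPolynomial (Fin 2) K,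
      (g (MvPolynomial.X 0) = MvPolynomial.C μ * MvPolynomial.X 0 ∧
        g (MvPolynomial.X 1) = MvPolynomial.X 1) ∧
      (t (MvPolynomial.X 0) = MvPolynomial.C ν * MvPolynomial.X 0 ∧
        t (MvPolynomial.X 1) = MvPolynomial.C ν⁻¹ * MvPolynomial.X 1) ∧
      (∀ k : ℕ, k < n →
        w (2 * k) (MvPolynomial.X 0) = MvPolynomial.X 0 ∧
        w (2 * k) (MvPolynomial.X 1)
          = MvPolynomial.X 1 + Polynomial.aeval (MvPolynomial.X 0) (fs k)) ∧
      (∀ k : ℕ, k < n - 1 →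
        w (2 * k + 1) (MvPolynomial.X 0) = MvPolynomial.X 1 ∧
        w (2 * k + 1) (MvPolynomial.X 1) = - MvPolynomial.X 0) ∧
      σ = g * t * ((List.range (2 * n - 1)).map w).prod := by
  obtain ⟨α, β, n, fs, h⟩ := h
  set E := AlgEquiv.autCongr (Bivariate.equivMvPolynomial K) with hE
  have hE0 : ∀ Φ, E Φ (MvPolynomial.X 0) = Bivariate.equivMvPolynomial K (Φ (C X)) := by
    intro Φ; rw [hE, AlgEquiv.autCongr_apply]; simp
  have hE1 : ∀ Φ, E Φ (MvPolynomial.X 1) = Bivariate.equivMvPolynomial K (Φ X) := by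
    intro Φ; rw [hE, AlgEquiv.autCongr_apply]; simp
  have hσ : σ = E (dg α β * word fs n) := by
    rw [← h]
    ext1 z
    rw [hE, AlgEquiv.autCongr_apply, AlgEquiv.autCongr_apply]; simp
  let w : ℕ → MvPolynomial (Fin 2) K ≃ₐ[K] MvPolynomial (Fin 2) K :=
    fun k => E (if k % 2 = 0 then phi (fs (k / 2)) else sw)
  have hw0 : ∀ k, w (2 * k) = E (phi (fs k)) := by
    intro k
    simp [w]
  have hw1 : ∀ k, w (2 * k + 1) = E sw := by
    intro k
    simp only [w]
    rw [if_neg (by omega)]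
  have hC : ∀ f : K[X], Bivariate.equivMvPolynomial K (C f)
      = Polynomial.aeval (MvPolynomial.X 0) f := by
    intro f
    have := aeval_algHom_apply (Bivariate.equivMvPolynomial K) (C X) f
    rw [Bivariate.equivMvPolynomial_C_X, aeval_CX] at this
    exact this.symm
  refine ⟨n + 1, by omega, (α * β : Kˣ), (β⁻¹ : Kˣ), Units.ne_zero _, Units.ne_zero _,
    E (dg (α * β) 1), E (dg β⁻¹ β), fs, w, ⟨?_, ?_⟩, ⟨?_, ?_⟩, ?_, ?_, ?_⟩
  · simp [hE0]
  · simp [hE1]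
  · simp [hE0]
  · simp [hE1]
  · intro k _
    rw [hw0]
    constructor
    · simp [hE0]
    · rw [hE1, phi_y, map_add, hC]; simp
  · intro k _
    rw [hw1]
    simp [hE0, hE1]
  · have h1 : dg (α * β) 1 * dg β⁻¹ β = dg α β := by
      apply aut_ext
      · have : ∀ κ : K, dg (α * β) 1 (C (C κ)) = C (C κ) := fun κ => (dg (α * β) 1).commutes κ
        rw [AlgEquiv.mul_apply, dg_x, map_mul, dg_x, this, dg_x, ← mul_assoc, ← C_mul (a := C _), ← C_mul (a := (_ : K)), ← Units.val_mul,
          show β⁻¹ * (α * β) = α by rw [mul_comm, mul_inv_cancel_right]]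
      · have : ∀ κ : K, dg (α * β) 1 (C (C κ)) = C (C κ) := fun κ => (dg (α * β) 1).commutes κ
        rw [AlgEquiv.mul_apply, dg_y, map_mul, dg_y, this, dg_y]
        simp
    have h2 : ∀ m, ((List.range (2 * (m + 1) - 1)).map w).prod = E (word fs m) := by
      intro m
      induction m with
      | zero => 
        have := hw0 0
        simp only [mul_zero] at this
        simp [this, word]
      | succ m ih =>
        rw [show 2 * (m + 1 + 1) - 1 = (2 * (m + 1) - 1) + 1 + 1 by omega, List.range_succ,
          List.range_succ, List.map_append, List.map_append, List.prod_append, List.prod_append,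
          ih, show 2 * (m + 1) - 1 = 2 * m + 1 by omega, word, map_mul, map_mul]
        simp only [List.map_cons, List.map_nil, List.prod_cons, List.prod_nil, mul_one]
        rw [hw1, show 2 * m + 1 + 1 = 2 * (m + 1) by omega, hw0]
    rw [hσ, h2, ← map_mul, h1, ← map_mul]

lemma good_base (Φ : K[X][X] ≃ₐ[K] K[X][X]) (h : (Φ (C X)).natDegree = 0) : Good Φ := by
  have h' : (Φ.symm (C X)).natDegree = 0 := by rw [degB, h]
  obtain ⟨r, hr⟩ := natDegree_eq_zero.mp h
  obtain ⟨r', hr'⟩ := natDegree_eq_zero.mp h'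
  have hΦC : ∀ c : K[X], Φ (C c) = C (c.comp r) := by
    intro c
    rw [img_C, ← hr, comp_C, eval_map, comp]
  have h1 : (r'.comp r) = X := by
    have := hΦC r'
    rw [hr', AlgEquiv.apply_symm_apply] at this
    exact (C_injective this).symm
  have h2 : r.natDegree = 1 := by
    have := congrArg natDegree h1
    rw [natDegree_comp, natDegree_X] at this
    exact Nat.eq_one_of_mul_eq_one_left this
  -- image of an arbitrary element
  have hΦ : ∀ z : K[X][X], Φ z = (z.map (compRingHom r)).comp (Φ X) := by
    intro z
    induction z using Polynomial.induction_on' with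
    | add p q hp hq => rw [map_add, hp, hq, Polynomial.map_add, add_comp]
    | monomial n c =>
      rw [← C_mul_X_pow_eq_monomial, map_mul, map_pow, hΦC]
      simp
  have h3 := hΦ (Φ.symm X)
  rw [AlgEquiv.apply_symm_apply] at h3
  have h4 : (Φ X).natDegree = 1 := by
    have := congrArg natDegree h3
    rw [natDegree_comp, natDegree_X] at this
    exact Nat.eq_one_of_mul_eq_one_left this.symm
  have h5 : IsUnit (Φ X).leadingCoeff := by
    have h6 := congrArg leadingCoeff h3
    have h7 := congrArg natDegree h3
    rw [natDegree_comp, natDegree_X, h4, mul_one] at h7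
    rw [leadingCoeff_comp (by omega), leadingCoeff_X, ← h7, pow_one] at h6
    exact IsUnit.of_mul_eq_one _ (by rw [mul_comm]; exact h6.symm)
  obtain ⟨γ, hγ, hγ'⟩ := Polynomial.isUnit_iff.mp h5
  have h6 : Φ X = C (C γ) * X + C ((Φ X).coeff 0) := by
    have := eq_X_add_C_of_natDegree_le_one (le_of_eq h4)
    rw [hγ', leadingCoeff, h4]; exact this
  have h7 : r = C (r.coeff 1) * X + C (r.coeff 0) := eq_X_add_C_of_natDegree_le_one (le_of_eq h2)
  have hα0 : r.coeff 1 ≠ 0 := by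
    have : r.leadingCoeff ≠ 0 := by
      rw [leadingCoeff_ne_zero]
      rintro rfl
      simp at h2
    rwa [leadingCoeff, h2] at this
  set α := r.coeff 1
  set β := r.coeff 0
  set q := (Φ X).coeff 0
  have hK : ∀ κ : K, Φ (C (C κ)) = C (C κ) := fun κ => Φ.commutes κ
  set τ : K[X][X] ≃ₐ[K] K[X][X] := sw * phi (C β) * sw * sw * sw with hτ
  have hswK : ∀ κ : K, (sw : K[X][X] ≃ₐ[K] K[X][X]) (C (C κ)) = C (C κ) := fun κ => sw.commutes κ
  have hτx : τ (C X) = C X - C (C β) := by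
    rw [hτ]
    simp [AlgEquiv.mul_apply, hswK]
    ring
  have hτy : τ X = X := by
    rw [hτ]
    simp [AlgEquiv.mul_apply]
  set f : K[X] := - q.comp (C α⁻¹ * X) with hf
  have hg : Φ * τ * phi f = dg (Units.mk0 α hα0) hγ.unit := by
    have hx : (Φ * τ) (C X) = C (C α * X) := by
      rw [AlgEquiv.mul_apply, hτx, map_sub, hK, ← hr, ← C_sub]
      congr 1
      rw [h7]; simp
    have hy : (Φ * τ) X = C (C γ) * X + C q := by
      rw [AlgEquiv.mul_apply, hτy, h6]
    have hc : ∀ c : K[X], (Φ * τ) (C c) = C (c.comp (C α * X)) := by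
      intro c
      rw [img_C, hx, comp_C, eval_map, comp]
    apply aut_ext
    · rw [AlgEquiv.mul_apply, phi_x, hx, dg_x]
      simp
    · rw [AlgEquiv.mul_apply, phi_y, map_add, hy, hc, dg_y, hf]
      have : (q.comp (C α⁻¹ * X)).comp (C α * X) = q := by
        rw [comp_assoc]
        have : (C α⁻¹ * X : K[X]).comp (C α * X) = X := by
          rw [mul_comp, C_comp, X_comp, ← mul_assoc, ← C_mul, inv_mul_cancel₀ hα0, C_1, one_mul]
        rw [this, comp_X]
      rw [neg_comp, this]
      simp
  have h8 : Good (Φ * τ) := Good.of_mul_phi f (hg ▸ good_dg _ _)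
  have h9 : Φ * τ = Φ * sw * phi (C β) * sw * sw * sw := by
    rw [hτ]; group
  rw [h9] at h8
  exact (Good.of_mul_phi _ h8.of_mul_sw.of_mul_sw.of_mul_sw).of_mul_sw

lemma reduce (Φ : K[X][X] ≃ₐ[K] K[X][X]) (hb : 0 < (Φ (C X)).natDegree)
    (hab : (Φ (C X)).natDegree ≤ (Φ X).natDegree) :
    ∃ f : K[X], (Φ (X + C f)).natDegree < (Φ X).natDegree := by
  obtain ⟨m, hm⟩ := main_dvd Φ _ _ rfl hb rfl hab
  obtain ⟨u, hu⟩ := natDegree_eq_zero.mp (lcB Φ hb)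
  obtain ⟨v, hv⟩ := natDegree_eq_zero.mp (lcB (Bivariate.swap.trans Φ) (by
    rw [AlgEquiv.trans_apply, Bivariate.swap_X]; omega))
  rw [AlgEquiv.trans_apply, Bivariate.swap_X] at hv
  have hu0 : u ≠ 0 := by
    rintro rfl
    rw [C_0, eq_comm, leadingCoeff_eq_zero] at hu
    rw [hu] at hb; simp at hb
  have hv0 : v ≠ 0 := by
    rintro rfl
    rw [C_0, eq_comm, leadingCoeff_eq_zero] at hv
    rw [hv] at hab; simp at hab; omega
  refine ⟨C (-(v / u ^ m)) * X ^ m, ?_⟩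
  have hK : ∀ κ : K, Φ (C (C κ)) = C (C κ) := fun κ => Φ.commutes κ
  have h1 : Φ (X + C (C (-(v / u ^ m)) * X ^ m)) = Φ X - C (C (v / u ^ m)) * Φ (C X) ^ m := by
    rw [C_mul, C_pow, map_add, map_mul, map_pow, hK, C_neg, C_neg]; ring
  rw [h1]
  have hc0 : v / u ^ m ≠ 0 := div_ne_zero hv0 (pow_ne_zero _ hu0)
  have hd : (C (C (v / u ^ m)) * Φ (C X) ^ m).natDegree = (Φ X).natDegree := by
    rw [natDegree_C_mul (by simpa using hc0), natDegree_pow, hm, mul_comm]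
  have hl : (Φ X).leadingCoeff = (C (C (v / u ^ m)) * Φ (C X) ^ m).leadingCoeff := by
    rw [leadingCoeff_mul, leadingCoeff_C, leadingCoeff_pow, ← hu, ← hv, ← C_pow, ← C_mul,
      div_mul_cancel₀ _ (pow_ne_zero _ hu0)]
  have h0 : Φ X ≠ 0 := by simp
  have h0' : C (C (v / u ^ m)) * Φ (C X) ^ m ≠ 0 := by
    intro h; rw [h] at hd; simp at hd; omega
  have hlt := degree_sub_lt_left (by rw [degree_eq_natDegree h0, degree_eq_natDegree h0', hd]) h0 hl
  by_cases hz : Φ X - C (C (v / u ^ m)) * Φ (C X) ^ m = 0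
  · rw [hz, natDegree_zero]; omega
  · exact natDegree_lt_natDegree hz hlt

lemma good_aux : ∀ (N : ℕ) (Φ : K[X][X] ≃ₐ[K] K[X][X]),
    (Φ (C X)).natDegree + (Φ X).natDegree < N → Good Φ := by
  intro N
  induction N with
  | zero => intro Φ h; omega
  | succ N ih =>
    have key : ∀ Φ : K[X][X] ≃ₐ[K] K[X][X], (Φ (C X)).natDegree + (Φ X).natDegree < N + 1 →
        (Φ (C X)).natDegree ≤ (Φ X).natDegree → Good Φ := by
      intro Φ h hab
      rcases Nat.eq_zero_or_pos (Φ (C X)).natDegree with h0 | h0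
      · exact good_base Φ h0
      · obtain ⟨f, hf⟩ := reduce Φ h0 hab
        apply Good.of_mul_phi f
        apply ih
        rw [AlgEquiv.mul_apply, AlgEquiv.mul_apply, phi_x, phi_y]
        omega
    intro Φ h
    rcases le_total (Φ (C X)).natDegree (Φ X).natDegree with h1 | h1
    · exact key Φ h h1
    · apply Good.of_mul_sw
      apply key
      · rw [AlgEquiv.mul_apply, AlgEquiv.mul_apply, sw_x, sw_y, map_neg, natDegree_neg]
        omega
      · rw [AlgEquiv.mul_apply, AlgEquiv.mul_apply, sw_x, sw_y, map_neg, natDegree_neg]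
        exact h1

lemma good_all (Φ : K[X][X] ≃ₐ[K] K[X][X]) : Good Φ := good_aux _ Φ (Nat.lt_succ_self _)

end JvdK

theorem statement13 (p : ℕ) (hp : p.Prime) (K : Type*) [Field K] [CharP K p]
    (σ : MvPolynomial (Fin 2) K ≃ₐ[K] MvPolynomial (Fin 2) K) :
    ∃ n : ℕ, 1 ≤ n ∧ ∃ μ ν : K, μ ≠ 0 ∧ ν ≠ 0 ∧
    ∃ g t : MvPolynomial (Fin 2) K ≃ₐ[K] MvPolynomial (Fin 2) K,
    ∃ fs : ℕ → Polynomial K,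
    ∃ w : ℕ → MvPolynomial (Fin 2) K ≃ₐ[K] MvPolynomial (Fin 2) K,
      (g (MvPolynomial.X 0) = MvPolynomial.C μ * MvPolynomial.X 0 ∧
        g (MvPolynomial.X 1) = MvPolynomial.X 1) ∧
      (t (MvPolynomial.X 0) = MvPolynomial.C ν * MvPolynomial.X 0 ∧
        t (MvPolynomial.X 1) = MvPolynomial.C ν⁻¹ * MvPolynomial.X 1) ∧
      (∀ k : ℕ, k < n →
        w (2 * k) (MvPolynomial.X 0) = MvPolynomial.X 0 ∧
        w (2 * k) (MvPolynomial.X 1)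
          = MvPolynomial.X 1 + Polynomial.aeval (MvPolynomial.X 0) (fs k)) ∧
      (∀ k : ℕ, k < n - 1 →
        w (2 * k + 1) (MvPolynomial.X 0) = MvPolynomial.X 1 ∧
        w (2 * k + 1) (MvPolynomial.X 1) = - MvPolynomial.X 0) ∧
      σ = g * t * ((List.range (2 * n - 1)).map w).prod := by
  exact JvdK.good_iff σ (JvdK.good_all _)
end
end
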